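/- arXiv:2603.07945 — 2 statements merged into one kernel-verified Lean document; each statement's English description precedes it below -/
import Mathlib

section
/- Let R be a henselian Gorenstein Noetherian local ring with dim R > 0 which is an AB ring, and let 𝒳 be a resolving subcategory of the category of finitely generated R-modules. Then every module in 𝒳 is maximal Cohen–Macaulay if and only if 𝒳 is not contravariantly infinite. -/
open CategoryTheory IsLocalRing

universe u

noncomputable section

/-- The `i`-th Ext module of two `R`-modules. -/
abbrev ExtMod (R : Type u) [CommRing R] (i : ℕ) (M N : ModuleCat.{u} R) : ModuleCat R :=
  ((Ext R (ModuleCat.{u} R) i).obj (Opposite.op M)).obj N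

/-- Vanishing of the `i`-th Ext module: `Ext_R^i(M, N) = 0`. -/
def ExtVanish (R : Type u) [CommRing R] (i : ℕ) (M N : ModuleCat.{u} R) : Prop :=
  Subsingleton (ExtMod R i M N)

variable (R : Type u) [CommRing R]

/-- `0 → A → B → C → 0` is a short exact sequence. -/
def IsSES {A B C : ModuleCat.{u} R} (f : A →ₗ[R] B) (g : B →ₗ[R] C) : Prop :=
  Function.Injective f ∧ Function.Exact f g ∧ Function.Surjective g

/-- A resolving subcategory of the category of finitely generated `R`-modules. -/
structure IsResolving (𝒳 : Set (ModuleCat.{u} R)) : Prop where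
  finite : ∀ M ∈ 𝒳, Module.Finite R M
  isoClosed : ∀ {M N : ModuleCat.{u} R}, M ∈ 𝒳 → (↥M ≃ₗ[R] ↥N) → N ∈ 𝒳
  freeMem : ∀ M : ModuleCat.{u} R, Module.Finite R M → Module.Free R M → M ∈ 𝒳
  summandClosed : ∀ M N : ModuleCat.{u} R, ModuleCat.of R (↥M × ↥N) ∈ 𝒳 → M ∈ 𝒳
  extClosed : ∀ (A B C : ModuleCat.{u} R) (f : A →ₗ[R] B) (g : B →ₗ[R] C),
    IsSES R f g → A ∈ 𝒳 → C ∈ 𝒳 → B ∈ 𝒳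
  kerClosed : ∀ (A B C : ModuleCat.{u} R) (f : A →ₗ[R] B) (g : B →ₗ[R] C),
    IsSES R f g → B ∈ 𝒳 → C ∈ 𝒳 → A ∈ 𝒳

/-- `f : X → M` is a right `𝒳`-approximation of `M`. -/
def IsRightApprox (𝒳 : Set (ModuleCat.{u} R)) {X M : ModuleCat.{u} R} (f : X →ₗ[R] M) : Prop :=
  X ∈ 𝒳 ∧ ∀ W ∈ 𝒳, ∀ g : ↥W →ₗ[R] ↥M, ∃ h : ↥W →ₗ[R] ↥X, f ∘ₗ h = g

/-- `M` admits a right `𝒳`-approximation. -/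
def HasRightApprox (𝒳 : Set (ModuleCat.{u} R)) (M : ModuleCat.{u} R) : Prop :=
  ∃ (X : ModuleCat.{u} R) (f : X →ₗ[R] M), IsRightApprox R 𝒳 f

/-- `𝒳` is contravariantly infinite: no finitely generated module outside `𝒳` admits
a right `𝒳`-approximation. -/
def ContravariantlyInfinite (𝒳 : Set (ModuleCat.{u} R)) : Prop :=
  ∀ M : ModuleCat.{u} R, Module.Finite R M → M ∉ 𝒳 → ¬ HasRightApprox R 𝒳 M

/-- `𝒳` is contravariantly finite: every finitely generated module admits
a right `𝒳`-approximation. -/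
def ContravariantlyFinite (𝒳 : Set (ModuleCat.{u} R)) : Prop :=
  ∀ M : ModuleCat.{u} R, Module.Finite R M → HasRightApprox R 𝒳 M

/-- The restricted functor `Hom_R(-, C)|_𝒳` is finitely presented, i.e. `C ∈ 𝒞(𝒳)`. -/
def MemCC (𝒳 : Set (ModuleCat.{u} R)) (C : ModuleCat.{u} R) : Prop :=
  ∃ (X₀ X₁ : ModuleCat.{u} R) (g : ↥X₁ →ₗ[R] ↥X₀) (f : ↥X₀ →ₗ[R] ↥C), X₀ ∈ 𝒳 ∧ X₁ ∈ 𝒳 ∧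
    ∀ W ∈ 𝒳, Function.Surjective (fun h : ↥W →ₗ[R] ↥X₀ => f ∘ₗ h) ∧
      Function.Exact (fun h : ↥W →ₗ[R] ↥X₁ => g ∘ₗ h) (fun h : ↥W →ₗ[R] ↥X₀ => f ∘ₗ h)

/-- `𝒳` is coherent: `𝒞(𝒳) = rap 𝒳`. -/
def Coherent (𝒳 : Set (ModuleCat.{u} R)) : Prop :=
  ∀ M : ModuleCat.{u} R, Module.Finite R M → (MemCC R 𝒳 M ↔ HasRightApprox R 𝒳 M)

/-- The right Ext-orthogonal class `𝒳^⊥` of a class `𝒳` of finitely generated modules. -/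
def XPerp (𝒳 : Set (ModuleCat.{u} R)) : Set (ModuleCat.{u} R) :=
  {Y | Module.Finite R Y ∧ ∀ X ∈ 𝒳, ∀ i, 0 < i → ExtVanish R i X Y}

/-- The projective dimension of `M` is at most `n`. -/
def ProjDimLE (M : ModuleCat.{u} R) (n : ℕ) : Prop :=
  ∀ N : ModuleCat.{u} R, ∀ i, n < i → ExtVanish R i M N

/-- The depth of an `R`-module over a local ring: `inf { i | Ext^i(k, M) ≠ 0 }`. -/
def moduleDepth [IsLocalRing R] (M : ModuleCat.{u} R) : ℕ∞ :=
  sInf ((fun i : ℕ => (i : ℕ∞)) ''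
    {i : ℕ | ¬ ExtVanish R i (ModuleCat.of R (ResidueField R)) M})

/-- `M` is a maximal Cohen–Macaulay `R`-module: `depth M ≥ dim R`. -/
def IsMCM [IsLocalRing R] (M : ModuleCat.{u} R) : Prop :=
  ringKrullDim R ≤ (moduleDepth R M : WithBot ℕ∞)

/-- A Gorenstein local ring: `∃ n, Ext^i(M, R) = 0` for every finitely generated `M`
and every `i > n`. -/
def IsGorensteinLocalRing : Prop :=
  ∃ n : ℕ, ∀ M : ModuleCat.{u} R, Module.Finite R M →
    ∀ i, n < i → ExtVanish R i M (ModuleCat.of R R)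

/-- A regular local ring: Noetherian local with `dim R = dim_k 𝔪/𝔪²`. -/
def IsRegularLocal [IsLocalRing R] : Prop :=
  IsNoetherianRing R ∧
    ringKrullDim R = (Module.finrank (ResidueField R) (CotangentSpace R) : ℕ)

/-- Witness that the local ring `R` is a complete intersection: its `𝔪`-adic completion
is `Q/(f₁, …, f_c)` for a regular local ring `Q` and a `Q`-regular sequence `f₁, …, f_c`. -/
structure CompleteIntersectionWitness [IsLocalRing R] : Type (u + 1) where
  Q : Type u
  [commRing : CommRing Q]
  [localRing : IsLocalRing Q]
  regular : IsRegularLocal Q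
  fs : List Q
  regSeq : RingTheory.Sequence.IsRegular Q fs
  equiv : AdicCompletion (maximalIdeal R) R ≃+* Q ⧸ Ideal.span {x : Q | x ∈ fs}

/-- The local ring `R` is a complete intersection. -/
def IsCompleteIntersection [IsLocalRing R] : Prop :=
  Nonempty (CompleteIntersectionWitness R)

end

/-- An AB ring: a Gorenstein local ring with a uniform bound `n` such that
`Ext^{≫0}(M,N) = 0` implies `Ext^{>n}(M,N) = 0`. -/
def IsABRing (R : Type u) [CommRing R] [IsLocalRing R] : Prop :=
  IsGorensteinLocalRing R ∧ ∃ n : ℕ, ∀ M N : ModuleCat.{u} R,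
    Module.Finite R M → Module.Finite R N →
    (∃ m : ℕ, ∀ i, m < i → ExtVanish R i M N) → ∀ i, n < i → ExtVanish R i M N



open Polynomial in
theorem hens_section {R E : Type*} [CommRing R] [HenselianLocalRing R] [CommRing E] [Algebra R E]
    [Algebra.Etale R E] (φ : E →ₐ[R] ResidueField R) :
    ∃ ψ : E →ₐ[R] R, ∀ e, residue R (ψ e) = φ e := by
  let Q := RingHom.ker φ.toRingHom
  have hQp : Q.IsPrime := RingHom.ker_isPrime _
  obtain ⟨f, hfQ, ⟨⟨P⟩⟩⟩ := Algebra.IsEtaleAt.exists_isStandardEtale (R := R) Q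
  have hf : IsUnit (φ f) := isUnit_iff_ne_zero.mpr fun h => hfQ h
  let φ' : Localization.Away f →ₐ[R] ResidueField R :=
    { IsLocalization.Away.lift (S := Localization.Away f) (g := φ.toRingHom) f hf with
      commutes' := fun r => by
        simp only [RingHom.toMonoidHom_eq_coe, OneHom.toFun_eq_coe, MonoidHom.toOneHom_coe, MonoidHom.coe_coe]
        rw [IsScalarTower.algebraMap_apply R E (Localization.Away f), IsLocalization.Away.lift_eq]
        simp }
  have hφ' : ∀ e, φ' (algebraMap E _ e) = φ e := fun e => 
    IsLocalization.Away.lift_eq (S := Localization.Away f) (g := φ.toRingHom) f hf e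
  have hx := P.hasMap.map φ'
  have hd := hx.isUnit_derivative_f
  have key := ((HenselianLocalRing.TFAE R).out 0 1 rfl rfl).mp ‹HenselianLocalRing R›
  obtain ⟨a, ha1, ha2⟩ := key P.f P.monic_f (φ' P.x)
    hx.1 hd.ne_zero
  have haM : P.P.HasMap a := by
    refine ⟨by simpa [Polynomial.IsRoot] using ha1, ?_⟩
    have h2 := hx.2
    have : (aeval (φ' P.x) P.g) = residue R (aeval a P.g) := by
      rw [← ha2, ← ResidueField.algebraMap_eq, aeval_algebraMap_apply]
    rw [this] at h2
    exact (isUnit_map_iff (residue R) _).mp h2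
  let ψ' : Localization.Away f →ₐ[R] R := (P.lift a haM).comp P.equivRing.toAlgHom
  have hψ' : (IsScalarTower.toAlgHom R R (ResidueField R)).comp ψ' = φ' := by
    apply P.hom_ext
    simp [ψ', ha2]
  refine ⟨ψ'.comp (IsScalarTower.toAlgHom R E _), fun e => ?_⟩
  rw [← hφ', ← hψ']
  rfl

open Polynomial in
theorem hens_factor {R : Type u} [CommRing R] [HenselianLocalRing R] (p : R[X]) (hp : p.Monic) :
    ∃ f g : R[X], p = f * g ∧ IsCoprime f g ∧ IsUnit (f.eval 1) ∧ IsUnit (g.eval 0) := by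
  obtain ⟨b, hb, hb0⟩ : ∃ b, (p.map (residue R)) = X ^ (rootMultiplicity 0 (p.map (residue R))) * b ∧ ¬ X ∣ b := by
    have := exists_eq_pow_rootMultiplicity_mul_and_not_dvd (p.map (residue R)) (hp.map _).ne_zero 0
    simpa using this
  set m := rootMultiplicity 0 (p.map (residue R))
  have hbm : b.Monic := by
    have := hp.map (residue R)
    rw [hb] at this
    exact (monic_X_pow m).of_mul_monic_left this
  have hcop : IsCoprime (X ^ m : (ResidueField R)[X]) b := 
    IsCoprime.pow_left ((irreducible_X.coprime_iff_not_dvd).mpr hb0)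
  let pp : MonicDegreeEq R p.natDegree := .mk p hp rfl
  have hn : p.natDegree = m + b.natDegree := by
    have := congr_arg natDegree hb
    rw [hp.natDegree_map, (monic_X_pow m).natDegree_mul hbm, natDegree_X_pow] at this
    exact this
  let q0 : { q : MonicDegreeEq (ResidueField R) m × MonicDegreeEq (ResidueField R) b.natDegree //
      q.1.1 * q.2.1 = pp.1.map (algebraMap R (ResidueField R)) ∧ IsCoprime q.1.1 q.2.1 } :=
      ⟨(.mk (X ^ m) (monic_X_pow m) (natDegree_X_pow m), .mk b hbm rfl), hb.symm, hcop⟩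
  obtain ⟨ψ, hψ⟩ := hens_section ((UniversalCoprimeFactorizationRing.homEquiv (ResidueField R) m b.natDegree hn pp).symm q0)
  have hc : (IsScalarTower.toAlgHom R R (ResidueField R)).comp ψ =
    (UniversalCoprimeFactorizationRing.homEquiv (ResidueField R) m b.natDegree hn pp).symm q0 := by
    exact AlgHom.ext fun e => hψ e
  have h1 := UniversalCoprimeFactorizationRing.homEquiv_comp_fst (S := R) m b.natDegree hn pp ψ (IsScalarTower.toAlgHom R R (ResidueField R))
  have h2 := UniversalCoprimeFactorizationRing.homEquiv_comp_snd (S := R) m b.natDegree hn pp ψ (IsScalarTower.toAlgHom R R (ResidueField R))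
  rw [hc, Equiv.apply_symm_apply] at h1 h2
  obtain ⟨⟨⟨f, g⟩, hfg, hco⟩, hh⟩ : ∃ z, UniversalCoprimeFactorizationRing.homEquiv R m b.natDegree hn pp ψ = z := ⟨_, rfl⟩
  rw [hh] at h1 h2
  have h1' := congr_arg (fun z => (z.1 : (ResidueField R)[X])) h1
  have h2' := congr_arg (fun z => (z.1 : (ResidueField R)[X])) h2
  simp only [MonicDegreeEq.map_coe, q0, MonicDegreeEq.mk_coe] at h1' h2'
  refine ⟨f.1, g.1, by simpa [pp] using hfg.symm, hco, ?_, ?_⟩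
  · apply (isUnit_map_iff (residue R) _).mp
    have : residue R (eval 1 f.1) = eval 1 (X ^ m : (ResidueField R)[X]) := by
      rw [h1']
      have := (eval_map_apply (f := residue R) (p := f.1) 1).symm
      rw [map_one] at this
      exact this
    rw [this]; simp
  · apply (isUnit_map_iff (residue R) _).mp
    have : residue R (eval 0 g.1) = eval 0 b := by
      conv_rhs => rw [h2']
      have := (eval_map_apply (f := residue R) (p := g.1) 0).symm
      rw [map_zero] at this
      exact this
    rw [this, isUnit_iff_ne_zero]
    intro h; exact hb0 (by rw [X_dvd_iff, coeff_zero_eq_eval_zero]; exact h)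



open Polynomial in
theorem hens_fitting {R : Type u} [CommRing R] [HenselianLocalRing R] {X : Type*} [AddCommGroup X]
    [Module R X] [Module.Finite R X] (h : X →ₗ[R] X) :
    ∃ A B : Submodule R X, IsCompl A B ∧ (∀ a ∈ A, h a ∈ A) ∧ (∀ b ∈ B, h b ∈ B) ∧
      (∀ a ∈ A, ∃ a' ∈ A, h a' = a) ∧ (∀ b ∈ B, ∃ b' ∈ B, b' - h b' = b) := by
  obtain ⟨p, hp, hph⟩ := (Algebra.IsIntegral.isIntegral (R := R) (A := Module.End R X) h)
  obtain ⟨f, g, hfg, hco, hf, hg⟩ := hens_factor p hp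
  have hcomm : ∀ (q : R[X]) (x : X), aeval h q (h x) = h (aeval h q x) := by
    intro q x
    have : (aeval h q) * h = h * (aeval h q) := by
      conv_lhs => rw [← aeval_X (R := R) h]
      conv_rhs => rw [← aeval_X (R := R) h]
      simp only [aeval_X]
      have := congr_arg (aeval h) (mul_comm q Polynomial.X)
      simpa using this
    exact LinearMap.congr_fun this x
  have hmul : ∀ (q r : R[X]) (x : X), aeval h q (aeval h r x) = aeval h r (aeval h q x) := by
    intro q r x
    have := congr_arg (aeval h) (mul_comm q r)
    simp only [map_mul] at this
    exact LinearMap.congr_fun this x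
  refine ⟨LinearMap.ker (aeval h g), LinearMap.ker (aeval h f), ⟨?_, ?_⟩, ?_, ?_, ?_, ?_⟩
  · exact disjoint_ker_aeval_of_isCoprime h hco.symm
  · rw [codisjoint_iff, sup_ker_aeval_eq_ker_aeval_mul_of_coprime h hco.symm, mul_comm, ← hfg]
    rw [← aeval_def] at hph
    rw [hph]; exact LinearMap.ker_zero
  · intro a ha; simp only [LinearMap.mem_ker] at *; rw [hcomm, ha, map_zero]
  · intro a ha; simp only [LinearMap.mem_ker] at *; rw [hcomm, ha, map_zero]
  · intro a ha
    obtain ⟨u, hu⟩ := hg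
    refine ⟨-((↑u⁻¹ : R) • aeval h g.divX a), ?_, ?_⟩
    · simp only [LinearMap.mem_ker] at *
      rw [map_neg, map_smul, hmul, ha]; simp
    · have h1 := congr_arg (fun q => aeval h q a) (divX_mul_X_add g)
      simp only [map_add, map_mul, aeval_X, aeval_C, LinearMap.add_apply, Module.End.mul_apply] at h1
      rw [LinearMap.mem_ker.mp ha, hcomm, coeff_zero_eq_eval_zero, ← hu] at h1
      have h2 : h (aeval h g.divX a) = - ((u : R) • a) := by
        rw [eq_neg_iff_add_eq_zero]; simpa [Module.algebraMap_end_apply] using h1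
      rw [map_neg, map_smul, h2, smul_neg, neg_neg, smul_smul]; simp
  · intro b hb
    obtain ⟨u, hu⟩ := hf
    have hd : (Polynomial.X - C (1 : R)) ∣ (f - C (f.eval 1)) := X_sub_C_dvd_sub_C_eval
    obtain ⟨q, hq⟩ := hd
    refine ⟨(↑u⁻¹ : R) • aeval h q b, ?_, ?_⟩
    · simp only [LinearMap.mem_ker] at *
      rw [map_smul, hmul, hb]; simp
    · have h1 := congr_arg (fun q => aeval h q b) hq
      simp only [map_sub, map_mul, aeval_X, aeval_C, LinearMap.sub_apply, Module.End.mul_apply] at h1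
      rw [LinearMap.mem_ker.mp hb, ← hu] at h1
      simp [Module.algebraMap_end_apply] at h1
      rw [map_smul, ← smul_sub, ← neg_sub, ← h1, neg_neg, smul_smul]; simp

theorem exists_min_approx {R : Type u} [CommRing R] [IsNoetherianRing R] [HenselianLocalRing R]
    {𝒳 : Set (ModuleCat.{u} R)} (h𝒳 : IsResolving R 𝒳) {M : ModuleCat.{u} R}
    (hM : HasRightApprox R 𝒳 M) : ∃ (X : ModuleCat.{u} R) (f : X →ₗ[R] M), IsRightApprox R 𝒳 f ∧
      ∀ h : X →ₗ[R] X, f ∘ₗ h = f → Function.Bijective h := by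
  classical
  let μ : ModuleCat.{u} R → ℕ := fun X => Module.finrank (ResidueField R) (TensorProduct R (ResidueField R) X)
  have hex : ∃ n, ∃ (X : ModuleCat.{u} R) (f : X →ₗ[R] M), IsRightApprox R 𝒳 f ∧ μ X = n := by
    obtain ⟨X, f, hf⟩ := hM
    exact ⟨_, X, f, hf, rfl⟩
  obtain ⟨X, f, hf, hμ⟩ := Nat.find_spec hex
  refine ⟨X, f, hf, fun h hfh => ?_⟩
  have hXfin := h𝒳.finite X hf.1
  obtain ⟨A, B, hAB, hA, hB, hA', hB'⟩ := hens_fitting h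
  have hfB : ∀ b ∈ B, f b = 0 := by
    intro b hb
    obtain ⟨b', hb', rfl⟩ := hB' b hb
    rw [map_sub, ← LinearMap.comp_apply, hfh, sub_self]
  have e : (A × B) ≃ₗ[R] X := Submodule.prodEquivOfIsCompl A B hAB
  have hAX : ModuleCat.of R A ∈ 𝒳 := h𝒳.summandClosed (ModuleCat.of R A) (ModuleCat.of R B)
    (h𝒳.isoClosed hf.1 e.symm)
  have happrox : IsRightApprox R 𝒳 (X := ModuleCat.of R A) (f ∘ₗ A.subtype) := by
    refine ⟨hAX, fun W hW g => ?_⟩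
    obtain ⟨t, ht⟩ := hf.2 W hW g
    refine ⟨A.projectionOnto B hAB ∘ₗ t, ?_⟩
    ext w
    rw [← ht]
    have h1 : t w - ((A.projectionOnto B hAB (t w) : A) : X) ∈ B := by
      rw [← Submodule.projectionOnto_apply_eq_zero_iff hAB]
      rw [map_sub, Submodule.projectionOnto_apply_left, sub_self]
    have := hfB _ h1
    rw [map_sub, sub_eq_zero] at this
    exact this.symm
  have hle : μ X ≤ μ (ModuleCat.of R A) := by
    rw [hμ]; exact Nat.find_min' hex ⟨_, _, happrox, rfl⟩
  have hBfin : Module.Finite R B := inferInstance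
  have hsum : μ X = μ (ModuleCat.of R A) + Module.finrank (ResidueField R) (TensorProduct R (ResidueField R) B) := by
    have e1 : TensorProduct R (ResidueField R) X ≃ₗ[ResidueField R] TensorProduct R (ResidueField R) (A × B) :=
      TensorProduct.AlgebraTensorModule.congr (LinearEquiv.refl _ _) e.symm
    have e2 := TensorProduct.prodRight R (ResidueField R) (ResidueField R) A B
    change Module.finrank _ _ = Module.finrank _ (TensorProduct R (ResidueField R) A) + _
    rw [(e1.trans e2).finrank_eq, Module.finrank_prod]
  have hB0 : Subsingleton (TensorProduct R (ResidueField R) B) := by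
    apply Module.finrank_zero_iff (R := ResidueField R).mp
    omega
  have hBs : Subsingleton B := by
    exact IsLocalRing.subsingleton_tensorProduct.mp hB0
  have hBbot : B = ⊥ := Submodule.subsingleton_iff_eq_bot.mp hBs
  have hAtop : A = ⊤ := by simpa [hBbot] using hAB.sup_eq_top
  have hs : Function.Surjective h := fun x => by
    obtain ⟨a', _, ha'⟩ := hA' x (by rw [hAtop]; trivial)
    exact ⟨a', ha'⟩
  exact ⟨IsNoetherian.injective_of_surjective_endomorphism h hs, hs⟩


noncomputable section
/-- vanishing of Yoneda ext -/
def V {R : Type u} [CommRing R] (i : ℕ) (M N : ModuleCat.{u} R) : Prop :=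
  Subsingleton (Abelian.Ext.{u} M N i)

theorem bridge {R : Type u} [CommRing R] (i : ℕ) (M N : ModuleCat.{u} R) :
    ExtVanish R i M N ↔ V i M N := by
  let P := ProjectiveResolution.of M
  have h1 : ExtVanish R i M N ↔ (P.complex.linearYonedaObj R N).ExactAt i := by
    rw [HomologicalComplex.exactAt_iff_isZero_homology, ← (P.isoExt (R := R) i N).isZero_iff,
      ModuleCat.isZero_iff_subsingleton]
    rfl
  rw [h1]
  cases i with
  | succ p =>
    rw [HomologicalComplex.exactAt_iff' _ p (p+1) (p+2) (by simp) (by simp),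
      ShortComplex.moduleCat_exact_iff]
    constructor
    · intro h
      refine ⟨fun a b => ?_⟩
      suffices H : ∀ a : Abelian.Ext.{u} M N (p+1), a = 0 by rw [H a, H b]
      intro a
      obtain ⟨f, hf, rfl⟩ := P.extMk_surjective a (p+2) rfl
      rw [P.extMk_eq_zero_iff f (p+2) rfl hf p rfl]
      obtain ⟨g, hg⟩ := h f hf
      exact ⟨g, hg⟩
    · intro h f hf
      have := @Subsingleton.elim _ h (P.extMk f (p+2) rfl hf) 0
      rw [P.extMk_eq_zero_iff f (p+2) rfl hf p rfl] at this
      obtain ⟨g, hg⟩ := this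
      exact ⟨g, hg⟩
  | zero =>
    rw [HomologicalComplex.exactAt_iff' _ 0 0 1 (by simp) (by simp),
      ShortComplex.moduleCat_exact_iff]
    constructor
    · intro h
      refine ⟨fun a b => ?_⟩
      suffices H : ∀ a : Abelian.Ext.{u} M N 0, a = 0 by rw [H a, H b]
      intro a
      obtain ⟨f, hf, rfl⟩ := P.extMk_surjective a 1 rfl
      obtain ⟨g, hg⟩ := h f hf
      have : (0 : P.complex.X 0 ⟶ N) = f := by
        rw [← hg]
        have h0 : ((P.complex.linearYonedaObj R N).sc' 0 0 1).f = 0 :=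
          (P.complex.linearYonedaObj R N).shape _ _ (by simp)
        rw [h0]; rfl
      subst this
      simp
    · intro h (f : P.complex.X 0 ⟶ N) hf
      have hf' : P.complex.d 1 0 ≫ f = 0 := hf
      have hz : ∀ g : M ⟶ N, g = 0 := fun g => by
        have := @Subsingleton.elim _ h (Abelian.Ext.mk₀ g) 0
        rwa [Abelian.Ext.mk₀_eq_zero_iff] at this
      have hf0 : f = 0 := by
        have e := P.exact₀
        rw [← e.g_desc f hf']
        rw [hz (e.desc f hf')]; exact Limits.comp_zero
      exact ⟨0, by rw [hf0]; simp; rfl⟩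

end


section EVsec
variable {R : Type u} [CommRing R]

/-- Ext vanishing, unbundled -/
def EV (R : Type u) [CommRing R] (i : ℕ) (A N : Type u) [AddCommGroup A] [Module R A]
    [AddCommGroup N] [Module R N] : Prop := V i (ModuleCat.of R A) (ModuleCat.of R N)

variable {A B C M N N' : Type u} [AddCommGroup A] [Module R A] [AddCommGroup B] [Module R B]
  [AddCommGroup C] [Module R C] [AddCommGroup M] [Module R M] [AddCommGroup N] [Module R N]
  [AddCommGroup N'] [Module R N']

/-- unbundled short exact sequence -/
structure SES (f : A →ₗ[R] B) (g : B →ₗ[R] C) : Prop where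
  inj : Function.Injective f
  ex : Function.Exact f g
  surj : Function.Surjective g

theorem SES.comp {f : A →ₗ[R] B} {g : B →ₗ[R] C} (h : SES f g) : g.comp f = 0 := by
  ext x; exact h.ex.apply_apply_eq_zero x

theorem SES.short {f : A →ₗ[R] B} {g : B →ₗ[R] C} (h : SES f g) :
    (ModuleCat.shortComplexOfCompEqZero f g h.comp).ShortExact where
  exact := (ShortComplex.ShortExact.moduleCat_exact_iff_function_exact _).mpr h.ex
  mono_f := (ModuleCat.mono_iff_injective _).mpr h.inj
  epi_g := (ModuleCat.epi_iff_surjective _).mpr h.surj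

theorem ev_iff {i : ℕ} : EV R i A N ↔
    ∀ x : Abelian.Ext.{u} (ModuleCat.of R A) (ModuleCat.of R N) i, x = 0 :=
  ⟨fun h x => @Subsingleton.elim _ h x 0, fun h => ⟨fun a b => by rw [h a, h b]⟩⟩

theorem ev_mid {i : ℕ} {f : A →ₗ[R] B} {g : B →ₗ[R] C} (h : SES f g) (hA : EV R i A N)
    (hC : EV R i C N) : EV R i B N := by
  rw [ev_iff] at *
  intro x
  obtain ⟨y, rfl⟩ := Abelian.Ext.contravariant_sequence_exact₂ h.short _ x (hA _)
  rw [show y = 0 from hC y]; simp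

theorem ev_left {i : ℕ} {f : A →ₗ[R] B} {g : B →ₗ[R] C} (h : SES f g) (hB : EV R i B N)
    (hC : EV R (i+1) C N) : EV R i A N := by
  rw [ev_iff] at *
  intro x
  obtain ⟨y, rfl⟩ := Abelian.Ext.contravariant_sequence_exact₁ h.short _ x (add_comm 1 i) (hC _)
  rw [show y = 0 from hB y]; simp

theorem ev_right {i : ℕ} {f : A →ₗ[R] B} {g : B →ₗ[R] C} (h : SES f g) (hA : EV R i A N)
    (hB : EV R (i+1) B N) : EV R (i+1) C N := by
  rw [ev_iff] at *
  intro x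
  obtain ⟨y, rfl⟩ := Abelian.Ext.contravariant_sequence_exact₃ h.short _ x (hB _) (add_comm 1 i)
  rw [show y = 0 from hA y]; simp

theorem ev_mid' {i : ℕ} {f : A →ₗ[R] B} {g : B →ₗ[R] C} (h : SES f g) (hA : EV R i M A)
    (hC : EV R i M C) : EV R i M B := by
  rw [ev_iff] at *
  intro x
  obtain ⟨y, rfl⟩ := Abelian.Ext.covariant_sequence_exact₂ _ h.short x (hC _)
  rw [show y = 0 from hA y]; simp

theorem ev_left' {i : ℕ} {f : A →ₗ[R] B} {g : B →ₗ[R] C} (h : SES f g) (hC : EV R i M C)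
    (hB : EV R (i+1) M B) : EV R (i+1) M A := by
  rw [ev_iff] at *
  intro x
  obtain ⟨y, rfl⟩ := Abelian.Ext.covariant_sequence_exact₁ _ h.short x (hB _) rfl
  rw [show y = 0 from hC y]; simp

theorem ev_right' {i : ℕ} {f : A →ₗ[R] B} {g : B →ₗ[R] C} (h : SES f g) (hB : EV R i M B)
    (hA : EV R (i+1) M A) : EV R i M C := by
  rw [ev_iff] at *
  intro x
  obtain ⟨y, rfl⟩ := Abelian.Ext.covariant_sequence_exact₃ _ h.short x rfl (hA _)
  rw [show y = 0 from hB y]; simp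

theorem ev_proj (i : ℕ) [Module.Projective R A] : EV R (i+1) A N := by
  rw [ev_iff]
  intro x
  have : Projective (ModuleCat.of R A) := (IsProjective.iff_projective _).mp inferInstance
  exact Abelian.Ext.eq_zero_of_projective x

theorem ev_zero : EV R 0 A N ↔ ∀ f : A →ₗ[R] N, f = 0 := by
  rw [ev_iff]
  constructor
  · intro h f
    have := h (Abelian.Ext.mk₀ (ModuleCat.ofHom f))
    rw [Abelian.Ext.mk₀_eq_zero_iff] at this
    exact congr_arg ModuleCat.Hom.hom this
  · intro h x
    obtain ⟨f, rfl⟩ := (Abelian.Ext.mk₀_bijective _ _).2 x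
    rw [Abelian.Ext.mk₀_eq_zero_iff]
    ext1
    exact h f.hom

theorem ev_extend {f : A →ₗ[R] B} {g : B →ₗ[R] C} (h : SES f g) (hC : EV R 1 C N)
    (φ : A →ₗ[R] N) : ∃ ψ : B →ₗ[R] N, ψ ∘ₗ f = φ := by
  rw [ev_iff] at hC
  obtain ⟨y, hy⟩ := Abelian.Ext.contravariant_sequence_exact₁ h.short _
    (Abelian.Ext.mk₀ (ModuleCat.ofHom φ)) (add_comm 1 0) (hC _)
  obtain ⟨ψ, rfl⟩ := (Abelian.Ext.mk₀_bijective _ _).2 y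
  rw [Abelian.Ext.mk₀_comp_mk₀] at hy
  have := (Abelian.Ext.mk₀_bijective _ _).1 hy
  exact ⟨ψ.hom, congr_arg ModuleCat.Hom.hom this⟩

theorem ev_one {f : A →ₗ[R] B} {g : B →ₗ[R] C} (h : SES f g) [Module.Projective R B]
    (H : ∀ φ : A →ₗ[R] N, ∃ ψ : B →ₗ[R] N, ψ ∘ₗ f = φ) : EV R 1 C N := by
  have hB : EV R 1 B N := ev_proj 0
  rw [ev_iff] at *
  intro x
  obtain ⟨y, rfl⟩ := Abelian.Ext.contravariant_sequence_exact₃ h.short _ x (hB _) (add_comm 1 0)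
  obtain ⟨φ, rfl⟩ := (Abelian.Ext.mk₀_bijective _ _).2 y
  obtain ⟨ψ, hψ⟩ := H φ.hom
  have : φ = (ModuleCat.shortComplexOfCompEqZero f g h.comp).f ≫ ModuleCat.ofHom ψ := by
    ext1; exact hψ.symm
  rw [this, ← Abelian.Ext.mk₀_comp_mk₀]
  exact h.short.extClass_comp_assoc _

theorem ev_subsingleton_left [Subsingleton A] (i : ℕ) : EV R i A N := by
  cases i with
  | zero => rw [ev_zero]; intro f; ext x; rw [Subsingleton.elim x 0]; simp
  | succ i => exact ev_proj i

theorem ses_id (e : A ≃ₗ[R] B) : SES (C := PUnit.{u+1}) (e : A →ₗ[R] B) 0 :=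
  ⟨e.injective, fun x => by simp, fun x => ⟨0, rfl⟩⟩

theorem ev_congr {i : ℕ} (e : A ≃ₗ[R] B) (h : EV R i A N) : EV R i B N :=
  ev_mid (ses_id e) h (ev_subsingleton_left i)

theorem ev_subsingleton_right [Subsingleton N] (i : ℕ) : EV R i A N := by
  rw [ev_iff]
  intro x
  have : x.comp (Abelian.Ext.mk₀ (𝟙 _)) (add_zero i) = x := Abelian.Ext.comp_mk₀_id x
  rw [← this]
  have h0 : 𝟙 (ModuleCat.of R N) = 0 := by ext a; exact Subsingleton.elim (α := N) _ _
  rw [h0]; simp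

theorem ev_congr' {i : ℕ} (e : A ≃ₗ[R] B) (h : EV R i M A) : EV R i M B :=
  ev_mid' (ses_id e) h (ev_subsingleton_right i)

theorem ses_prod : SES (LinearMap.inl R A B) (LinearMap.snd R A B) :=
  ⟨LinearMap.inl_injective, fun x => ⟨fun h => ⟨x.1, Prod.ext rfl h.symm⟩, by rintro ⟨y, rfl⟩; rfl⟩,
    fun b => ⟨(0, b), rfl⟩⟩

theorem ev_fin {i : ℕ} (h : EV R i M N) (r : ℕ) : EV R i M (Fin r → N) := by
  induction r with
  | zero => exact ev_subsingleton_right i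
  | succ r ih =>
    exact ev_congr' (Fin.consLinearEquiv R (fun _ : Fin (r+1) => N)) (ev_mid' ses_prod h ih)

theorem ev_ffree {i : ℕ} (h : EV R i M R) (F : Type u) [AddCommGroup F] [Module R F]
    [Module.Free R F] [Module.Finite R F] : EV R i M F := by
  let b := Module.Free.chooseBasis R F
  let e : F ≃ₗ[R] (Fin (Fintype.card (Module.Free.ChooseBasisIndex R F)) → R) :=
    (b.reindex (Fintype.equivFin _)).equivFun
  exact ev_congr' e.symm (ev_fin h _)

theorem ev_smul {i : ℕ} (x : R) (y : Abelian.Ext.{u} (ModuleCat.of R A) (ModuleCat.of R N) i) :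
    (Abelian.Ext.mk₀ (ModuleCat.ofHom (x • (LinearMap.id : A →ₗ[R] A)))).comp y (zero_add i) = x • y := by
  have : ModuleCat.ofHom (x • (LinearMap.id : A →ₗ[R] A)) = x • 𝟙 (ModuleCat.of R A) := rfl
  rw [this, Abelian.Ext.mk₀_smul, Abelian.Ext.smul_comp, Abelian.Ext.mk₀_id_comp]

theorem ev_nak [IsNoetherianRing R] [IsLocalRing R] [Module.Finite R A] [Module.Finite R N]
    {i : ℕ} {x : R} (hx : x ∈ maximalIdeal R) {g : A →ₗ[R] C}
    (h : SES (x • (LinearMap.id : A →ₗ[R] A)) g) (hC : EV R (i+1) C N) : EV R i A N := by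
  rw [ev_iff] at hC
  have hs : ∀ y : Abelian.Ext.{u} (ModuleCat.of R A) (ModuleCat.of R N) i, ∃ z, x • z = y := by
    intro y
    obtain ⟨z, hz⟩ := Abelian.Ext.contravariant_sequence_exact₁ h.short _ y (add_comm 1 i) (hC _)
    exact ⟨z, by rw [← hz]; exact (ev_smul x z).symm⟩
  have hfin : Module.Finite R (Abelian.Ext.{u} (ModuleCat.of R A) (ModuleCat.of R N) i) := by
    have : Module.Finite R (ModuleCat.of R A) := ‹Module.Finite R A›
    have : Module.Finite R (ModuleCat.of R N) := ‹Module.Finite R N›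
    exact ModuleCat.finite_ext R _ _ i
  have : (⊤ : Submodule R (Abelian.Ext.{u} (ModuleCat.of R A) (ModuleCat.of R N) i)) = ⊥ := by
    apply Submodule.eq_bot_of_le_smul_of_le_jacobson_bot (maximalIdeal R) _ hfin.fg_top
    · intro y _
      obtain ⟨z, rfl⟩ := hs y
      exact Submodule.smul_mem_smul hx trivial
    · exact IsLocalRing.maximalIdeal_le_jacobson _
  rw [ev_iff]
  intro y
  have : y ∈ (⊥ : Submodule R _) := this ▸ trivial
  simpa using this

/-- f.g. syzygy -/
theorem exists_syz [IsNoetherianRing R] (M : Type u) [AddCommGroup M] [Module R M] [Module.Finite R M] :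
    ∃ (r : ℕ) (K : Submodule R (Fin r → R)) (π : (Fin r → R) →ₗ[R] M), SES K.subtype π := by
  obtain ⟨r, π, hπ⟩ := Module.Finite.exists_fin' R M
  exact ⟨r, LinearMap.ker π, π, Subtype.val_injective, fun x => by simp, hπ⟩

end EVsec


set_option linter.all false
section Rsec
variable {R : Type u} [CommRing R] [IsNoetherianRing R] [IsLocalRing R]
open RingTheory.Sequence
open scoped Pointwise

theorem ses_smul {A : Type u} [AddCommGroup A] [Module R A] {x : R} (hx : IsSMulRegular A x) :
    SES (C := QuotSMulTop x A) (x • (LinearMap.id : A →ₗ[R] A)) (Submodule.mkQ (x • (⊤ : Submodule R A))) := by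
  refine ⟨hx, fun y => ?_, Submodule.mkQ_surjective _⟩
  rw [Submodule.mkQ_apply, Submodule.Quotient.mk_eq_zero, Submodule.mem_smul_pointwise_iff_exists]
  simp

theorem ses_ker {B C : Type u} [AddCommGroup B] [Module R B] [AddCommGroup C] [Module R C]
    {g : B →ₗ[R] C} (hg : Function.Surjective g) : SES (LinearMap.ker g).subtype g :=
  ⟨Subtype.val_injective, fun x => by simp, hg⟩

theorem ses_mkQ {A B : Type u} [AddCommGroup B] [Module R B] [AddCommGroup A] [Module R A]
    {f : A →ₗ[R] B} (hf : Function.Injective f) : SES f (LinearMap.range f).mkQ :=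
  ⟨hf, fun x => by simp, Submodule.mkQ_surjective _⟩

/-- bound on Ext against R -/
def GorB (R : Type u) [CommRing R] (n : ℕ) : Prop :=
  ∀ (M : Type u) [AddCommGroup M] [Module R M], Module.Finite R M → ∀ i, n < i → EV R i M R

theorem exists_gorb (h : IsGorensteinLocalRing R) : ∃ n, GorB R n ∧
    ∃ (M : Type u) (_ : AddCommGroup M) (_ : Module R M), Module.Finite R M ∧ ¬ EV R n M R := by
  classical
  have hex : ∃ n, GorB R n := by
    obtain ⟨n, hn⟩ := h
    exact ⟨n, fun M _ _ hM i hi => (bridge _ _ _).mp (hn (ModuleCat.of R M) hM i hi)⟩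
  refine ⟨Nat.find hex, Nat.find_spec hex, ?_⟩
  rcases hn : Nat.find hex with _ | m
  · refine ⟨R, inferInstance, inferInstance, inferInstance, ?_⟩
    rw [ev_zero]
    intro h
    have := LinearMap.congr_fun (h LinearMap.id) 1
    simp at this
  · have h1 : ¬ GorB R m := Nat.find_min hex (by omega)
    have h2 := Nat.find_spec hex
    rw [hn] at h2
    unfold GorB at h1
    push Not at h1
    obtain ⟨M, i1, i2, hM, i, hi, hv⟩ := h1
    refine ⟨M, i1, i2, hM, ?_⟩
    obtain rfl : i = m + 1 := by
      by_contra hne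
      exact hv (h2 M hM i (by omega))
    exact hv

/-- multiplication on a quotient by a prime -/
theorem ev_quot_prime {n : ℕ} (hn : GorB R n) (p : Ideal R) [p.IsPrime] (hp : p ≠ maximalIdeal R) :
    EV R n (R ⧸ p) R := by
  have : ∃ x ∈ maximalIdeal R, x ∉ p := by
    by_contra! hc
    exact hp (le_antisymm (IsLocalRing.le_maximalIdeal (Ideal.IsPrime.ne_top ‹_›)) hc)
  obtain ⟨x, hx, hxp⟩ := this
  have hreg : IsSMulRegular (R ⧸ p) x := by
    intro a b hab
    have hx0 : (Ideal.Quotient.mk p x) ≠ 0 := by rwa [Ne, Ideal.Quotient.eq_zero_iff_mem]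
    simp only [Algebra.smul_def] at hab
    exact mul_left_cancel₀ hx0 hab
  exact ev_nak hx (ses_smul hreg) (hn _ inferInstance _ (by omega))

theorem not_ev_k {n : ℕ} (hn : GorB R n) (hM : ∃ (M : Type u) (_ : AddCommGroup M) (_ : Module R M),
    Module.Finite R M ∧ ¬ EV R n M R) : ¬ EV R n (ResidueField R) R := by
  intro hk
  obtain ⟨M, _, _, hfin, hM⟩ := hM
  apply hM
  clear hM
  induction hfin using IsNoetherianRing.induction_on_isQuotientEquivQuotientPrime R with
  | subsingleton N => exact ev_subsingleton_left _
  | quotient N p f =>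
    refine ev_congr f.symm ?_
    by_cases hp : p.1 = maximalIdeal R
    · rw [hp]; exact hk
    · haveI := p.2; exact ev_quot_prime hn p.1 hp
  | exact N₁ N₂ N₃ f g hf hg hfg h₁ h₃ => 
    exact ev_mid ⟨hf, hfg, hg⟩ h₁ h₃

theorem supp_k : Module.support R (ResidueField R) = PrimeSpectrum.zeroLocus (maximalIdeal R : Set R) := by
  have : Module.Finite R (ResidueField R) := inferInstance
  rw [Module.support_eq_zeroLocus]
  congr 2
  exact Ideal.annihilator_quotient

theorem smul_lt_of_le {W : Type u} [AddCommGroup W] [Module R W] [Module.Finite R W] [Nontrivial W]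
    (I : Ideal R) (hI : I ≤ maximalIdeal R) : I • (⊤ : Submodule R W) < ⊤ := by
  rw [lt_top_iff_ne_top]
  intro h
  have : (⊤ : Submodule R W) = ⊥ :=
    Submodule.eq_bot_of_le_smul_of_le_jacobson_bot I _ Module.Finite.fg_top h.ge
      (hI.trans (IsLocalRing.maximalIdeal_le_jacobson _))
  exact top_ne_bot this

theorem exists_reg {W : Type u} [AddCommGroup W] [Module R W] [Module.Finite R W] [Nontrivial W]
    {n : ℕ} (h : ∀ i < n, EV R i (ResidueField R) W) : ∃ rs : List R, rs.length = n ∧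
      (∀ r ∈ rs, r ∈ maximalIdeal R) ∧ IsRegular W rs := by
  have : Module.Finite R (ModuleCat.of R W) := ‹Module.Finite R W›
  have : Module.Finite R (ModuleCat.of R (ResidueField R)) :=
    inferInstanceAs (Module.Finite R (ResidueField R))
  exact ModuleCat.exists_isRegular_of_exists_subsingleton_ext (maximalIdeal R) n (ModuleCat.of R W)
    (smul_lt_of_le _ le_rfl) (ModuleCat.of R (ResidueField R)) supp_k h

theorem ev_reg_low {W N : Type u} [AddCommGroup W] [Module R W] [Module.Finite R W]
    [AddCommGroup N] [Module R N] [Module.Finite R N] 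
    (rs : List R) (hrs : ∀ r ∈ rs, r ∈ maximalIdeal R) (hreg : IsRegular W rs)
    (hN : ∀ r ∈ rs, ∀ y : N, r • y = 0) (i : ℕ) (hi : i < rs.length) : EV R i N W := by
  have : Module.Finite R (ModuleCat.of R W) := ‹Module.Finite R W›
  have : Module.Finite R (ModuleCat.of R N) := ‹Module.Finite R N›
  refine ModuleCat.subsingleton_ext_of_exists_isRegular (Ideal.ofList rs) (ModuleCat.of R N) ?_
    (ModuleCat.of R W) ?_ rs (fun r hr => Ideal.subset_span hr) hreg i hi
  · rw [Module.support_eq_zeroLocus, PrimeSpectrum.zeroLocus_subset_zeroLocus_iff]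
    refine le_trans ?_ Ideal.le_radical
    refine Ideal.span_le.mpr fun r hr => ?_
    exact Module.mem_annihilator.mpr (hN r hr)
  · exact lt_top_iff_ne_top.mpr hreg.top_ne_smul.symm

theorem ev_koszul {N : Type u} [AddCommGroup N] [Module R N] (rs : List R) : 
    ∀ (s : ℕ) (A : Type u) [AddCommGroup A] [Module R A], IsWeaklyRegular A rs → 
    (∀ j, s < j → EV R j A N) → ∀ j, s + rs.length < j →
    EV R j (A ⧸ Ideal.ofList rs • (⊤ : Submodule R A)) N := by
  induction rs with
  | nil => 
    intro s A _ _ _ h j hj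
    refine ev_congr (Submodule.quotEquivOfEqBot _ (by simp)).symm (h j (by simpa using hj))
  | cons x rs ih =>
    intro s A _ _ hreg h j hj
    rw [isWeaklyRegular_cons_iff] at hreg
    refine ev_congr (Submodule.quotOfListConsSMulTopEquivQuotSMulTopInner A x rs).symm ?_
    refine ih (s+1) _ hreg.2 ?_ j (by simp at hj; omega)
    intro j hj
    obtain ⟨j, rfl⟩ : ∃ j', j = j' + 1 := ⟨j-1, by omega⟩
    exact ev_right (ses_smul hreg.1) (h j (by omega)) (h (j+1) (by omega))

theorem ev_of_reg {n : ℕ} (hn : GorB R n) (rs : List R) : (∀ r ∈ rs, r ∈ maximalIdeal R) → 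
    ∀ (W : Type u) [AddCommGroup W] [Module R W] [Module.Finite R W],
    IsWeaklyRegular W rs → ∀ j, n < j + rs.length → EV R j W R := by
  induction rs with
  | nil => 
    intro _ W _ _ _ _ j hj
    exact hn _ inferInstance _ (by simpa using hj)
  | cons x rs ih =>
    intro hrs W _ _ _ hreg j hj
    rw [isWeaklyRegular_cons_iff] at hreg
    exact ev_nak (hrs x (by simp)) (ses_smul hreg.1) 
      (ih (fun r hr => hrs r (by simp [hr])) _ hreg.2 (j+1) (by simp at hj; omega))

end Rsec


set_option linter.all false
section Dsec
variable {R : Type u} [CommRing R] [IsNoetherianRing R] [IsLocalRing R]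
open RingTheory.Sequence
open scoped Pointwise

instance : IsSimpleModule R (ResidueField R) := by
  change IsSimpleModule R (R ⧸ maximalIdeal R)
  exact isSimpleModule_iff_isCoatom.mpr (Ideal.isMaximal_def.mp inferInstance)

theorem k_smul (r : R) (hr : r ∈ maximalIdeal R) (y : ResidueField R) : r • y = 0 := by
  rw [Algebra.smul_def]
  have : algebraMap R (ResidueField R) r = 0 := (IsLocalRing.residue_eq_zero_iff r).mpr hr
  rw [this, zero_mul]

theorem gor_struct (h : IsGorensteinLocalRing R) : ∃ n : ℕ, GorB R n ∧ ringKrullDim R = n ∧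
    (∀ i < n, EV R i (ResidueField R) R) ∧ ∃ rs : List R, rs.length = n ∧
      (∀ r ∈ rs, r ∈ maximalIdeal R) ∧ IsRegular R rs := by
  classical
  obtain ⟨n, hn, hM⟩ := exists_gorb h
  have hk := not_ev_k hn hM
  clear hM
  have hex : ∃ i, ¬ EV R i (ResidueField R) R := ⟨n, hk⟩
  obtain ⟨d, hd1, hd2, hd3⟩ : ∃ d, d ≤ n ∧ (∀ i < d, EV R i (ResidueField R) R) ∧
      ¬ EV R d (ResidueField R) R :=
    ⟨Nat.find hex, Nat.find_min' hex hk, fun i hi => not_not.mp (Nat.find_min hex hi), Nat.find_spec hex⟩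
  obtain ⟨rs, hlen, hmem, hreg⟩ := exists_reg hd2
  have hnd : n ≤ d := by
    let Q := R ⧸ Ideal.ofList rs • (⊤ : Submodule R R)
    have hQn : Nontrivial Q := Submodule.Quotient.nontrivial_iff.mpr hreg.top_ne_smul.symm
    have hnz : ¬ EV R 0 (ResidueField R) Q := by
      intro h0
      obtain ⟨xs, hxl, hxm, hxr⟩ := exists_reg (W := Q) (n := 1)
        (fun i hi => by obtain rfl : i = 0 := by omega
                        exact h0)
      have hw : IsWeaklyRegular R (rs ++ xs) :=
        (isWeaklyRegular_append_iff R rs xs).mpr ⟨hreg.toIsWeaklyRegular, hxr.toIsWeaklyRegular⟩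
      have hm : ∀ r ∈ rs ++ xs, r ∈ maximalIdeal R := by
        intro r hr
        rcases List.mem_append.mp hr with h | h
        exacts [hmem r h, hxm r h]
      have hr : IsRegular R (rs ++ xs) :=
        ⟨hw, (smul_lt_of_le (W := R) _ (Ideal.span_le.mpr fun r hr => hm r hr)).ne'⟩
      exact hd3 (ev_reg_low _ hm hr (fun r hr y => k_smul r (hm r hr) y) d (by simp; omega))
    rw [ev_zero] at hnz
    push Not at hnz
    obtain ⟨f, hf⟩ := hnz
    have hfi : Function.Injective f := (LinearMap.injective_or_eq_zero f).resolve_right hf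
    by_contra hlt
    have hQ : EV R n Q R := ev_koszul rs 0 R hreg.toIsWeaklyRegular
      (fun j hj => by obtain ⟨j, rfl⟩ : ∃ j', j = j' + 1 := ⟨j-1, by omega⟩
                      exact ev_proj j) n (by omega)
    have hCf : Module.Finite R (Q ⧸ LinearMap.range f) := inferInstance
    exact hk (ev_left (ses_mkQ hfi) hQ (hn _ hCf _ (by omega)))
  obtain rfl : n = d := le_antisymm hnd hd1
  refine ⟨n, hn, ?_, hd2, rs, hlen, hmem, hreg⟩
  have hprime : ∀ p : Ideal R, p.IsPrime → Ideal.ofList rs ≤ p → p = maximalIdeal R := by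
    intro p hp hle
    by_contra hne
    have hV := ev_quot_prime hn p hne
    have hpm := IsLocalRing.le_maximalIdeal hp.ne_top
    let g : (R ⧸ p) →ₗ[R] ResidueField R := Submodule.factor hpm
    have hg : Function.Surjective g := Submodule.factor_surjective hpm
    rcases n with _ | m
    · apply hk
      rw [ev_zero] at hV ⊢
      intro f
      have := hV (f ∘ₗ g)
      ext y
      obtain ⟨z, rfl⟩ := hg y
      exact LinearMap.congr_fun this z
    · apply hk
      refine ev_right (ses_ker hg) ?_ hV
      have hfin : Module.Finite R (LinearMap.ker g) := inferInstance
      refine ev_reg_low rs hmem hreg ?_ m (by omega)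
      intro r hr y
      ext
      have hrp : r ∈ p := hle (Ideal.subset_span hr)
      change r • (y : R ⧸ p) = 0
      obtain ⟨z, hz⟩ := Ideal.Quotient.mk_surjective (y : R ⧸ p)
      rw [← hz]
      change Ideal.Quotient.mk p (r * z) = 0
      exact Ideal.Quotient.eq_zero_iff_mem.mpr (p.mul_mem_right _ hrp)
  rw [← ringKrullDim_add_length_eq_ringKrullDim_of_isRegular rs hreg, hlen]
  have hle : Ideal.ofList rs ≤ maximalIdeal R := Ideal.span_le.mpr fun r hr => hmem r hr
  have hnt : Nontrivial (R ⧸ Ideal.ofList rs) := Ideal.Quotient.nontrivial_iff.mpr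
    (ne_top_of_le_ne_top Ideal.IsPrime.ne_top' hle)
  have h0 : Ring.KrullDimLE 0 (R ⧸ Ideal.ofList rs) := by
    rw [Ring.krullDimLE_zero_iff]
    intro I hI
    have h1 := hprime (I.comap (Ideal.Quotient.mk _)) inferInstance
      (by intro x hx; rw [Ideal.mem_comap, Ideal.Quotient.eq_zero_iff_mem.mpr hx]; exact I.zero_mem)
    have h2 : (I.comap (Ideal.Quotient.mk (Ideal.ofList rs))).IsMaximal := by rw [h1]; infer_instance
    exact Ideal.isMaximal_of_isIntegral_of_isMaximal_comap' _ (RingHom.isIntegral_of_surjective _ Ideal.Quotient.mk_surjective) I h2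
  have : ringKrullDim (R ⧸ Ideal.ofList rs) = 0 := ringKrullDimZero_iff_ringKrullDim_eq_zero.mp h0
  rw [this, zero_add]

end Dsec


set_option linter.all false
section Gsec
variable {R : Type u} [CommRing R] [IsNoetherianRing R] [IsLocalRing R]
open Module

/-- totally reflexive-like vanishing -/
def TR (R : Type u) [CommRing R] (G : Type u) [AddCommGroup G] [Module R G] : Prop :=
  ∀ i, EV R (i+1) G R

theorem tr_proj {G : Type u} [AddCommGroup G] [Module R G] [Module.Projective R G] : TR R G :=
  fun i => ev_proj i

theorem tr_left {A B C : Type u} [AddCommGroup A] [Module R A] [AddCommGroup B] [Module R B]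
    [AddCommGroup C] [Module R C] {f : A →ₗ[R] B} {g : B →ₗ[R] C} (h : SES f g)
    (hB : TR R B) (hC : TR R C) : TR R A := fun i => ev_left h (hB i) (hC (i+1))

theorem exists_desc {A B C : Type u} [AddCommGroup A] [Module R A] [AddCommGroup B] [Module R B]
    [AddCommGroup C] [Module R C] {g : B →ₗ[R] C} (hg : Function.Surjective g) (h : B →ₗ[R] A)
    (hk : ∀ b, g b = 0 → h b = 0) : ∃ θ : C →ₗ[R] A, ∀ b, θ (g b) = h b := by
  refine ⟨(LinearMap.ker g).liftQ h (fun b hb => hk b hb) ∘ₗ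
    (g.quotKerEquivOfSurjective hg).symm.toLinearMap, fun b => ?_⟩
  have : (g.quotKerEquivOfSurjective hg).symm (g b) = Submodule.Quotient.mk b := by
    rw [LinearEquiv.symm_apply_eq]; rfl
  rw [LinearMap.comp_apply, LinearEquiv.coe_coe, this]; rfl

theorem ses_dual {A B C : Type u} [AddCommGroup A] [Module R A] [AddCommGroup B] [Module R B]
    [AddCommGroup C] [Module R C] {f : A →ₗ[R] B} {g : B →ₗ[R] C} (h : SES f g)
    (hC : EV R 1 C R) : SES g.dualMap f.dualMap := by
  refine ⟨LinearMap.dualMap_injective_of_surjective h.surj, fun φ => ⟨fun hφ => ?_, ?_⟩, fun φ => ?_⟩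
  · obtain ⟨θ, hθ⟩ := exists_desc h.surj φ (fun b hb => by
      obtain ⟨a, rfl⟩ := (h.ex b).mp hb
      exact LinearMap.congr_fun hφ a)
    exact ⟨θ, LinearMap.ext hθ⟩
  · rintro ⟨θ, rfl⟩
    ext a
    simp [h.ex.apply_apply_eq_zero a]
  · obtain ⟨ψ, hψ⟩ := ev_extend h hC φ
    exact ⟨ψ, hψ⟩

theorem dual_ev {n : ℕ} (hn : GorB R n) (j : ℕ) : ∀ (G : Type u) [AddCommGroup G] [Module R G]
    [Module.Finite R G], TR R G → ∀ i, n < (i+1) + j → EV R (i+1) (Dual R G) R := by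
  induction j with
  | zero =>
    intro G _ _ _ _ i hi
    exact hn _ inferInstance _ (by omega)
  | succ j ih =>
    intro G _ _ _ hG i hi
    obtain ⟨r, K, π, hS⟩ := exists_syz (R := R) G
    have hK : TR R K := tr_left hS tr_proj hG
    exact ev_left (ses_dual hS (hG 0)) (ev_proj i) (ih K hK (i+1) (by omega))

theorem dual_tr {n : ℕ} (hn : GorB R n) {G : Type u} [AddCommGroup G] [Module R G]
    [Module.Finite R G] (hG : TR R G) : TR R (Dual R G) := fun i => dual_ev hn (n+1) G hG i (by omega)

theorem eval_surj {n : ℕ} (hn : GorB R n) {G : Type u} [AddCommGroup G] [Module R G]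
    [Module.Finite R G] (hG : TR R G) : Function.Surjective (Dual.eval R G) := by
  intro θ
  obtain ⟨r, K, π, hS⟩ := exists_syz (R := R) G
  have hK : TR R K := tr_left hS tr_proj hG
  obtain ⟨θ', hθ'⟩ := ev_extend (ses_dual hS (hG 0)) (dual_tr hn hK 0) θ
  obtain ⟨x, rfl⟩ := (Module.bijective_dual_eval R (Fin r → R)).2 θ'
  exact ⟨π x, hθ'⟩

theorem eval_inj {n : ℕ} (hn : GorB R n) {G : Type u} [AddCommGroup G] [Module R G]
    [Module.Finite R G] (hG : TR R G) (g : G) (hg : ∀ φ : Dual R G, φ g = 0) : g = 0 := by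
  obtain ⟨r, K, π, hS⟩ := exists_syz (R := R) G
  have hK : TR R K := tr_left hS tr_proj hG
  obtain ⟨x, rfl⟩ := hS.surj g
  have hD := ses_dual hS (hG 0)
  obtain ⟨θ, hθ⟩ := exists_desc hD.surj (Dual.eval R (Fin r → R) x) (fun φ hφ => by
    obtain ⟨ψ, rfl⟩ := (hD.ex φ).mp hφ
    exact hg ψ)
  obtain ⟨y, rfl⟩ := eval_surj hn hK θ
  have : Dual.eval R (Fin r → R) y = Dual.eval R (Fin r → R) x := LinearMap.ext hθ
  rw [← (Module.bijective_dual_eval R (Fin r → R)).1 this]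
  exact hS.ex.apply_apply_eq_zero y

theorem exists_cosyz {n : ℕ} (hn : GorB R n) (G : Type u) [AddCommGroup G] [Module R G]
    [Module.Finite R G] (hG : TR R G) : ∃ (r : ℕ) (ε : G →ₗ[R] (Fin r → R)), 
      Function.Injective ε ∧ TR R ((Fin r → R) ⧸ LinearMap.range ε) := by
  obtain ⟨r, σ, hσ⟩ := Module.Finite.exists_fin' R (Dual R G)
  let ε : G →ₗ[R] (Fin r → R) := LinearMap.pi fun i => σ (Pi.single i 1)
  have key : ∀ v : Fin r → R, ∀ x, σ v x = ∑ i, v i * ε x i := by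
    intro v x
    conv_lhs => rw [← Finset.univ_sum_single v]
    rw [map_sum, LinearMap.sum_apply]
    refine Finset.sum_congr rfl fun i _ => ?_
    have : Pi.single i (v i) = v i • Pi.single i (1:R) := by
      ext j; simp [Pi.single_apply]
    rw [this, map_smul]; rfl
  have hε : Function.Injective ε := by
    rw [injective_iff_map_eq_zero]
    intro x hx
    refine eval_inj hn hG x fun φ => ?_
    obtain ⟨v, rfl⟩ := hσ φ
    rw [key, hx]; simp
  refine ⟨r, ε, hε, fun i => ?_⟩
  have hS := ses_mkQ hε
  cases i with
  | zero =>
    refine ev_one hS fun φ => ?_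
    obtain ⟨v, rfl⟩ := hσ φ
    refine ⟨∑ i, v i • LinearMap.proj i, ?_⟩
    ext x
    rw [key]; simp
  | succ i => exact ev_right hS (hG i) (ev_proj (i+1))

theorem tr_ev_low {n : ℕ} (hn : GorB R n) {d : ℕ} {k : Type u} [AddCommGroup k] [Module R k]
    (hd : ∀ i < d, EV R i k R) (i : ℕ) :
    i < d → ∀ (G : Type u) [AddCommGroup G] [Module R G] [Module.Finite R G], TR R G → EV R i k G := by
  induction i with
  | zero =>
    intro hi G _ _ _ hG
    obtain ⟨r, ε, hε, hG'⟩ := exists_cosyz hn G hG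
    have h0 := ev_fin (hd 0 hi) r
    rw [ev_zero] at h0 ⊢
    intro f
    ext x
    apply hε
    have := LinearMap.congr_fun (h0 (ε ∘ₗ f)) x
    simpa using this
  | succ i ih =>
    intro hi G _ _ _ hG
    obtain ⟨r, ε, hε, hG'⟩ := exists_cosyz hn G hG
    exact ev_left' (ses_mkQ hε) (ih (by omega) _ hG') (ev_fin (hd _ hi) r)

/-- AB bound -/
def ABB (R : Type u) [CommRing R] (a : ℕ) : Prop :=
  ∀ (M N : Type u) [AddCommGroup M] [Module R M] [AddCommGroup N] [Module R N],
    Module.Finite R M → Module.Finite R N → (∃ m, ∀ i, m < i → EV R i M N) → ∀ i, a < i → EV R i M N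

theorem ab_tr {n a : ℕ} (hn : GorB R n) (ha : ABB R a) (N : Type u) [AddCommGroup N] [Module R N]
    [Module.Finite R N] (j : ℕ) : ∀ (G : Type u) [AddCommGroup G] [Module R G] [Module.Finite R G],
    TR R G → (∃ m, ∀ i, m < i → EV R i G N) → ∀ i, a < (i+1)+j → EV R (i+1) G N := by
  induction j with
  | zero => 
    intro G _ _ _ _ hev i hi
    exact ha G N inferInstance inferInstance hev _ hi
  | succ j ih =>
    intro G _ _ _ hG hev i hi
    obtain ⟨r, ε, hε, hG'⟩ := exists_cosyz hn G hG
    refine ev_left (ses_mkQ hε) (ev_proj i) (ih _ hG' ?_ (i+1) (by omega))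
    obtain ⟨m, hm⟩ := hev
    refine ⟨m+1, fun i hi => ?_⟩
    obtain ⟨i, rfl⟩ : ∃ i', i = i' + 1 := ⟨i-1, by omega⟩
    exact ev_right (ses_mkQ hε) (hm i (by omega)) (ev_proj i)

theorem mcm_iff {n : ℕ} (hn : ringKrullDim R = n) (M : ModuleCat.{u} R) :
    IsMCM R M ↔ ∀ i < n, EV R i (ResidueField R) M := by
  unfold IsMCM moduleDepth
  rw [hn]
  constructor
  · intro h i hi
    by_contra hc
    have h1 : (n : ℕ∞) ≤ sInf ((fun i : ℕ => (i : ℕ∞)) '' {i : ℕ | ¬ ExtVanish R i (ModuleCat.of R (ResidueField R)) M}) := by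
      exact_mod_cast h
    have h2 := h1.trans (sInf_le ⟨i, fun h' => hc ((bridge _ _ _).mp h'), rfl⟩)
    have h3 : (n : ℕ∞) ≤ (i : ℕ∞) := h2
    have : n ≤ i := by exact_mod_cast h3
    omega
  · intro h
    have h1 : (n : ℕ∞) ≤ sInf ((fun i : ℕ => (i : ℕ∞)) '' {i : ℕ | ¬ ExtVanish R i (ModuleCat.of R (ResidueField R)) M}) := by
      apply le_sInf
      rintro _ ⟨i, hi, rfl⟩
      by_contra hlt
      have : i < n := by
        by_contra h'
        have h3 : (n : ℕ∞) ≤ (i : ℕ∞) := by exact_mod_cast not_lt.mp h'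
        exact hlt h3
      exact hi ((bridge _ _ _).mpr (h i this))
    exact_mod_cast h1

end Gsec


set_option linter.all false
section Usec
variable {R : Type u} [CommRing R] 
open Module

theorem hull_push {K F M I X P : Type u} [AddCommGroup K] [Module R K] [AddCommGroup F] [Module R F]
    [AddCommGroup M] [Module R M] [AddCommGroup I] [Module R I] [AddCommGroup X] [Module R X]
    [AddCommGroup P] [Module R P] {ι : K →ₗ[R] F} {π : F →ₗ[R] M} (h1 : SES ι π)
    {f : K →ₗ[R] I} {v : I →ₗ[R] X} (h2 : SES f v) (e : I →ₗ[R] F) (he : e ∘ₗ f = ι)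
    (j : X →ₗ[R] P) (hj : Function.Injective j) :
    ∃ (η : I →ₗ[R] (F × P)) (a : M →ₗ[R] ((F × P) ⧸ LinearMap.range η))
      (b : ((F × P) ⧸ LinearMap.range η) →ₗ[R] (P ⧸ LinearMap.range j)), Function.Injective η ∧ SES a b := by
  let η : I →ₗ[R] (F × P) := e.prod (j ∘ₗ v)
  have he' : ∀ k, e (f k) = ι k := fun k => LinearMap.congr_fun he k
  have hη : ∀ y, η y = (e y, j (v y)) := fun _ => rfl
  have h20 : ∀ k, v (f k) = 0 := h2.ex.apply_apply_eq_zero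
  obtain ⟨a, ha⟩ : ∃ a : M →ₗ[R] ((F × P) ⧸ LinearMap.range η), 
      ∀ w, a (π w) = (LinearMap.range η).mkQ (w, 0) := by
    have h1s := h1.surj
    refine ⟨(LinearMap.ker π).liftQ ((LinearMap.range η).mkQ ∘ₗ LinearMap.inl R F P) ?_ ∘ₗ
      (π.quotKerEquivOfSurjective h1s).symm.toLinearMap, fun b => ?_⟩
    · intro w hw
      obtain ⟨k, rfl⟩ := (h1.ex w).mp hw
      simp only [LinearMap.mem_ker, LinearMap.comp_apply, Submodule.mkQ_apply, Submodule.Quotient.mk_eq_zero]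
      exact ⟨f k, by simp [hη, he', h20]⟩
    · have : (π.quotKerEquivOfSurjective h1s).symm (π b) = Submodule.Quotient.mk b := by
        rw [LinearEquiv.symm_apply_eq]; rfl
      rw [LinearMap.comp_apply, LinearEquiv.coe_coe, this]; rfl
  let b : ((F × P) ⧸ LinearMap.range η) →ₗ[R] (P ⧸ LinearMap.range j) := 
    (LinearMap.range η).liftQ ((LinearMap.range j).mkQ ∘ₗ LinearMap.snd R F P) (by
      rintro _ ⟨y, rfl⟩
      simp [hη])
  have hb : ∀ w p, b ((LinearMap.range η).mkQ (w, p)) = (LinearMap.range j).mkQ p := fun _ _ => rfl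
  refine ⟨η, a, b, ?_, ?_, ?_, ?_⟩
  · rw [injective_iff_map_eq_zero]
    intro y hy
    rw [hη, Prod.mk_eq_zero] at hy
    have hv : v y = 0 := hj (by rw [hy.2, map_zero])
    obtain ⟨k, rfl⟩ := (h2.ex y).mp hv
    have : k = 0 := h1.inj (by rw [← he', hy.1, map_zero])
    rw [this, map_zero]
  · rw [injective_iff_map_eq_zero]
    intro m hm
    obtain ⟨w, rfl⟩ := h1.surj m
    rw [ha, Submodule.mkQ_apply, Submodule.Quotient.mk_eq_zero] at hm
    obtain ⟨y, hy⟩ := hm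
    rw [hη, Prod.mk.injEq] at hy
    have hv : v y = 0 := hj (by rw [hy.2, map_zero])
    obtain ⟨k, rfl⟩ := (h2.ex y).mp hv
    rw [← hy.1, he']
    exact h1.ex.apply_apply_eq_zero k
  · intro t
    constructor
    · intro ht
      obtain ⟨⟨w, p⟩, rfl⟩ := Submodule.mkQ_surjective _ t
      rw [hb, Submodule.mkQ_apply, Submodule.Quotient.mk_eq_zero] at ht
      obtain ⟨x, rfl⟩ := ht
      obtain ⟨y, rfl⟩ := h2.surj x
      refine ⟨π (w - e y), ?_⟩
      rw [ha, ← sub_eq_zero, ← map_sub, Submodule.mkQ_apply, Submodule.Quotient.mk_eq_zero]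
      exact ⟨-y, by simp [hη]⟩
    · rintro ⟨m, rfl⟩
      obtain ⟨w, rfl⟩ := h1.surj m
      rw [ha, hb, map_zero]
  · intro q
    obtain ⟨p, rfl⟩ := Submodule.mkQ_surjective _ q
    exact ⟨(LinearMap.range η).mkQ (0, p), hb _ _⟩

/-- finite free resolution of length at most s -/
def FR (R : Type u) [CommRing R] : ℕ → ∀ (I : Type u) [AddCommGroup I] [Module R I], Prop
  | 0, I, _, _ => Module.Finite R I ∧ Module.Free R I
  | s+1, I, _, _ => ∃ (F I0 : Type u) (_ : AddCommGroup F) (_ : Module R F) (_ : AddCommGroup I0)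
      (_ : Module R I0) (f : I0 →ₗ[R] F) (g : F →ₗ[R] I), SES f g ∧ FR R s I0 ∧ Module.Finite R I0 ∧
      Module.Finite R F ∧ Module.Free R F

theorem exists_hull [IsNoetherianRing R] [IsLocalRing R] {n : ℕ} (hn : GorB R n) (j : ℕ) :
    ∀ (M : Type u) [AddCommGroup M] [Module R M] [Module.Finite R M], (∀ i, j < i → EV R i M R) →
    ∃ (s : ℕ) (I X : Type u) (_ : AddCommGroup I) (_ : Module R I) (_ : AddCommGroup X)
      (_ : Module R X) (f : M →ₗ[R] I) (g : I →ₗ[R] X), SES f g ∧ FR R s I ∧ Module.Finite R I ∧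
      Module.Finite R X ∧ TR R X := by
  induction j with
  | zero =>
    intro M _ _ _ hM
    obtain ⟨r, ε, hε, hG'⟩ := exists_cosyz hn M (fun i => hM (i+1) (by omega))
    exact ⟨0, _, _, _, _, _, _, ε, _, ses_mkQ hε, ⟨inferInstance, inferInstance⟩, inferInstance,
      inferInstance, hG'⟩
  | succ j ih =>
    intro M _ _ _ hM
    obtain ⟨r, K, π, hS⟩ := exists_syz (R := R) M
    obtain ⟨s, I, X, _, _, _, _, f, g, hS2, hI, hIf, hXf, hX⟩ := ih K (fun i hi => by
      obtain ⟨i, rfl⟩ : ∃ i', i = i' + 1 := ⟨i-1, by omega⟩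
      exact ev_left hS (ev_proj i) (hM (i+2) (by omega)))
    obtain ⟨e, he⟩ := ev_extend hS2 (ev_fin (hX 0) r) K.subtype
    obtain ⟨r', ε, hε, hG'⟩ := exists_cosyz hn X hX
    obtain ⟨η, a, b, hη, hab⟩ := hull_push hS hS2 e he ε hε
    exact ⟨s+1, _, _, _, _, _, _, a, b, hab, ⟨_, I, _, _, _, _, η, _, ses_mkQ hη, hI, hIf, inferInstance,
      inferInstance⟩, inferInstance, inferInstance, hG'⟩

theorem fr_ev {N : Type u} [AddCommGroup N] [Module R N] (s : ℕ) : ∀ (I : Type u) [AddCommGroup I]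
    [Module R I], FR R s I → ∀ i, s < i → EV R i I N := by
  induction s with
  | zero =>
    intro I _ _ hI i hi
    obtain ⟨i, rfl⟩ : ∃ i', i = i' + 1 := ⟨i-1, by omega⟩
    have := hI.2
    exact ev_proj i
  | succ s ih =>
    rintro I _ _ ⟨F, I0, _, _, _, _, f, g, hS, hI0, _, hF1, hF2⟩ i hi
    obtain ⟨i, rfl⟩ : ∃ i', i = i' + 1 := ⟨i-1, by omega⟩
    exact ev_right hS (ih I0 hI0 i (by omega)) (ev_proj i)

end Usec


set_option linter.all false
section Wsec
variable {R : Type u} [CommRing R] [IsNoetherianRing R] [IsLocalRing R]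
open Module

theorem tens_zero_iff {A : Type u} [AddCommGroup A] [Module R A] (z : A) :
    (TensorProduct.tmul R (1 : ResidueField R) z = 0) ↔ z ∈ maximalIdeal R • (⊤ : Submodule R A) := by
  have h := TensorProduct.quotTensorEquivQuotSMul_mk_tmul (M := A) (maximalIdeal R) 1 z
  rw [one_smul] at h
  rw [← Submodule.Quotient.mk_eq_zero, ← h]
  exact (LinearEquiv.map_eq_zero_iff _).symm

theorem fr_free {N : Type u} [AddCommGroup N] [Module R N] [Module.Finite R N] [Nontrivial N] (s : ℕ) :
    ∀ (I : Type u) [AddCommGroup I] [Module R I], FR R s I → (∀ i, EV R (i+1) I N) →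
      Module.Free R I := by
  induction s with
  | zero => intro I _ _ h _; exact h.2
  | succ s ih =>
    intro I _ _ hI hev
    obtain ⟨F, I0, _, _, _, _, f, g, hs, hI0, _, _, _⟩ := hI
    have hfree : Module.Free R I0 := ih I0 hI0 (fun i => ev_left hs (ev_proj i) (hev (i+1)))
    obtain ⟨y, hy⟩ : ∃ y : N, y ∉ maximalIdeal R • (⊤ : Submodule R N) := by
      by_contra hc
      push Not at hc
      have : (⊤ : Submodule R N) = ⊥ := Submodule.eq_bot_of_le_smul_of_le_jacobson_bot (maximalIdeal R) ⊤
        Module.Finite.fg_top (fun y _ => hc y) (by rw [IsLocalRing.jacobson_eq_maximalIdeal ⊥ bot_ne_top])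
      exact top_ne_bot this
    refine Module.free_of_lTensor_residueField_injective (f := f) (g := g) hs.surj hs.ex ?_
    rw [injective_iff_map_eq_zero]
    intro t ht
    obtain ⟨z, rfl⟩ := TensorProduct.mk_surjective R I0 (ResidueField R) Ideal.Quotient.mk_surjective t
    change TensorProduct.tmul R (1 : ResidueField R) (f z) = 0 at ht
    change TensorProduct.tmul R (1 : ResidueField R) z = 0
    rw [tens_zero_iff] at ht ⊢
    let b := Module.Free.chooseBasis R I0
    rw [← b.sum_repr z]
    refine Submodule.sum_mem _ fun i _ => Submodule.smul_mem_smul ?_ trivial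
    by_contra hu
    obtain ⟨ψ, hψ⟩ := ev_extend hs (hev 0) ((LinearMap.toSpanSingleton R N y) ∘ₗ b.coord i)
    have h1 : ψ (f z) = b.repr z i • y := LinearMap.congr_fun hψ z
    have h2 : ψ (f z) ∈ maximalIdeal R • (⊤ : Submodule R N) := by
      have := Submodule.mem_map_of_mem (f := ψ) ht
      rw [Submodule.map_smul''] at this
      exact Submodule.smul_mono le_rfl le_top this
    rw [h1] at h2
    have hu' : IsUnit (b.repr z i) := by
      by_contra h; exact hu ((IsLocalRing.mem_maximalIdeal _).mpr h)
    exact hy ((Submodule.smul_mem_iff_of_isUnit _ hu').mp h2)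

theorem tr_of_ev {n a : ℕ} (hn : GorB R n) (ha : ABB R a) {N : Type u} [AddCommGroup N] [Module R N]
    [Module.Finite R N] [Nontrivial N] (M : Type u) [AddCommGroup M] [Module R M] [Module.Finite R M]
    (hev : ∀ i, EV R (i+1) M N) : TR R M := by
  obtain ⟨s, I, X, _, _, _, _, f, g, hs, hI, _, _, hX⟩ := exists_hull hn n M (hn M inferInstance)
  have h1 : ∀ i, s < i → EV R (i+1) X N := by
    intro i hi
    obtain ⟨i, rfl⟩ : ∃ j, i = j + 1 := ⟨i-1, by omega⟩
    exact ev_right hs (hev i) (fr_ev s I hI _ (by omega))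
  have h2 : ∀ i, EV R (i+1) X N := by
    intro i
    refine ab_tr hn ha N (a+1) X hX ⟨s+1, fun i hi => ?_⟩ i (by omega)
    obtain ⟨i, rfl⟩ : ∃ j, i = j + 1 := ⟨i-1, by omega⟩
    exact h1 i (by omega)
  have h3 : ∀ i, EV R (i+1) I N := fun i => ev_mid hs (hev i) (h2 i)
  have := fr_free s I hI h3
  exact tr_left hs tr_proj hX

theorem ev_lift {A B C M : Type u} [AddCommGroup A] [Module R A] [AddCommGroup B] [Module R B]
    [AddCommGroup C] [Module R C] [AddCommGroup M] [Module R M] 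
    {f : A →ₗ[R] B} {g : B →ₗ[R] C} (h : SES f g) (hA : EV R 1 M A)
    (φ : M →ₗ[R] C) : ∃ ψ : M →ₗ[R] B, g ∘ₗ ψ = φ := by
  rw [ev_iff] at hA
  obtain ⟨y, hy⟩ := Abelian.Ext.covariant_sequence_exact₃ _ h.short
    (Abelian.Ext.mk₀ (ModuleCat.ofHom φ)) rfl (hA _)
  obtain ⟨ψ, rfl⟩ := (Abelian.Ext.mk₀_bijective _ _).2 y
  rw [Abelian.Ext.mk₀_comp_mk₀] at hy
  have := (Abelian.Ext.mk₀_bijective _ _).1 hy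
  exact ⟨ψ.hom, congr_arg ModuleCat.Hom.hom this⟩

end Wsec


section Xsec
variable {R : Type u} [CommRing R] [IsNoetherianRing R]

theorem waka_push {K F W X : Type u} [AddCommGroup K] [Module R K] [AddCommGroup F] [Module R F]
    [AddCommGroup W] [Module R W] [AddCommGroup X] [Module R X] {ι : K →ₗ[R] F} {π : F →ₗ[R] W}
    (h : SES ι π) (φ : K →ₗ[R] X) :
    ∃ g : ((X × F) ⧸ LinearMap.range (φ.prod (-ι))) →ₗ[R] W,
      SES ((LinearMap.range (φ.prod (-ι))).mkQ ∘ₗ LinearMap.inl R X F) g := by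
  let g : ((X × F) ⧸ LinearMap.range (φ.prod (-ι))) →ₗ[R] W :=
    (LinearMap.range (φ.prod (-ι))).liftQ (π ∘ₗ LinearMap.snd R X F) (by
      rintro _ ⟨k, rfl⟩
      simp [h.ex.apply_apply_eq_zero])
  have hg : ∀ x w, g ((LinearMap.range (φ.prod (-ι))).mkQ (x, w)) = π w := fun _ _ => rfl
  refine ⟨g, ?_, ?_, ?_⟩
  · rw [injective_iff_map_eq_zero]
    intro x hx
    rw [LinearMap.comp_apply, Submodule.mkQ_apply, Submodule.Quotient.mk_eq_zero] at hx
    obtain ⟨k, hk⟩ := hx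
    have hk1 : φ k = x := congr_arg Prod.fst hk
    have hk2 : ι k = 0 := neg_eq_zero.mp (congr_arg Prod.snd hk)
    have : k = 0 := h.inj (by rw [hk2, map_zero])
    rw [← hk1, this, map_zero]
  · intro t
    constructor
    · intro ht
      obtain ⟨⟨x, w⟩, rfl⟩ := Submodule.mkQ_surjective _ t
      rw [hg] at ht
      obtain ⟨k, rfl⟩ := (h.ex w).mp ht
      refine ⟨x + φ k, ?_⟩
      rw [LinearMap.comp_apply, ← sub_eq_zero, ← map_sub, Submodule.mkQ_apply,
        Submodule.Quotient.mk_eq_zero]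
      exact ⟨k, by simp⟩
    · rintro ⟨x, rfl⟩
      rw [LinearMap.comp_apply]
      exact (hg x 0).trans (map_zero π)
  · intro w
    obtain ⟨v, rfl⟩ := h.surj w
    exact ⟨_, hg 0 v⟩

theorem waka_one {𝒳 : Set (ModuleCat.{u} R)} (h𝒳 : IsResolving R 𝒳) {X M : ModuleCat.{u} R}
    (f : X →ₗ[R] M) (hf : IsRightApprox R 𝒳 f)
    (hmin : ∀ h : X →ₗ[R] X, f ∘ₗ h = f → Function.Bijective h) (W : ModuleCat.{u} R) (hW : W ∈ 𝒳) :
    EV R 1 W (LinearMap.ker f) := by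
  have := h𝒳.finite W hW
  obtain ⟨r, K, π, hS⟩ := exists_syz (R := R) W
  refine ev_one hS fun φ => ?_
  let φ' : K →ₗ[R] X := (LinearMap.ker f).subtype ∘ₗ φ
  obtain ⟨g, hg⟩ := waka_push hS φ'
  have hP : ModuleCat.of R ((X × (Fin r → R)) ⧸ LinearMap.range (φ'.prod (-K.subtype))) ∈ 𝒳 :=
    h𝒳.extClosed X (ModuleCat.of R _) W _ g ⟨hg.inj, hg.ex, hg.surj⟩ hf.1 hW
  obtain ⟨q, hq⟩ := hf.2 _ hP ((LinearMap.range (φ'.prod (-K.subtype))).liftQ (f ∘ₗ LinearMap.fst R _ _) (by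
      rintro _ ⟨k, rfl⟩
      exact (φ k).2))
  let p := (LinearMap.range (φ'.prod (-K.subtype))).mkQ
  have hq' : ∀ x w, f (q (p (x, w))) = f x := fun x w => LinearMap.congr_fun hq (p (x, w))
  let h : X →ₗ[R] X := q ∘ₗ p ∘ₗ LinearMap.inl R _ _
  have hh : f ∘ₗ h = f := by ext x; exact hq' x 0
  let e : X ≃ₗ[R] X := LinearEquiv.ofBijective h (hmin h hh)
  have he : ∀ x, f (e.symm x) = f x := by
    intro x
    have := LinearMap.congr_fun hh (e.symm x)
    rw [← this]
    exact congr_arg f (e.apply_symm_apply x)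
  let ψ : (Fin r → R) →ₗ[R] X := e.symm.toLinearMap ∘ₗ q ∘ₗ p ∘ₗ LinearMap.inr R _ _
  refine ⟨ψ.codRestrict _ fun w => ?_, ?_⟩
  · rw [LinearMap.mem_ker]
    exact (he _).trans ((hq' 0 w).trans (map_zero f))
  · ext k
    change e.symm (q (p (0, k.1))) = φ' k
    rw [LinearEquiv.symm_apply_eq]
    change q (p (0, k.1)) = q (p (φ' k, 0))
    congr 1
    rw [eq_comm, ← sub_eq_zero, ← map_sub]
    refine (Submodule.Quotient.mk_eq_zero _).mpr ⟨k, by simp⟩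

theorem waka {𝒳 : Set (ModuleCat.{u} R)} (h𝒳 : IsResolving R 𝒳) {X M : ModuleCat.{u} R}
    (f : X →ₗ[R] M) (hf : IsRightApprox R 𝒳 f)
    (hmin : ∀ h : X →ₗ[R] X, f ∘ₗ h = f → Function.Bijective h) (i : ℕ) :
    ∀ (W : ModuleCat.{u} R) (_ : W ∈ 𝒳), EV R (i+1) W (LinearMap.ker f) := by
  induction i with
  | zero => exact waka_one h𝒳 f hf hmin
  | succ i ih =>
    intro W hW
    have := h𝒳.finite W hW
    obtain ⟨r, K, π, hS⟩ := exists_syz (R := R) W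
    have hK : ModuleCat.of R K ∈ 𝒳 := h𝒳.kerClosed (ModuleCat.of R K) (ModuleCat.of R (Fin r → R)) W
      K.subtype π ⟨hS.inj, hS.ex, hS.surj⟩
      (h𝒳.freeMem _ (inferInstanceAs (Module.Finite R (Fin r → R)))
        (inferInstanceAs (Module.Free R (Fin r → R)))) hW
    exact ev_right hS (ih _ hK) (ev_proj _)

theorem approx_surj {𝒳 : Set (ModuleCat.{u} R)} (h𝒳 : IsResolving R 𝒳) {X M : ModuleCat.{u} R}
    (f : X →ₗ[R] M) (hf : IsRightApprox R 𝒳 f) : Function.Surjective f := by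
  intro m
  have hR : ModuleCat.of R R ∈ 𝒳 := h𝒳.freeMem _ (inferInstanceAs (Module.Finite R R))
    (inferInstanceAs (Module.Free R R))
  obtain ⟨h, hh⟩ := hf.2 _ hR (LinearMap.toSpanSingleton R M m)
  exact ⟨h (1 : R), (LinearMap.congr_fun hh (1 : R)).trans (one_smul R m)⟩

end Xsec

open scoped Pointwise in
theorem fwd_dir {R : Type u} [CommRing R] [IsNoetherianRing R] [IsLocalRing R] {n : ℕ}
    (hn : GorB R n) (hd : ringKrullDim R = n) (hdim : 0 < ringKrullDim R) {rs : List R}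
    (hlen : rs.length = n) (hmem : ∀ r ∈ rs, r ∈ maximalIdeal R) (hreg : RingTheory.Sequence.IsRegular R rs)
    {𝒳 : Set (ModuleCat.{u} R)} (h𝒳 : IsResolving R 𝒳) (hM : ∀ M ∈ 𝒳, IsMCM R M) :
    ¬ ContravariantlyInfinite R 𝒳 := by
  have hn0 : 0 < n := by rw [hd] at hdim; exact_mod_cast hdim
  obtain ⟨x, hx, hxm⟩ : ∃ x : R, IsSMulRegular R x ∧ x ∈ maximalIdeal R := by
    cases rs with
    | nil => simp at hlen; omega
    | cons x rs =>
      exact ⟨x, ((RingTheory.Sequence.isWeaklyRegular_cons_iff _ _ _).mp hreg.1).1, hmem x (by simp)⟩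
  have hev : ∀ W ∈ 𝒳, EV R 1 W R := by
    intro W hW
    have := h𝒳.finite W hW
    rcases subsingleton_or_nontrivial W with hs | hs
    · exact ev_subsingleton_left 1
    · obtain ⟨ss, h1, h2, h3⟩ := exists_reg ((mcm_iff hd W).mp (hM W hW))
      exact ev_of_reg hn ss h2 W h3.1 1 (by omega)
  have hS := ses_smul hx
  have hR : ModuleCat.of R R ∈ 𝒳 := h𝒳.freeMem _ (inferInstanceAs (Module.Finite R R))
    (inferInstanceAs (Module.Free R R))
  intro hc
  refine hc (ModuleCat.of R (QuotSMulTop x R)) (inferInstanceAs (Module.Finite R (QuotSMulTop x R))) ?_ ?_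
  · intro hmem
    obtain ⟨ψ, hψ⟩ := ev_extend hS (hev _ hmem) LinearMap.id
    have h1 : ψ (x • (1 : R)) = 1 := LinearMap.congr_fun hψ (1 : R)
    rw [map_smul, smul_eq_mul] at h1
    exact (IsLocalRing.mem_maximalIdeal _).mp hxm (IsUnit.of_mul_eq_one _ h1)
  · exact ⟨ModuleCat.of R R, Submodule.mkQ (x • ⊤), hR, fun W hW g => ev_lift hS (hev W hW) g⟩

theorem bwd_dir {R : Type u} [CommRing R] [IsNoetherianRing R] [HenselianLocalRing R] {n a : ℕ}
    (hn : GorB R n) (hd : ringKrullDim R = n) (hk : ∀ i < n, EV R i (ResidueField R) R) (ha : ABB R a)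
    {𝒳 : Set (ModuleCat.{u} R)} (h𝒳 : IsResolving R 𝒳) (hc : ¬ ContravariantlyInfinite R 𝒳) :
    ∀ M ∈ 𝒳, IsMCM R M := by
  unfold ContravariantlyInfinite at hc
  push Not at hc
  obtain ⟨M, hMf, hM, happ⟩ := hc
  obtain ⟨X, f, hf, hmin⟩ := exists_min_approx h𝒳 happ
  have hXf := h𝒳.finite X hf.1
  have hsurj := approx_surj h𝒳 f hf
  have hnt : Nontrivial (LinearMap.ker f) := by
    rw [← not_subsingleton_iff_nontrivial]
    intro hs
    have hinj : Function.Injective f := by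
      rw [← LinearMap.ker_eq_bot]
      exact Submodule.subsingleton_iff_eq_bot.mp hs
    exact hM (h𝒳.isoClosed hf.1 (LinearEquiv.ofBijective f ⟨hinj, hsurj⟩))
  intro W hW
  have := h𝒳.finite W hW
  have htr : TR R W := tr_of_ev hn ha (N := LinearMap.ker f) W (fun i => waka h𝒳 f hf hmin i W hW)
  rw [mcm_iff hd]
  exact fun i hi => tr_ev_low hn hk i hi W htr

theorem main_thm (R : Type u) [CommRing R] [IsNoetherianRing R] [IsLocalRing R]
    [HenselianLocalRing R] (hAB : IsABRing R) (hdim : 0 < ringKrullDim R)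
    (𝒳 : Set (ModuleCat.{u} R)) (h𝒳 : IsResolving R 𝒳) :
    (∀ M ∈ 𝒳, IsMCM R M) ↔ ¬ ContravariantlyInfinite R 𝒳 := by
  obtain ⟨hG, a, ha⟩ := hAB
  obtain ⟨n, hn, hd, hk, rs, hlen, hmem, hreg⟩ := gor_struct hG
  have ha' : ABB R a := by
    intro M N _ _ _ _ hM hN ⟨m, hm⟩ i hi
    exact (bridge _ _ _).mp (ha (ModuleCat.of R M) (ModuleCat.of R N) hM hN
      ⟨m, fun i hi => (bridge _ _ _).mpr (hm i hi)⟩ i hi)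
  exact ⟨fwd_dir hn hd hdim hlen hmem hreg h𝒳, bwd_dir hn hd hk ha' h𝒳⟩


/-- Over a henselian Gorenstein local AB ring of positive dimension,
a resolving subcategory consists of maximal Cohen–Macaulay modules if and only if it is
not contravariantly infinite. -/
theorem stmt3 (R : Type u) [CommRing R] [IsNoetherianRing R] [IsLocalRing R]
    [HenselianLocalRing R] (hAB : IsABRing R) (hdim : 0 < ringKrullDim R)
    (𝒳 : Set (ModuleCat.{u} R)) (h𝒳 : IsResolving R 𝒳) :
    (∀ M ∈ 𝒳, IsMCM R M) ↔ ¬ ContravariantlyInfinite R 𝒳 := by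
  exact main_thm R hAB hdim 𝒳 h𝒳
end

section
/- Let R be an Artinian Noetherian local ring which is a complete intersection of codimension c = dim_k(𝔪/𝔪²), and assume c ≥ 2. Let ℰ be the class of finitely generated R-modules whose complexity is strictly less than c (ℰ is a resolving subcategory). Then ℰ is contravariantly infinite: no finitely generated R-module outside ℰ admits a right ℰ-approximation. -/
open CategoryTheory IsLocalRing

universe u

/-- The `i`-th Betti number of `M` equals `b`, i.e. `Ext^i(M, k) ≅ k^b`. -/
def BettiEq (R : Type u) [CommRing R] [IsLocalRing R] (M : ModuleCat.{u} R) (i b : ℕ) : Prop :=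
  Nonempty ((ExtMod R i M (ModuleCat.of R (ResidueField R))) ≃ₗ[R]
    (Fin b → ResidueField R))

/-- The complexity of `M` is at most `n`: there are `α : ℝ` and `N : ℕ` with
`βᵢ(M) ≤ α · i^(n-1)` for all `i ≥ N`. -/
def HasComplexityLE (R : Type u) [CommRing R] [IsLocalRing R]
    (M : ModuleCat.{u} R) (n : ℕ) : Prop :=
  ∃ α : ℝ, ∃ N : ℕ, ∀ i, N ≤ i → ∃ b : ℕ,
    BettiEq R M i b ∧ (b : ℝ) ≤ α * (i : ℝ) ^ ((n : ℤ) - 1)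

/-- The complexity of `M`: the least `n` bounding the growth of the Betti numbers. -/
noncomputable def complexity (R : Type u) [CommRing R] [IsLocalRing R]
    (M : ModuleCat.{u} R) : ℕ∞ :=
  sInf ((fun n : ℕ => (n : ℕ∞)) '' {n : ℕ | HasComplexityLE R M n})

namespace CIx

/-- minimal number of generators -/
noncomputable def mu (R : Type u) [CommRing R] (M : Type u) [AddCommGroup M] [Module R M] : ℕ :=
  sInf {n : ℕ | ∃ p : (Fin n → R) →ₗ[R] M, Function.Surjective p}

open Classical in
/-- minimal free cover -/
noncomputable def cover (R : Type u) [CommRing R] (M : Type u) [AddCommGroup M] [Module R M] :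
    (Fin (mu R M) → R) →ₗ[R] M :=
  if h : ∃ p : (Fin (mu R M) → R) →ₗ[R] M, Function.Surjective p then h.choose else 0

/-- first syzygy -/
abbrev Syz (R : Type u) [CommRing R] (M : Type u) [AddCommGroup M] [Module R M] : Type u :=
  LinearMap.ker (cover R M)

/-- Betti numbers -/
noncomputable def bet (R : Type u) [CommRing R] :
    ℕ → (M : Type u) → [AddCommGroup M] → [Module R M] → ℕ
  | 0, M, _, _ => mu R M
  | i + 1, M, _, _ => bet R i (Syz R M)

/-- retract -/
def Ret (R : Type u) [CommRing R] (A B : Type u) [AddCommGroup A] [Module R A]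
    [AddCommGroup B] [Module R B] : Prop :=
  ∃ (i : A →ₗ[R] B) (r : B →ₗ[R] A), ∀ a, r (i a) = a

section
variable {R : Type u} [CommRing R]
variable {M A B C K P : Type u} [AddCommGroup M] [Module R M] [AddCommGroup A] [Module R A]
  [AddCommGroup B] [Module R B] [AddCommGroup C] [Module R C] [AddCommGroup K] [Module R K]
  [AddCommGroup P] [Module R P]

theorem cover_surj [Module.Finite R M] : Function.Surjective (cover R M) := by
  have h : ∃ p : (Fin (mu R M) → R) →ₗ[R] M, Function.Surjective p := by
    have : mu R M ∈ {n : ℕ | ∃ p : (Fin n → R) →ₗ[R] M, Function.Surjective p} :=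
      Nat.sInf_mem (Module.Finite.exists_fin' R M)
    exact this
  rw [cover, dif_pos h]
  exact h.choose_spec

theorem mu_le {n : ℕ} (p : (Fin n → R) →ₗ[R] M) (hp : Function.Surjective p) : mu R M ≤ n :=
  Nat.sInf_le ⟨p, hp⟩

theorem mu_le_of_surj [Module.Finite R A] (f : A →ₗ[R] B) (hf : Function.Surjective f) :
    mu R B ≤ mu R A :=
  mu_le (f ∘ₗ cover R A) (hf.comp cover_surj)

theorem Ret.refl : Ret R A A := ⟨LinearMap.id, LinearMap.id, fun _ => rfl⟩

theorem Ret.of_equiv (e : A ≃ₗ[R] B) : Ret R A B := ⟨e, e.symm, fun a => by simp⟩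

theorem Ret.trans (h : Ret R A B) (h' : Ret R B C) : Ret R A C := by
  obtain ⟨i, r, h⟩ := h
  obtain ⟨j, s, h'⟩ := h'
  exact ⟨j ∘ₗ i, r ∘ₗ s, fun a => by simp [h, h']⟩

theorem Ret.fst : Ret R A (A × B) := ⟨LinearMap.inl R A B, LinearMap.fst R A B, fun _ => rfl⟩

theorem Ret.finite (h : Ret R A B) [Module.Finite R B] : Module.Finite R A := by
  obtain ⟨i, r, h⟩ := h
  exact Module.Finite.of_surjective r (fun a => ⟨i a, h a⟩)

theorem mu_eq_zero [Module.Finite R M] (h : mu R M = 0) : Subsingleton M := by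
  have h1 := cover_surj (R := R) (M := M)
  have : IsEmpty (Fin (mu R M)) := by rw [h]; infer_instance
  exact h1.subsingleton

theorem mu_zero [Subsingleton M] : mu R M = 0 := by
  have : mu R M ≤ 0 := mu_le 0 (fun x => ⟨0, Subsingleton.elim _ _⟩)
  omega

theorem bet_zero_module (i : ℕ) : ∀ (M : Type u) [AddCommGroup M] [Module R M],
    Subsingleton M → bet R i M = 0 := by
  induction i with
  | zero => intro M _ _ h; exact mu_zero
  | succ i ih =>
    intro M _ _ h
    refine ih (Syz R M) ?_
    have : IsEmpty (Fin (mu R M)) := by rw [mu_zero (R := R) (M := M)]; infer_instance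
    exact ⟨fun a b => Subtype.ext (Subsingleton.elim _ _)⟩

end

section loc
variable {R : Type u} [CommRing R] [IsLocalRing R]
variable {M A B C K P : Type u} [AddCommGroup M] [Module R M] [AddCommGroup A] [Module R A]
  [AddCommGroup B] [Module R B] [AddCommGroup C] [Module R C] [AddCommGroup K] [Module R K]
  [AddCommGroup P] [Module R P]

theorem ker_cover_le [Module.Finite R M] (x : Fin (mu R M) → R) (hx : cover R M x = 0) (j) :
    x j ∈ maximalIdeal R := by
  by_contra hj
  rw [mem_maximalIdeal, mem_nonunits_iff, not_not] at hj
  obtain ⟨u, hu⟩ := hj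
  obtain ⟨n, hn⟩ : ∃ n, mu R M = n + 1 := by
    have := j.2
    exact ⟨mu R M - 1, by omega⟩
  have key : ∀ (m : ℕ) (hm : m = n + 1) (p : (Fin m → R) →ₗ[R] M), Function.Surjective p →
      ∀ (x : Fin m → R) (j : Fin m), p x = 0 → x j = u → mu R M ≤ n := by
    intro m hm
    subst hm
    intro p hp x j hpx hxj
    refine mu_le (p ∘ₗ LinearMap.pi (fun i => if h : ∃ k, j.succAbove k = i then
      LinearMap.proj h.choose else 0)) ?_
    intro y
    obtain ⟨z, rfl⟩ := hp y
    refine ⟨fun k => (z - (z j * (↑u⁻¹ : R)) • x) (j.succAbove k), ?_⟩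
    have : LinearMap.pi (R := R) (fun i => if h : ∃ k, j.succAbove k = i then
      (LinearMap.proj h.choose : (Fin n → R) →ₗ[R] R) else 0)
      (fun k => (z - (z j * (↑u⁻¹ : R)) • x) (j.succAbove k)) = z - (z j * (↑u⁻¹ : R)) • x := by
      ext i
      rw [LinearMap.pi_apply]
      by_cases h : ∃ k, j.succAbove k = i
      · rw [dif_pos h, LinearMap.proj_apply, h.choose_spec]
      · rw [dif_neg h]
        have : i = j := by
          by_contra hij
          exact h (Fin.exists_succAbove_eq hij)
        subst this
        simp [hxj, mul_assoc]
    rw [LinearMap.comp_apply, this, map_sub, map_smul, hpx]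
    simp
  have := key _ hn (cover R M) cover_surj x j hx hu.symm
  omega

theorem mem_smul_top_of {n : ℕ} (x : Fin n → R) (hx : ∀ j, x j ∈ maximalIdeal R) :
    x ∈ maximalIdeal R • (⊤ : Submodule R (Fin n → R)) := by
  have : x = ∑ j, x j • (Pi.single j (1 : R) : Fin n → R) := by
    ext k
    simp [Finset.sum_apply, Pi.single_apply]
  rw [this]
  exact Submodule.sum_mem _ (fun j _ => Submodule.smul_mem_smul (hx j) trivial)

theorem cover_auto [Module.Finite R M] (φ : (Fin (mu R M) → R) →ₗ[R] (Fin (mu R M) → R))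
    (h : ∀ x, cover R M (φ x) = cover R M x) : Function.Bijective φ := by
  have hs : Function.Surjective φ := by
    rw [← LinearMap.range_eq_top]
    rw [eq_top_iff]
    refine Submodule.le_of_le_smul_of_le_jacobson_bot (I := maximalIdeal R)
      Module.Finite.fg_top (IsLocalRing.maximalIdeal_le_jacobson ⊥) ?_
    intro x _
    have hx : x = φ x + (x - φ x) := by abel
    rw [hx]
    refine Submodule.add_mem_sup ⟨x, rfl⟩ (mem_smul_top_of _ ?_)
    exact ker_cover_le _ (by rw [map_sub, h, sub_self])
  exact OrzechProperty.bijective_of_surjective_endomorphism φ hs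

theorem syz_ret [Module.Finite R A] (h : Ret R A B) [Module.Projective R P] (q : P →ₗ[R] B)
    (hq : Function.Surjective q) : Ret R (Syz R A) (LinearMap.ker q) := by
  obtain ⟨i, r, hir⟩ := h
  obtain ⟨a, ha⟩ := Module.projective_lifting_property q (i ∘ₗ cover R A) hq
  obtain ⟨b, hb⟩ := Module.projective_lifting_property (cover R A) (r ∘ₗ q) cover_surj
  have ha' : ∀ x, q (a x) = i (cover R A x) := fun x => LinearMap.congr_fun ha x
  have hb' : ∀ x, cover R A (b x) = r (q x) := fun x => LinearMap.congr_fun hb x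
  have hφ := cover_auto (b ∘ₗ a) (fun x => by simp [ha', hb', hir])
  let e := LinearEquiv.ofBijective (b ∘ₗ a) hφ
  have he : ∀ x, cover R A (e.symm x) = cover R A x := by
    intro x
    obtain ⟨y, rfl⟩ := e.surjective x
    rw [e.symm_apply_apply]
    change _ = cover R A (b (a y))
    simp [ha', hb', hir]
  refine ⟨a.restrict (p := LinearMap.ker (cover R A)) (q := LinearMap.ker q) ?_,
    (e.symm.toLinearMap ∘ₗ b).restrict (p := LinearMap.ker q)
      (q := LinearMap.ker (cover R A)) ?_, ?_⟩
  · intro x hx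
    rw [LinearMap.mem_ker] at hx ⊢
    rw [ha', hx, map_zero]
  · intro x hx
    rw [LinearMap.mem_ker] at hx ⊢
    simp [he, hb', hx]
  · intro x
    ext1
    change e.symm (b (a x)) = x
    exact e.symm_apply_apply x.1

variable [IsNoetherianRing R]

theorem bet_ret (i : ℕ) : ∀ (A B : Type u) [AddCommGroup A] [Module R A] [AddCommGroup B]
    [Module R B] [Module.Finite R B], Ret R A B → bet R i A ≤ bet R i B := by
  induction i with
  | zero =>
    intro A B _ _ _ _ _ h
    obtain ⟨i, r, h⟩ := h
    exact mu_le_of_surj r (fun a => ⟨i a, h a⟩)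
  | succ i ih =>
    intro A B _ _ _ _ _ h
    have := h.finite
    exact ih (Syz R A) (Syz R B) (syz_ret h (cover R B) cover_surj)

theorem bet_equiv (i : ℕ) [Module.Finite R A] [Module.Finite R B] (e : A ≃ₗ[R] B) :
    bet R i A = bet R i B :=
  le_antisymm (bet_ret i _ _ (Ret.of_equiv e)) (bet_ret i _ _ (Ret.of_equiv e.symm))

theorem bet_free (i : ℕ) [Module.Finite R P] [Module.Projective R P] : bet R (i + 1) P = 0 := by
  have h := syz_ret (Ret.refl (R := R) (A := P)) (LinearMap.id : P →ₗ[R] P) (fun x => ⟨x, rfl⟩)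
  have h1 := bet_ret (R := R) i _ _ h
  have : Subsingleton (LinearMap.ker (LinearMap.id : P →ₗ[R] P)) := by
    rw [LinearMap.ker_id]; infer_instance
  rw [bet_zero_module i _ this] at h1
  change bet R i (Syz R P) = 0
  omega

theorem bet_prod_free (i : ℕ) [Module.Finite R A] [Module.Finite R P] [Module.Projective R P] :
    bet R (i + 1) (A × P) ≤ bet R (i + 1) A := by
  have h := syz_ret (Ret.refl (R := R) (A := A × P))
    ((cover R A).prodMap (LinearMap.id : P →ₗ[R] P))
    (cover_surj.prodMap (fun x => ⟨x, rfl⟩))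
  have h2 : Ret R (LinearMap.ker ((cover R A).prodMap (LinearMap.id : P →ₗ[R] P))) (Syz R A) := by
    refine ⟨(LinearMap.fst R _ _).restrict ?_, (LinearMap.inl R _ _).restrict ?_, ?_⟩
    · rintro ⟨x, y⟩ hx
      simp at hx
      simp [hx]
    · intro x hx
      simpa using hx
    · rintro ⟨⟨x, y⟩, hx⟩
      have hx' := hx
      simp at hx'
      ext1
      change (x, (0 : P)) = (x, y)
      rw [hx'.2]
  exact bet_ret i _ _ (h.trans h2)

theorem bet_syz_le (i : ℕ) [Module.Finite R M] [Module.Projective R P] [Module.Finite R P]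
    (q : P →ₗ[R] M) (hq : Function.Surjective q) :
    bet R (i + 1) M ≤ bet R i (LinearMap.ker q) :=
  bet_ret i _ _ (syz_ret (Ret.refl (R := R) (A := M)) q hq)

theorem bet_ker_le (i : ℕ) [Module.Finite R M] [Module.Projective R P] [Module.Finite R P]
    (q : P →ₗ[R] M) (hq : Function.Surjective q) :
    bet R (i + 1) (LinearMap.ker q) ≤ bet R (i + 2) M := by
  obtain ⟨a, ha⟩ := Module.projective_lifting_property q (cover R M) hq
  obtain ⟨b, hb⟩ := Module.projective_lifting_property (cover R M) q cover_surj
  have ha' : ∀ x, q (a x) = cover R M x := fun x => LinearMap.congr_fun ha x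
  have hb' : ∀ x, cover R M (b x) = q x := fun x => LinearMap.congr_fun hb x
  have hr : Ret R (LinearMap.ker q) (Syz R M × P) := by
    let i1 : LinearMap.ker q →ₗ[R] Syz R M := b.restrict (by
      intro x hx
      rw [LinearMap.mem_ker] at hx ⊢
      rw [hb', hx])
    let r1 : Syz R M →ₗ[R] LinearMap.ker q := a.restrict (by
      intro x hx
      rw [LinearMap.mem_ker] at hx ⊢
      rw [ha', hx])
    let r2 : P →ₗ[R] LinearMap.ker q := (LinearMap.id - a ∘ₗ b).codRestrict _ (by
      intro x
      simp [ha', hb'])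
    refine ⟨i1.prod (LinearMap.ker q).subtype, r1.coprod r2, ?_⟩
    intro x
    ext1
    change a (b x) + (x - a (b x)) = x
    abel
  exact (bet_ret (i + 1) _ _ hr).trans (bet_prod_free i)

theorem bet_mid (i : ℕ) : ∀ (A B C : Type u) [AddCommGroup A] [Module R A] [AddCommGroup B]
    [Module R B] [AddCommGroup C] [Module R C] [Module.Finite R A] [Module.Finite R B]
    [Module.Finite R C] (f : A →ₗ[R] B) (g : B →ₗ[R] C), Function.Injective f →
    Function.Exact f g → Function.Surjective g → bet R i B ≤ bet R i A + bet R i C := by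
  induction i with
  | zero =>
    intro A B C _ _ _ _ _ _ _ _ _ f g hf hfg hg
    obtain ⟨l, hl⟩ := Module.projective_lifting_property g (cover R C) hg
    have hl' : ∀ x, g (l x) = cover R C x := fun x => LinearMap.congr_fun hl x
    let e : (Fin (mu R A + mu R C) → R) ≃ₗ[R] (Fin (mu R A) → R) × (Fin (mu R C) → R) :=
      (LinearEquiv.funCongrLeft R R finSumFinEquiv).trans (LinearEquiv.sumArrowLequivProdArrow _ _ R R)
    refine mu_le (((f ∘ₗ cover R A).coprod l) ∘ₗ e.toLinearMap) ?_
    refine Function.Surjective.comp (g := ((f ∘ₗ cover R A).coprod l)) ?_ e.surjective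
    intro y
    obtain ⟨z, hz⟩ := cover_surj (R := R) (g y)
    obtain ⟨a, ha⟩ := (hfg (y - l z)).1 (by rw [map_sub, hl', hz, sub_self])
    obtain ⟨x, rfl⟩ := cover_surj (R := R) a
    exact ⟨(x, z), by simp [ha]⟩
  | succ i ih =>
    intro A B C _ _ _ _ _ _ _ _ _ f g hf hfg hg
    obtain ⟨l, hl⟩ := Module.projective_lifting_property g (cover R C) hg
    have hl' : ∀ x, g (l x) = cover R C x := fun x => LinearMap.congr_fun hl x
    have hgf : ∀ x, g (f x) = 0 := fun x => (hfg _).2 ⟨x, rfl⟩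
    have hs : Function.Surjective ((f ∘ₗ cover R A).coprod l) := by
      intro y
      obtain ⟨z, hz⟩ := cover_surj (R := R) (g y)
      obtain ⟨a, ha⟩ := (hfg (y - l z)).1 (by rw [map_sub, hl', hz, sub_self])
      obtain ⟨x, rfl⟩ := cover_surj (R := R) a
      exact ⟨(x, z), by simp [ha]⟩
    refine (bet_syz_le i _ hs).trans ?_
    refine ih (Syz R A) _ (Syz R C) ((LinearMap.inl R _ _).restrict ?_)
      ((LinearMap.snd R _ _).restrict ?_) ?_ ?_ ?_
    · intro x hx
      rw [LinearMap.mem_ker] at hx ⊢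
      simp [hx]
    · rintro ⟨x, y⟩ hx
      rw [LinearMap.mem_ker] at hx ⊢
      have := congrArg g hx
      simpa [hgf, hl'] using this
    · intro x y hxy
      have := congrArg (fun z => z.1.1) hxy
      exact Subtype.ext this
    · rintro ⟨⟨x, y⟩, hx⟩
      constructor
      · intro h
        have hy : y = 0 := congrArg Subtype.val h
        subst hy
        refine ⟨⟨x, ?_⟩, rfl⟩
        rw [LinearMap.mem_ker] at hx ⊢
        apply hf
        simpa using hx
      · rintro ⟨z, hz⟩
        have := congrArg (fun z => z.1.2) hz
        exact Subtype.ext this.symm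
    · rintro ⟨y, hy⟩
      rw [LinearMap.mem_ker] at hy
      obtain ⟨a, ha⟩ := (hfg (- l y)).1 (by rw [map_neg, hl', hy, neg_zero])
      obtain ⟨x, rfl⟩ := cover_surj (R := R) a
      exact ⟨⟨(x, y), by simp [ha]⟩, rfl⟩

theorem bet_left (i : ℕ) [Module.Finite R A] [Module.Finite R B] [Module.Finite R C]
    (f : A →ₗ[R] B) (g : B →ₗ[R] C) (hf : Function.Injective f)
    (hfg : Function.Exact f g) (hg : Function.Surjective g) :
    bet R i A ≤ bet R (i + 1) C + bet R i B := by
  obtain ⟨l, hl⟩ := Module.projective_lifting_property g (cover R C) hg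
  have hl' : ∀ x, g (l x) = cover R C x := fun x => LinearMap.congr_fun hl x
  have hgf : ∀ x, g (f x) = 0 := fun x => (hfg _).2 ⟨x, rfl⟩
  have hk : ∀ x : Syz R C, ∃ a, f a = - l x := by
    rintro ⟨x, hx⟩
    exact (hfg (- l x)).1 (by rw [map_neg, hl', hx, neg_zero])
  choose t ht using hk
  let T : Syz R C →ₗ[R] A :=
    { toFun := t
      map_add' := fun x y => hf (by rw [ht, map_add, ht, ht]; simp; abel)
      map_smul' := fun r x => hf (by rw [ht, RingHom.id_apply, map_smul, ht]; simp) }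
  have hT : ∀ x, f (T x) = - l x := ht
  refine (bet_ret i _ _ (Ret.fst (R := R) (A := A) (B := Fin (mu R C) → R))).trans ?_
  refine bet_mid i (Syz R C) _ B (T.prod (LinearMap.ker (cover R C)).subtype) (f.coprod l)
    ?_ ?_ ?_
  · intro x y hxy
    exact Subtype.ext (congrArg Prod.snd hxy)
  · rintro ⟨a, x⟩
    constructor
    · intro h
      have h' : f a + l x = 0 := by simpa using h
      have h2 := congrArg g h'
      rw [map_add, hgf, hl', zero_add, map_zero] at h2
      refine ⟨⟨x, h2⟩, ?_⟩
      refine Prod.ext (hf ?_) rfl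
      change f (T ⟨x, h2⟩) = f a
      rw [hT]
      exact (eq_neg_of_add_eq_zero_left h').symm
    · rintro ⟨y, hy⟩
      rw [← hy]
      change f (T y) + l y = 0
      rw [hT]; simp
  · intro y
    obtain ⟨z, hz⟩ := cover_surj (R := R) (g y)
    obtain ⟨a, ha⟩ := (hfg (y - l z)).1 (by rw [map_sub, hl', hz, sub_self])
    exact ⟨(a, z), by simp [ha]⟩

theorem bet_right (i : ℕ) [Module.Finite R A] [Module.Finite R B] [Module.Finite R C]
    (f : A →ₗ[R] B) (g : B →ₗ[R] C) (hf : Function.Injective f)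
    (hfg : Function.Exact f g) (hg : Function.Surjective g) :
    bet R (i + 1) C ≤ bet R i A + bet R (i + 1) B := by
  have hs : Function.Surjective (g ∘ₗ cover R B) := hg.comp cover_surj
  refine (bet_syz_le i _ hs).trans ?_
  have hgf : ∀ x, g (f x) = 0 := fun x => (hfg _).2 ⟨x, rfl⟩
  have hk : ∀ x : LinearMap.ker (g ∘ₗ cover R B), ∃ a, f a = cover R B x := by
    rintro ⟨x, hx⟩
    exact (hfg _).1 hx
  choose t ht using hk
  let T : LinearMap.ker (g ∘ₗ cover R B) →ₗ[R] A :=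
    { toFun := t
      map_add' := fun x y => hf (by rw [ht, map_add, ht, ht]; simp)
      map_smul' := fun r x => hf (by rw [ht, RingHom.id_apply, map_smul, ht]; simp) }
  have hT : ∀ x, f (T x) = cover R B x := ht
  rw [add_comm]
  refine bet_mid i (Syz R B) _ A (LinearMap.id.restrict (q := LinearMap.ker (g ∘ₗ cover R B)) ?_)
    T ?_ ?_ ?_
  · intro x hx
    rw [LinearMap.mem_ker] at hx ⊢
    simp [hx]
  · intro x y hxy
    have h : x.1 = y.1 :=
      congrArg (fun z : ↥(LinearMap.ker (g ∘ₗ cover R B)) => z.1) hxy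
    exact Subtype.ext h
  · intro x
    constructor
    · intro h
      refine ⟨⟨x.1, ?_⟩, rfl⟩
      rw [LinearMap.mem_ker, ← hT, h, map_zero]
    · rintro ⟨y, rfl⟩
      apply hf
      refine (hT _).trans (Eq.trans ?_ (map_zero f).symm)
      exact y.2
  · intro a
    obtain ⟨x, hx⟩ := cover_surj (R := R) (f a)
    refine ⟨⟨x, ?_⟩, hf ?_⟩
    · rw [LinearMap.mem_ker, LinearMap.comp_apply, hx, hgf]
    · rw [hT, hx]

end loc
end CIx

namespace CIx
set_option linter.unusedSectionVars false

theorem desc {S X Y Z : Type u} [CommRing S] [AddCommGroup X] [Module S X] [AddCommGroup Y]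
    [Module S Y] [AddCommGroup Z] [Module S Z] (u : X →ₗ[S] Y) (hu : Function.Surjective u)
    (φ : X →ₗ[S] Z) (h : ∀ x, u x = 0 → φ x = 0) : ∃ ψ : Y →ₗ[S] Z, ∀ x, ψ (u x) = φ x := by
  refine ⟨((LinearMap.ker u).liftQ φ h) ∘ₗ (u.quotKerEquivOfSurjective hu).symm.toLinearMap, ?_⟩
  intro x
  have : (u.quotKerEquivOfSurjective hu).symm (u x) = Submodule.Quotient.mk x := by
    rw [LinearEquiv.symm_apply_eq]
    rfl
  rw [LinearMap.comp_apply, LinearEquiv.coe_coe, this]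
  rfl

/-- `R = S / (f)` with `f` a nonzerodivisor. -/
structure Hyp (S R : Type u) [CommRing S] [CommRing R] [Algebra S R] (f : S) : Prop where
  surj : Function.Surjective (algebraMap S R)
  ker : ∀ s, algebraMap S R s = 0 ↔ ∃ t, s = f * t
  reg : ∀ s, f * s = 0 → s = 0

section
variable {S R : Type u} [CommRing S] [CommRing R] [Algebra S R] {f : S}

/-- coordinatewise reduction -/
def red (S R : Type u) [CommRing S] [CommRing R] [Algebra S R] (m : ℕ) :
    (Fin m → S) →ₗ[S] (Fin m → R) :=
  LinearMap.pi (fun j => (Algebra.linearMap S R) ∘ₗ LinearMap.proj j)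

theorem red_apply {m : ℕ} (x : Fin m → S) (j) : red S R m x j = algebraMap S R (x j) := rfl

theorem red_surj (H : Hyp S R f) (m : ℕ) : Function.Surjective (red S R m) := by
  intro y
  choose x hx using fun j => H.surj (y j)
  exact ⟨x, funext hx⟩

theorem red_ker (H : Hyp S R f) {m : ℕ} (x : Fin m → S) :
    red S R m x = 0 ↔ ∃ z, x = f • z := by
  constructor
  · intro h
    choose z hz using fun j => (H.ker (x j)).1 (congrFun h j)
    exact ⟨z, funext hz⟩
  · rintro ⟨z, rfl⟩
    ext j
    exact (H.ker _).2 ⟨z j, rfl⟩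

theorem reg_pi (H : Hyp S R f) {m : ℕ} (x : Fin m → S) (hx : f • x = 0) : x = 0 :=
  funext fun j => H.reg _ (congrFun hx j)

theorem smul_zero_of_R (H : Hyp S R f) {N : Type u} [AddCommGroup N] [Module S N] [Module R N]
    [IsScalarTower S R N] (n : N) : f • n = 0 := by
  rw [← algebraMap_smul R f n, (H.ker f).2 ⟨1, by simp⟩, zero_smul]

theorem exists_lin {m : ℕ} {E : Type u} [AddCommGroup E] [Module S E] [Module R E]
    [IsScalarTower S R E] (φ : (Fin m → S) →ₗ[S] E) :
    ∃ ψ : (Fin m → R) →ₗ[R] E, ∀ x, ψ (red S R m x) = φ x := by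
  refine ⟨Fintype.linearCombination R (fun j => φ (Pi.single j 1)), ?_⟩
  intro x
  have : x = ∑ j, x j • (Pi.single j (1 : S) : Fin m → S) := by
    ext k
    simp [Finset.sum_apply, Pi.single_apply]
  conv_rhs => rw [this]
  rw [map_sum, Fintype.linearCombination_apply]
  simp [red_apply]

theorem exists_E (H : Hyp S R f) (G : Type u) [AddCommGroup G] [Module S G] [Module.Finite S G] :
    ∃ (E : Type u) (_ : AddCommGroup E) (_ : Module S E) (_ : Module R E)
      (_ : IsScalarTower S R E) (_ : Module.Finite R E) (q : G →ₗ[S] E), Function.Surjective q ∧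
      ∀ g, q g = 0 ↔ ∃ h, g = f • h := by
  refine ⟨TensorProduct S R G, inferInstance, inferInstance, inferInstance, inferInstance,
    inferInstance, TensorProduct.mk S R G 1, ?_, ?_⟩
  · intro z
    induction z with
    | zero => exact ⟨0, map_zero _⟩
    | tmul r g =>
      obtain ⟨s, rfl⟩ := H.surj r
      refine ⟨s • g, ?_⟩
      rw [TensorProduct.mk_apply, TensorProduct.tmul_smul, TensorProduct.smul_tmul',
        Algebra.smul_def, mul_one]
    | add x y hx hy =>
      obtain ⟨a, rfl⟩ := hx
      obtain ⟨b, rfl⟩ := hy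
      exact ⟨a + b, map_add _ _ _⟩
  · intro g
    constructor
    · intro h
      have hex : Function.Exact (f • (LinearMap.id : S →ₗ[S] S)) (Algebra.linearMap S R) := by
        intro s
        rw [Algebra.linearMap_apply, H.ker]
        exact ⟨fun ⟨t, ht⟩ => ⟨t, by simp [ht]⟩, fun ⟨t, ht⟩ => ⟨t, by simp [← ht]⟩⟩
      have h2 := rTensor_exact G hex (by exact H.surj)
      obtain ⟨z, hz⟩ := (h2 (1 ⊗ₜ[S] g)).1 (by
        rw [LinearMap.rTensor_tmul, Algebra.linearMap_apply, map_one]; exact h)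
      refine ⟨TensorProduct.lid S G z, ?_⟩
      have := congrArg (TensorProduct.lid S G) hz
      rw [LinearMap.rTensor_smul] at this
      simpa using this.symm
    · rintro ⟨h, rfl⟩
      rw [map_smul]
      exact smul_zero_of_R (N := TensorProduct S R G) H _

variable [IsLocalRing S] [IsLocalRing R] [IsNoetherianRing S] [IsNoetherianRing R]

theorem bet_quot (H : Hyp S R f) (i : ℕ) : ∀ (G E : Type u) [AddCommGroup G] [Module S G]
    [Module.Finite S G] [AddCommGroup E] [Module S E] [Module R E] [IsScalarTower S R E]
    [Module.Finite R E] (q : G →ₗ[S] E), (∀ g : G, f • g = 0 → g = 0) → Function.Surjective q →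
    (∀ g, q g = 0 ↔ ∃ h, g = f • h) → bet R i E ≤ bet S i G := by
  induction i with
  | zero =>
    intro G E _ _ _ _ _ _ _ _ q hG hq hk
    obtain ⟨ψ, hψ⟩ := exists_lin (R := R) (q ∘ₗ cover S G)
    refine mu_le ψ ?_
    intro y
    obtain ⟨g, rfl⟩ := hq y
    obtain ⟨x, rfl⟩ := cover_surj (R := S) g
    exact ⟨_, hψ x⟩
  | succ i ih =>
    intro G E _ _ _ _ _ _ _ _ q hG hq hk
    obtain ⟨ψ, hψ⟩ := exists_lin (R := R) (q ∘ₗ cover S G)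
    have hs : Function.Surjective ψ := by
      intro y
      obtain ⟨g, rfl⟩ := hq y
      obtain ⟨x, rfl⟩ := cover_surj (R := S) g
      exact ⟨_, hψ x⟩
    refine (bet_syz_le i ψ hs).trans ?_
    let Q : Syz S G →ₗ[S] LinearMap.ker ψ :=
      { toFun := fun x => ⟨red S R _ x.1, by
          rw [LinearMap.mem_ker, hψ, LinearMap.comp_apply, x.2, map_zero]⟩
        map_add' := fun x y => Subtype.ext (map_add (red S R _) x.1 y.1)
        map_smul' := fun r x => Subtype.ext (map_smul (red S R _) r x.1) }
    refine ih (Syz S G) (LinearMap.ker ψ) Q ?_ ?_ ?_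
    · intro g hg
      exact Subtype.ext (reg_pi H _ (congrArg Subtype.val hg))
    · rintro ⟨y, hy⟩
      obtain ⟨x, rfl⟩ := red_surj H _ y
      rw [LinearMap.mem_ker, hψ, LinearMap.comp_apply, hk] at hy
      obtain ⟨h, hh⟩ := hy
      obtain ⟨z, rfl⟩ := cover_surj (R := S) h
      refine ⟨⟨x - f • z, by rw [LinearMap.mem_ker, map_sub, map_smul, hh, sub_self]⟩, ?_⟩
      refine Subtype.ext ?_
      change red S R _ (x - f • z) = _
      rw [map_sub, (red_ker H (f • z)).2 ⟨z, rfl⟩, sub_zero]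
    · rintro ⟨x, hx⟩
      constructor
      · intro h
        obtain ⟨z, rfl⟩ := (red_ker H x).1 (congrArg Subtype.val h)
        refine ⟨⟨z, ?_⟩, rfl⟩
        rw [LinearMap.mem_ker, map_smul] at hx
        exact hG _ hx
      · rintro ⟨h, hh⟩
        exact Subtype.ext ((red_ker H x).2 ⟨h.1, congrArg Subtype.val hh⟩)

theorem fin_S (H : Hyp S R f) : Module.Finite S R :=
  Module.Finite.of_surjective (Algebra.linearMap S R) H.surj

theorem exists_seq (H : Hyp S R f) {N : Type u} [AddCommGroup N] [Module S N] [Module R N]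
    [IsScalarTower S R N] [Module.Finite R N] {m : ℕ} (p : (Fin m → R) →ₗ[R] N)
    (hp : Function.Surjective p) :
    ∃ (E : Type u) (_ : AddCommGroup E) (_ : Module R E) (_ : Module.Finite R E)
      (a : N →ₗ[R] E) (b : E →ₗ[R] LinearMap.ker p), Function.Injective a ∧
      Function.Exact a b ∧ Function.Surjective b ∧ ∀ i, bet R (i + 1) E ≤ bet S (i + 2) N := by
  have := fin_S H
  have : Module.Finite S N := Module.Finite.trans R N
  let π : (Fin m → S) →ₗ[S] N := (p.restrictScalars S) ∘ₗ red S R m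
  have hπ : Function.Surjective π := hp.comp (red_surj H m)
  have hpπ : ∀ x, p (red S R m x) = π x := fun _ => rfl
  obtain ⟨E, _, _, _, _, _, q, hq, hqk⟩ := exists_E H (LinearMap.ker π)
  let α : (Fin m → S) →ₗ[S] LinearMap.ker π := (f • LinearMap.id).codRestrict _ (by
    intro x
    rw [LinearMap.mem_ker, LinearMap.smul_apply, map_smul]
    exact smul_zero_of_R H _)
  have hα : ∀ x, (α x).1 = f • x := fun _ => rfl
  obtain ⟨a, ha⟩ := desc π hπ (q ∘ₗ α) (by
    intro x hx
    rw [LinearMap.comp_apply, hqk]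
    exact ⟨⟨x, hx⟩, rfl⟩)
  let β : LinearMap.ker π →ₗ[S] LinearMap.ker p :=
    { toFun := fun x => ⟨red S R m x.1, x.2⟩
      map_add' := fun x y => Subtype.ext (map_add (red S R _) x.1 y.1)
      map_smul' := fun r x => Subtype.ext (map_smul (red S R _) r x.1) }
  obtain ⟨b, hb⟩ := desc q hq β (by
    intro x hx
    obtain ⟨h, hh⟩ := (hqk x).1 hx
    exact Subtype.ext ((red_ker H _).2 ⟨h.1, congrArg Subtype.val hh⟩))
  have hba : ∀ n, b (a n) = 0 := by
    intro n
    obtain ⟨x, rfl⟩ := hπ n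
    rw [ha, LinearMap.comp_apply, hb]
    exact Subtype.ext ((red_ker H _).2 ⟨x, rfl⟩)
  refine ⟨E, inferInstance, inferInstance, inferInstance,
    LinearMap.extendScalarsOfSurjective H.surj a,
    LinearMap.extendScalarsOfSurjective H.surj b, ?_, ?_, ?_, ?_⟩
  · rw [injective_iff_map_eq_zero]
    intro n hn
    obtain ⟨x, rfl⟩ := hπ n
    have hn' : a (π x) = 0 := hn
    rw [ha, LinearMap.comp_apply, hqk] at hn'
    obtain ⟨h, hh⟩ := hn'
    have h2 : f • x = f • h.1 := congrArg Subtype.val hh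
    have h3 : x - h.1 = 0 := reg_pi H _ (by rw [smul_sub, h2, sub_self])
    rw [sub_eq_zero.1 h3]
    exact h.2
  · intro e
    constructor
    · intro he
      obtain ⟨g, rfl⟩ := hq e
      have he' : b (q g) = 0 := he
      rw [hb] at he'
      obtain ⟨z, hz⟩ := (red_ker H _).1 (congrArg Subtype.val he')
      refine ⟨π z, ?_⟩
      change a (π z) = q g
      rw [ha, LinearMap.comp_apply]
      congr 1
      exact Subtype.ext hz.symm
    · rintro ⟨n, rfl⟩
      exact hba n
  · rintro ⟨y, hy⟩
    obtain ⟨x, rfl⟩ := red_surj H _ y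
    exact ⟨q ⟨x, hy⟩, hb _⟩
  · intro i
    refine le_trans ?_ (bet_ker_le i π hπ)
    refine bet_quot H (i + 1) _ _ q ?_ hq hqk
    intro g hg
    exact Subtype.ext (reg_pi H _ (congrArg Subtype.val hg))

theorem bet_step (H : Hyp S R f) {N : Type u} [AddCommGroup N] [Module S N] [Module R N]
    [IsScalarTower S R N] [Module.Finite R N] (j : ℕ) :
    bet R (j + 2) N ≤ bet R j N + bet S (j + 2) N := by
  obtain ⟨E, _, _, _, a, b, ha, hab, hb, hE⟩ := exists_seq H (cover R N) cover_surj
  exact (bet_right j a b ha hab hb).trans (Nat.add_le_add_left (hE j) _)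

theorem bet_RS (H : Hyp S R f) (j m : ℕ) : bet S (j + 2) (Fin m → R) = 0 := by
  have := fin_S H
  have h1 := bet_syz_le (j + 1) (red S R m) (red_surj H m)
  let e : (Fin m → S) →ₗ[S] LinearMap.ker (red S R m) := (f • LinearMap.id).codRestrict _ (by
    intro x
    exact (red_ker H _).2 ⟨x, rfl⟩)
  have he : Function.Bijective e := by
    constructor
    · rw [injective_iff_map_eq_zero]
      intro x hx
      exact reg_pi H _ (congrArg Subtype.val hx)
    · rintro ⟨y, hy⟩
      obtain ⟨z, rfl⟩ := (red_ker H _).1 hy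
      exact ⟨z, rfl⟩
  rw [← bet_equiv (j + 1) (LinearEquiv.ofBijective e he), bet_free (P := Fin m → S)] at h1
  exact Nat.le_zero.1 h1

theorem bet_vanish (H : Hyp S R f) (m : ℕ) : ∀ (N : Type u) [AddCommGroup N] [Module S N]
    [Module R N] [IsScalarTower S R N] [Module.Finite R N], bet R m N = 0 →
    ∀ i, m + 1 ≤ i → bet S i N = 0 := by
  have := fin_S H
  induction m with
  | zero =>
    intro N _ _ _ _ _ h i _
    exact bet_zero_module i N (mu_eq_zero h)
  | succ m ih =>
    intro N _ _ _ _ _ h i hi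
    have : Module.Finite S N := Module.Finite.trans R N
    have : Module.Finite S (Syz R N) := Module.Finite.trans R _
    obtain ⟨j, rfl⟩ : ∃ j, i = j + 2 := ⟨i - 2, by omega⟩
    have h1 := bet_right (R := S) (j + 1) ((LinearMap.ker (cover R N)).subtype.restrictScalars S)
      ((cover R N).restrictScalars S) (Subtype.val_injective)
      (fun x => ⟨fun h => ⟨⟨x, h⟩, rfl⟩, by rintro ⟨y, rfl⟩; exact y.2⟩) cover_surj
    rw [bet_RS H, ih (Syz R N) h (j + 1) (by omega)] at h1
    exact Nat.le_zero.1 h1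

end
end CIx

namespace CIx
set_option linter.unusedSectionVars false

/-- finitely generated modules whose Betti numbers grow at most like `i ^ e` -/
def InE (R : Type u) [CommRing R] (e : ℕ) (M : Type u) [AddCommGroup M] [Module R M] : Prop :=
  Module.Finite R M ∧ ∃ α : ℕ, ∀ i, bet R i M ≤ α * (i + 1) ^ e

/-- right approximation -/
def Apx {R : Type u} [CommRing R] (e : ℕ) {X M : Type u} [AddCommGroup X] [Module R X]
    [AddCommGroup M] [Module R M] (f : X →ₗ[R] M) : Prop :=
  InE R e X ∧ ∀ (W : Type u) [AddCommGroup W] [Module R W], InE R e W → ∀ g : W →ₗ[R] M,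
    ∃ h : W →ₗ[R] X, ∀ w, f (h w) = g w

section
variable {R : Type u} [CommRing R] [IsLocalRing R] [IsNoetherianRing R] {e : ℕ}
variable {X M A B C Y Z E : Type u} [AddCommGroup M] [Module R M] [AddCommGroup X] [Module R X]
  [AddCommGroup A] [Module R A] [AddCommGroup B] [Module R B] [AddCommGroup C] [Module R C]
  [AddCommGroup Y] [Module R Y] [AddCommGroup Z] [Module R Z] [AddCommGroup E] [Module R E]

theorem InE.ret (h : InE R e B) (hr : Ret R A B) : InE R e A := by
  obtain ⟨h1, α, h2⟩ := h
  exact ⟨hr.finite, α, fun i => (bet_ret i _ _ hr).trans (h2 i)⟩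

theorem InE.mid (hA : InE R e A) (hC : InE R e C) [Module.Finite R B] (f : A →ₗ[R] B)
    (g : B →ₗ[R] C) (hf : Function.Injective f)
    (hfg : Function.Exact f g) (hg : Function.Surjective g) : InE R e B := by
  obtain ⟨h1, α, h2⟩ := hA
  obtain ⟨h3, β, h4⟩ := hC
  refine ⟨inferInstance, α + β, fun i => (bet_mid i _ _ _ f g hf hfg hg).trans ?_⟩
  rw [add_mul]
  exact add_le_add (h2 i) (h4 i)

theorem InE.of_shift [Module.Finite R M] (α : ℕ) (h : ∀ i, bet R (i + 1) M ≤ α * (i + 2) ^ e) :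
    InE R e M := by
  refine ⟨inferInstance, bet R 0 M + α, ?_⟩
  intro i
  cases i with
  | zero => simp
  | succ i =>
    refine (h i).trans ?_
    exact Nat.mul_le_mul_right _ (Nat.le_add_left _ _)

theorem InE.free [Module.Finite R M] [Module.Projective R M] : InE R e M :=
  InE.of_shift 0 (fun i => by rw [bet_free]; simp)

theorem exists_min [IsArtinianRing R] {f : X →ₗ[R] M} (hf : Apx e f) :
    ∃ (X' : Type u) (_ : AddCommGroup X') (_ : Module R X') (f' : X' →ₗ[R] M), Apx e f' ∧
      ∀ k : X' →ₗ[R] X', (∀ x, f' (k x) = f' x) → Function.Bijective k := by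
  have : Module.Finite R X := hf.1.1
  have hne : ({N | ∃ h : X →ₗ[R] X, (∀ x, f (h x) = f x) ∧ LinearMap.range h = N} :
      Set (Submodule R X)).Nonempty := ⟨_, LinearMap.id, fun _ => rfl, rfl⟩
  obtain ⟨N, ⟨h, hh, rfl⟩, hmin⟩ := IsArtinian.set_has_minimal _ hne
  have hmin' : ∀ k : X →ₗ[R] X, (∀ x, f (k x) = f x) → LinearMap.range k ≤ LinearMap.range h →
      LinearMap.range k = LinearMap.range h := by
    intro k hk hle
    by_contra hne
    exact hmin _ ⟨k, hk, rfl⟩ (lt_of_le_of_ne hle hne)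
  have key : ∀ k : LinearMap.range h →ₗ[R] LinearMap.range h, (∀ x, f (k x).1 = f x.1) →
      Function.Bijective k := by
    intro k hk
    refine OrzechProperty.bijective_of_surjective_endomorphism k ?_
    have h1 := hmin' ((LinearMap.range h).subtype ∘ₗ k ∘ₗ h.rangeRestrict)
      (fun x => by
        change f (k (h.rangeRestrict x)).1 = f x
        rw [hk]
        exact hh x)
      (by
        rintro _ ⟨x, rfl⟩
        exact (k (h.rangeRestrict x)).2)
    intro y
    have h2 : y.1 ∈ LinearMap.range ((LinearMap.range h).subtype ∘ₗ k ∘ₗ h.rangeRestrict) := by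
      rw [h1]; exact y.2
    obtain ⟨x, hx⟩ := h2
    exact ⟨h.rangeRestrict x, Subtype.ext hx⟩
  have hb := key (h.rangeRestrict ∘ₗ (LinearMap.range h).subtype) (fun x => hh x.1)
  let eq := LinearEquiv.ofBijective _ hb
  refine ⟨LinearMap.range h, inferInstance, inferInstance, f ∘ₗ (LinearMap.range h).subtype,
    ⟨?_, ?_⟩, key⟩
  · refine hf.1.ret ⟨(LinearMap.range h).subtype, eq.symm.toLinearMap ∘ₗ h.rangeRestrict, ?_⟩
    intro a
    exact eq.symm_apply_apply a
  · intro W _ _ hW g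
    obtain ⟨t, ht⟩ := hf.2 W hW g
    exact ⟨h.rangeRestrict ∘ₗ t, fun w => (hh _).trans (ht w)⟩

theorem wakamatsu {f : X →ₗ[R] M} (hf : Apx e f)
    (hmin : ∀ k : X →ₗ[R] X, (∀ x, f (k x) = f x) → Function.Bijective k)
    [Module.Finite R Z] (ι : LinearMap.ker f →ₗ[R] Z) (ρ : Z →ₗ[R] E) (hι : Function.Injective ι)
    (hex : Function.Exact ι ρ) (hρ : Function.Surjective ρ) (hE : InE R e E) :
    ∃ r : Z →ₗ[R] LinearMap.ker f, ∀ y, r (ι y) = y := by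
  have : Module.Finite R X := hf.1.1
  let T : LinearMap.ker f →ₗ[R] X × Z := (LinearMap.ker f).subtype.prod (-ι)
  let W := (X × Z) ⧸ LinearMap.range T
  let π : X × Z →ₗ[R] W := (LinearMap.range T).mkQ
  have hπ : ∀ v, π v = 0 → ∃ y : LinearMap.ker f, y.1 = v.1 ∧ ι y = - v.2 := by
    intro v hv
    obtain ⟨y, hy⟩ := (Submodule.Quotient.mk_eq_zero _).1 hv
    refine ⟨y, congrArg Prod.fst hy, ?_⟩
    rw [← hy]
    change ι y = - - ι y
    simp
  have hπ' : ∀ y, π (y.1, - ι y) = 0 := fun y => (Submodule.Quotient.mk_eq_zero _).2 ⟨y, rfl⟩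
  have hρι : ∀ y, ρ (ι y) = 0 := fun y => (hex _).2 ⟨y, rfl⟩
  let a : X →ₗ[R] W := π ∘ₗ LinearMap.inl R X Z
  let b : W →ₗ[R] E := (LinearMap.range T).liftQ (ρ ∘ₗ LinearMap.snd R X Z) (by
    rintro _ ⟨y, rfl⟩
    change ρ (- ι y) = 0
    rw [map_neg, hρι, neg_zero])
  let w : W →ₗ[R] M := (LinearMap.range T).liftQ (f ∘ₗ LinearMap.fst R X Z) (by
    rintro _ ⟨y, rfl⟩
    exact y.2)
  have hW : InE R e W := by
    refine InE.mid hf.1 hE a b ?_ ?_ ?_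
    · rw [injective_iff_map_eq_zero]
      intro x hx
      obtain ⟨y, hy1, hy2⟩ := hπ (x, 0) hx
      have : y = 0 := hι (by rw [hy2]; simp)
      rw [this] at hy1
      exact hy1.symm
    · intro v
      constructor
      · intro hv
        obtain ⟨⟨x, z⟩, rfl⟩ := Submodule.mkQ_surjective _ v
        have hv' : ρ z = 0 := hv
        obtain ⟨y, rfl⟩ := (hex z).1 hv'
        refine ⟨x + y.1, ?_⟩
        change π (x + y.1, 0) = π (x, ι y)
        rw [← sub_eq_zero, ← map_sub, ← hπ' y]
        congr 1
        ext <;> simp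
      · rintro ⟨x, rfl⟩
        exact map_zero ρ
    · intro y
      obtain ⟨z, rfl⟩ := hρ y
      exact ⟨π (0, z), rfl⟩
  obtain ⟨g, hg⟩ := hf.2 W hW w
  have hk := hmin (g ∘ₗ a) (fun x => hg _)
  let eq := LinearEquiv.ofBijective _ hk
  have heq : ∀ x, f (eq.symm x) = f x := by
    intro x
    obtain ⟨y, rfl⟩ := eq.surjective x
    rw [eq.symm_apply_apply]
    exact (hg (a y)).symm
  refine ⟨(eq.symm.toLinearMap ∘ₗ g ∘ₗ π ∘ₗ LinearMap.inr R X Z).codRestrict _ ?_, ?_⟩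
  · intro z
    change f (eq.symm (g (π (0, z)))) = 0
    rw [heq, hg]
    exact map_zero f
  · intro y
    refine Subtype.ext ?_
    change eq.symm (g (π (0, ι y))) = y.1
    rw [LinearEquiv.symm_apply_eq]
    change g (π (0, ι y)) = g (π (y.1, 0))
    congr 1
    symm
    rw [← sub_eq_zero, ← map_sub, ← hπ' y]
    congr 1
    ext <;> simp

theorem bounded_of (b : ℕ → ℕ) (h : ∀ i, b (i + 3) ≤ b (i + 1)) (i : ℕ) :
    b (i + 1) ≤ b 1 + b 2 := by
  induction i using Nat.strong_induction_on with
  | _ i ih =>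
    match i with
    | 0 => exact Nat.le_add_right _ _
    | 1 => exact Nat.le_add_left _ _
    | i + 2 => exact (h i).trans (ih i (by omega))

theorem main_abs [IsArtinianRing R] {S : Type u} [CommRing S] [IsLocalRing S] [IsNoetherianRing S]
    [Algebra S R] {s : S} (H : Hyp S R s)
    (hG : ∀ (N : Type u) [AddCommGroup N] [Module S N] [Module R N] [IsScalarTower S R N]
      [Module.Finite R N], ∃ α : ℕ, ∀ i, bet S i N ≤ α * (i + 1) ^ e)
    (hinj : Module.Injective R R)
    (hemb : ∀ (N : Type u) [AddCommGroup N] [Module R N] [Module.Finite R N],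
      ∃ (n : ℕ) (j : N →ₗ[R] (Fin n → R)), Function.Injective j)
    [Module.Finite R M] {f : X →ₗ[R] M} (hf : Apx e f) : InE R e M := by
  obtain ⟨X, _, _, f, hf, hmin⟩ := exists_min hf
  have : Module.Finite R X := hf.1.1
  have hsurj : Function.Surjective f := by
    intro m
    obtain ⟨h, hh⟩ := hf.2 R InE.free (LinearMap.toSpanSingleton R M m)
    exact ⟨h 1, by simp [hh]⟩
  obtain ⟨n, ι, hι⟩ := hemb (LinearMap.ker f)
  obtain ⟨m, j, hj⟩ := hemb ((Fin n → R) ⧸ LinearMap.range ι)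
  let C := (Fin m → R) ⧸ LinearMap.range j
  let p : (Fin m → R) →ₗ[R] C := (LinearMap.range j).mkQ
  have hp : Function.Surjective p := Submodule.mkQ_surjective _
  let ρ : (Fin n → R) →ₗ[R] LinearMap.ker p :=
    (j ∘ₗ (LinearMap.range ι).mkQ).codRestrict _ (by
      intro x
      exact (Submodule.Quotient.mk_eq_zero _).2 ⟨_, rfl⟩)
  have hρ : Function.Surjective ρ := by
    rintro ⟨y, hy⟩
    obtain ⟨z, rfl⟩ := (Submodule.Quotient.mk_eq_zero _).1 hy
    obtain ⟨x, rfl⟩ := Submodule.mkQ_surjective _ z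
    exact ⟨x, rfl⟩
  have hex : Function.Exact ι ρ := by
    intro x
    constructor
    · intro h
      have h1 : j ((LinearMap.range ι).mkQ x) = j 0 := by
        rw [map_zero]; exact congrArg Subtype.val h
      exact (Submodule.Quotient.mk_eq_zero _).1 (hj h1)
    · rintro ⟨y, rfl⟩
      refine Subtype.ext ?_
      change j ((LinearMap.range ι).mkQ (ι y)) = 0
      have : (LinearMap.range ι).mkQ (ι y) = 0 := (Submodule.Quotient.mk_eq_zero _).2 ⟨y, rfl⟩
      rw [this, map_zero]
  obtain ⟨E, _, _, _, a, b, ha, hab, hb, hE⟩ := exists_seq H p hp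
  have hEE : InE R e E := by
    obtain ⟨α, hα⟩ := hG C
    refine InE.of_shift (α * 3 ^ e) (fun i => (hE i).trans ((hα _).trans ?_))
    rw [mul_assoc, ← mul_pow]
    exact Nat.mul_le_mul_left _ (Nat.pow_le_pow_left (by omega) _)
  let P := LinearMap.ker (b ∘ₗ LinearMap.fst R E (Fin n → R) - ρ ∘ₗ LinearMap.snd R E (Fin n → R))
  have hP : ∀ v : P, b v.1.1 = ρ v.1.2 := fun v => sub_eq_zero.1 v.2
  have hρι : ∀ y, ρ (ι y) = 0 := fun y => (hex _).2 ⟨y, rfl⟩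
  have hba : ∀ y, b (a y) = 0 := fun y => (hab _).2 ⟨y, rfl⟩
  let ι' : LinearMap.ker f →ₗ[R] P := ((LinearMap.inr R E (Fin n → R)) ∘ₗ ι).codRestrict _ (by
    intro y
    change b 0 - ρ (ι y) = 0
    rw [hρι, map_zero, sub_zero])
  let fst' : P →ₗ[R] E := LinearMap.fst R E (Fin n → R) ∘ₗ P.subtype
  obtain ⟨r, hr⟩ := wakamatsu hf hmin ι' fst'
    (by
      intro x y hxy
      exact hι (congrArg (fun v : P => v.1.2) hxy))
    (by
      intro v
      constructor
      · intro hv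
        have hv' : v.1.1 = 0 := hv
        have h1 := hP v
        rw [hv', map_zero] at h1
        obtain ⟨y, hy⟩ := (hex _).1 h1.symm
        exact ⟨y, Subtype.ext (Prod.ext hv'.symm hy)⟩
      · rintro ⟨y, rfl⟩
        rfl)
    (by
      intro x
      obtain ⟨z, hz⟩ := hρ (b x)
      exact ⟨⟨(x, z), sub_eq_zero.2 hz.symm⟩, rfl⟩) hEE
  have hsnd : Function.Surjective (LinearMap.snd R E (Fin n → R) ∘ₗ P.subtype) := by
    intro x
    obtain ⟨z, hz⟩ := hb (ρ x)
    exact ⟨⟨(z, x), sub_eq_zero.2 hz⟩, rfl⟩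
  obtain ⟨σ, hσ⟩ := Module.projective_lifting_property _ LinearMap.id hsnd
  have hσ' : ∀ x, (σ x).1.2 = x := fun x => LinearMap.congr_fun hσ x
  let a' : C →ₗ[R] P := ((LinearMap.inl R E (Fin n → R)) ∘ₗ a).codRestrict _ (by
    intro y
    change b (a y) - ρ 0 = 0
    rw [hba, map_zero, sub_zero])
  have hbij : Function.Bijective (a'.coprod σ) := by
    constructor
    · rw [injective_iff_map_eq_zero]
      rintro ⟨x, y⟩ hxy
      have h2 : 0 + (σ y).1.2 = 0 := congrArg (fun v : P => v.1.2) hxy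
      rw [hσ', zero_add] at h2
      subst h2
      have h1 : a x + (σ 0).1.1 = 0 := congrArg (fun v : P => v.1.1) hxy
      rw [map_zero] at h1
      have h3 : a x = a 0 := by rw [map_zero]; simpa using h1
      rw [ha h3]; rfl
    · intro v
      have h1 : (v - σ v.1.2).1.2 = 0 := by
        change v.1.2 - (σ v.1.2).1.2 = 0
        rw [hσ', sub_self]
      have h2 := hP (v - σ v.1.2)
      rw [h1, map_zero] at h2
      obtain ⟨x, hx⟩ := (hab _).1 h2
      refine ⟨(x, v.1.2), ?_⟩
      have : a' x = v - σ v.1.2 := Subtype.ext (Prod.ext hx h1.symm)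
      rw [LinearMap.coprod_apply, this]
      abel
  have hYr : Ret R (LinearMap.ker f) (C × (Fin n → R)) :=
    Ret.trans ⟨ι', r, hr⟩ (Ret.of_equiv (LinearEquiv.ofBijective _ hbij).symm)
  have hkerρ : Ret R (LinearMap.ker ρ) (LinearMap.ker f) := by
    have hi : ∀ x : LinearMap.ker ρ, ∃ y, ι y = x.1 := fun x => (hex _).1 x.2
    refine Ret.of_equiv (LinearEquiv.ofBijective (ι.codRestrict (LinearMap.ker ρ) hρι) ?_).symm
    constructor
    · intro x y hxy
      exact hι (congrArg Subtype.val hxy)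
    · intro x
      obtain ⟨y, hy⟩ := hi x
      exact ⟨y, Subtype.ext hy⟩
  have hbd := bounded_of (fun i => bet R i C) (fun i =>
    (bet_syz_le (i + 2) p hp).trans ((bet_syz_le (i + 1) ρ hρ).trans
      ((bet_ret (i + 1) _ _ (hkerρ.trans hYr)).trans (bet_prod_free i))))
  have hZ : InE R e (LinearMap.ker p) := by
    refine InE.of_shift (bet R 1 C + bet R 2 C) (fun i => ?_)
    refine (bet_ker_le i p hp).trans ((hbd (i + 1)).trans ?_)
    exact Nat.le_mul_of_pos_right _ (by positivity)
  obtain ⟨r2, hr2⟩ := wakamatsu hf hmin ι ρ hι hex hρ hZ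
  have hinj' : Module.Injective R (Fin n → R) := inferInstance
  obtain ⟨t, ht⟩ := hinj'.out (LinearMap.ker f).subtype Subtype.val_injective ι
  have hret : ∀ y : LinearMap.ker f, (r2 ∘ₗ t) y.1 = y := by
    intro y
    have := ht y
    rw [LinearMap.comp_apply]
    erw [this]
    exact hr2 y
  obtain ⟨ψ, hψ⟩ := desc f hsurj (LinearMap.id - (LinearMap.ker f).subtype ∘ₗ (r2 ∘ₗ t)) (by
    intro x hx
    have := hret ⟨x, hx⟩
    simp only [LinearMap.sub_apply, LinearMap.id_apply, LinearMap.comp_apply] at this ⊢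
    rw [this]
    simp)
  refine hf.1.ret ⟨ψ, f, ?_⟩
  intro y
  obtain ⟨x, rfl⟩ := hsurj y
  rw [hψ]
  simp

end
end CIx

namespace CIx
set_option linter.unusedSectionVars false

/-- growth of Betti numbers of the vector spaces over the residue field -/
def Grow (S : Type u) [CommRing S] [IsLocalRing S] : ℕ → Prop
  | 0 => ∀ (N : Type u) [AddCommGroup N] [Module S N] [Module.Finite S N],
      (∀ r ∈ maximalIdeal S, ∀ x : N, r • x = 0) → ∃ n0, ∀ i, n0 ≤ i → bet S i N = 0
  | e + 1 => ∀ (N : Type u) [AddCommGroup N] [Module S N] [Module.Finite S N],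
      (∀ r ∈ maximalIdeal S, ∀ x : N, r • x = 0) → ∃ α : ℕ, ∀ i, bet S i N ≤ α * (i + 1) ^ e

theorem Grow.succ {S : Type u} [CommRing S] [IsLocalRing S] {e : ℕ} (h : Grow S e) :
    Grow S (e + 1) := by
  cases e with
  | zero =>
    intro N _ _ _ hN
    obtain ⟨n0, hn⟩ := h N hN
    refine ⟨∑ j ∈ Finset.range n0, bet S j N, fun i => ?_⟩
    rw [pow_zero, mul_one]
    by_cases hi : n0 ≤ i
    · rw [hn i hi]; exact Nat.zero_le _
    · exact Finset.single_le_sum (f := fun j => bet S j N) (fun _ _ => Nat.zero_le _)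
        (Finset.mem_range.2 (not_le.1 hi))
  | succ e =>
    intro N _ _ _ hN
    obtain ⟨α, hα⟩ := h N hN
    exact ⟨α, fun i => (hα i).trans (Nat.mul_le_mul_left _
      (Nat.pow_le_pow_right (Nat.succ_pos _) (Nat.le_succ _)))⟩

theorem Grow.mono {S : Type u} [CommRing S] [IsLocalRing S] {e e' : ℕ} (h : Grow S e)
    (hh : e ≤ e') : Grow S e' := by
  induction hh with
  | refl => exact h
  | step _ ih => exact ih.succ

theorem sum_bound (b a : ℕ → ℕ) (h : ∀ j, b (j + 2) ≤ b j + a (j + 2)) (i : ℕ) :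
    b i ≤ b 0 + b 1 + ∑ j ∈ Finset.range (i + 1), a j := by
  induction i using Nat.strong_induction_on with
  | _ i ih =>
    match i with
    | 0 => omega
    | 1 => omega
    | j + 2 =>
      have h1 := ih j (by omega)
      have h2 := h j
      rw [Finset.sum_range_succ, Finset.sum_range_succ]
      omega

theorem Grow.step {S R : Type u} [CommRing S] [CommRing R] [IsLocalRing S] [IsLocalRing R]
    [IsNoetherianRing S] [IsNoetherianRing R] [Algebra S R] {f : S} (H : Hyp S R f) {e : ℕ}
    (h : Grow S e) : Grow R (e + 1) := by
  intro N _ _ _ hN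
  let _ : Module S N := Module.compHom N (algebraMap S R)
  have : IsScalarTower S R N := ⟨fun a b x => by
    rw [Algebra.smul_def, mul_smul]; rfl⟩
  have := fin_S H
  have : Module.Finite S N := Module.Finite.trans R N
  have : IsLocalHom (algebraMap S R) := .of_surjective _ H.surj
  have hN' : ∀ r ∈ maximalIdeal S, ∀ x : N, r • x = 0 := by
    intro r hr x
    rw [← algebraMap_smul R r x]
    exact hN _ (map_nonunit (algebraMap S R) r hr) x
  have key := sum_bound (fun i => bet R i N) (fun i => bet S i N) (fun j => bet_step H j)
  cases e with
  | zero =>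
    obtain ⟨n0, hn⟩ := h N hN'
    refine ⟨bet R 0 N + bet R 1 N + ∑ j ∈ Finset.range n0, bet S j N, fun i => ?_⟩
    rw [pow_zero, mul_one]
    refine (key i).trans (Nat.add_le_add_left ?_ _)
    rw [← Finset.sum_filter_add_sum_filter_not (Finset.range (i+1)) (fun j => j < n0)]
    have : ∑ j ∈ (Finset.range (i+1)).filter (fun j => ¬ j < n0), bet S j N = 0 :=
      Finset.sum_eq_zero fun j hj => hn j (by simp at hj; omega)
    rw [this, add_zero]
    exact Finset.sum_le_sum_of_subset (fun j hj => by simp at hj ⊢; omega)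
  | succ e =>
    obtain ⟨α, hα⟩ := h N hN'
    refine ⟨bet R 0 N + bet R 1 N + α, fun i => ?_⟩
    have h1 : ∑ j ∈ Finset.range (i + 1), bet S j N ≤ α * (i + 1) ^ (e + 1) := by
      calc _ ≤ ∑ j ∈ Finset.range (i + 1), α * (i + 1) ^ e := by
            refine Finset.sum_le_sum fun j hj => (hα j).trans (Nat.mul_le_mul_left _
              (Nat.pow_le_pow_left ?_ _))
            simp at hj; omega
        _ = _ := by simp; ring
    have h2 : 1 ≤ (i + 1) ^ (e + 1) := Nat.one_le_pow _ _ (by omega)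
    calc _ ≤ _ := key i
      _ ≤ (bet R 0 N + bet R 1 N) * 1 + α * (i + 1) ^ (e + 1) := by
        rw [mul_one]; exact Nat.add_le_add_left h1 _
      _ ≤ _ := by rw [add_mul _ α]; gcongr

theorem Grow.all {S : Type u} [CommRing S] [IsLocalRing S] [IsNoetherianRing S] {e : ℕ}
    (h : Grow S (e + 1)) (n : ℕ) : ∀ (N : Type u) [AddCommGroup N] [Module S N]
    [Module.Finite S N], (∀ r ∈ maximalIdeal S ^ n, ∀ x : N, r • x = 0) →
    ∃ α : ℕ, ∀ i, bet S i N ≤ α * (i + 1) ^ e := by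
  induction n with
  | zero =>
    intro N _ _ _ hN
    refine ⟨0, fun i => ?_⟩
    rw [bet_zero_module i N ⟨fun x y => ?_⟩]
    · simp
    · have h1 := hN 1 (by simp) x
      have h2 := hN 1 (by simp) y
      rw [one_smul] at h1 h2
      rw [h1, h2]
  | succ n ih =>
    intro N _ _ _ hN
    let P : Submodule S N := maximalIdeal S • ⊤
    obtain ⟨α, hα⟩ := ih P (by
      rintro r hr ⟨x, hx⟩
      apply Subtype.ext
      change r • x = 0
      refine Submodule.smul_induction_on hx ?_ ?_
      · intro s hs y _
        rw [smul_smul]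
        exact hN _ (by rw [pow_succ]; exact Ideal.mul_mem_mul hr hs) y
      · intro x y hx hy
        rw [smul_add, hx, hy, add_zero])
    obtain ⟨β, hβ⟩ := h (N ⧸ P) (by
      intro r hr x
      obtain ⟨x, rfl⟩ := P.mkQ_surjective x
      rw [← map_smul]
      exact (Submodule.Quotient.mk_eq_zero _).2 (Submodule.smul_mem_smul hr trivial))
    refine ⟨α + β, fun i => ?_⟩
    refine (bet_mid i P N (N ⧸ P) P.subtype P.mkQ P.injective_subtype ?_ P.mkQ_surjective).trans ?_
    · rw [LinearMap.exact_iff]; simp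
    · rw [add_mul]; exact Nat.add_le_add (hα i) (hβ i)

theorem Grow.hG {S R : Type u} [CommRing S] [CommRing R] [IsLocalRing S] [IsLocalRing R]
    [IsNoetherianRing S] [IsArtinianRing R] [Algebra S R] {f : S} (H : Hyp S R f) {e : ℕ}
    (h : Grow S (e + 1)) (N : Type u) [AddCommGroup N] [Module S N] [Module R N]
    [IsScalarTower S R N] [Module.Finite R N] : ∃ α : ℕ, ∀ i, bet S i N ≤ α * (i + 1) ^ e := by
  have := fin_S H
  have : Module.Finite S N := Module.Finite.trans R N
  have : IsLocalHom (algebraMap S R) := .of_surjective _ H.surj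
  obtain ⟨n, hn⟩ := IsArtinianRing.isNilpotent_jacobson_bot (R := R)
  rw [IsLocalRing.jacobson_eq_maximalIdeal _ bot_ne_top] at hn
  refine h.all n N fun r hr x => ?_
  rw [← algebraMap_smul R r x]
  have h1 : algebraMap S R r ∈ maximalIdeal R ^ n := by
    have h2 : (maximalIdeal S).map (algebraMap S R) ≤ maximalIdeal R :=
      Ideal.map_le_iff_le_comap.2 fun s hs => map_nonunit (algebraMap S R) s hs
    have h3 := Ideal.mem_map_of_mem (algebraMap S R) hr
    rw [Ideal.map_pow] at h3
    exact Ideal.pow_right_mono h2 n h3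
  rw [hn] at h1
  rw [(h1 : algebraMap S R r = 0), zero_smul]

end CIx

namespace CIx
set_option linter.unusedSectionVars false

/-- regular sequences modulo an ideal, elementwise -/
def RS {Q : Type u} [CommRing Q] : Ideal Q → List Q → Prop
  | _, [] => True
  | J, f :: l => (∀ s, f * s ∈ J → s ∈ J) ∧ RS (J ⊔ Ideal.span {f}) l

theorem mem_sup1 {Q : Type u} [CommRing Q] {J : Ideal Q} {f x : Q} :
    x ∈ J ⊔ Ideal.span {f} ↔ ∃ t, x - f * t ∈ J := by
  rw [sup_comm, Ideal.mem_span_singleton_sup]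
  constructor
  · rintro ⟨a, b, hb, rfl⟩
    exact ⟨a, by convert hb using 1; ring⟩
  · rintro ⟨t, ht⟩
    exact ⟨t, _, ht, by ring⟩

open scoped Pointwise in
theorem RS_iff {Q : Type u} [CommRing Q] (l : List Q) : ∀ (J : Ideal Q) (M : Type u)
    [AddCommGroup M] [Module Q M] (p : Q →ₗ[Q] M), Function.Surjective p →
    (∀ x, p x = 0 ↔ x ∈ J) → (RingTheory.Sequence.IsWeaklyRegular M l ↔ RS J l) := by
  induction l with
  | nil =>
    intro J M _ _ p hp hk
    simp [RS]
  | cons f l ih =>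
    intro J M _ _ p hp hk
    rw [RingTheory.Sequence.isWeaklyRegular_cons_iff, RS]
    refine and_congr ?_ (ih _ _ ((f • (⊤ : Submodule Q M)).mkQ ∘ₗ p)
      ((Submodule.mkQ_surjective _).comp hp) ?_)
    · rw [isSMulRegular_iff_right_eq_zero_of_smul]
      constructor
      · intro h s hs
        rw [← hk] at hs ⊢
        exact h _ (by rw [← map_smul]; exact hs)
      · intro h m hm
        obtain ⟨s, rfl⟩ := hp m
        rw [← map_smul, hk] at hm
        exact (hk _).2 (h s hm)
    · intro x
      rw [mem_sup1, LinearMap.comp_apply, Submodule.mkQ_apply, Submodule.Quotient.mk_eq_zero,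
        Submodule.mem_smul_pointwise_iff_exists]
      constructor
      · rintro ⟨b, -, hb⟩
        obtain ⟨t, rfl⟩ := hp b
        refine ⟨t, (hk _).1 ?_⟩
        rw [map_sub, ← hb, ← smul_eq_mul, map_smul, sub_self]
      · rintro ⟨t, ht⟩
        refine ⟨p t, trivial, ?_⟩
        rw [← hk, map_sub, ← smul_eq_mul, map_smul, sub_eq_zero] at ht
        exact ht.symm

theorem RS_perm {Q : Type u} [CommRing Q] [IsLocalRing Q] [IsNoetherianRing Q] {l l' : List Q}
    (h : RS ⊥ l) (hm : ∀ x ∈ l, x ∈ maximalIdeal Q) (hp : l.Perm l') : RS ⊥ l' := by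
  have key := fun l : List Q => RS_iff l ⊥ Q LinearMap.id Function.surjective_id (by simp)
  rw [← key] at h ⊢
  exact IsLocalRing.isWeaklyRegular_of_perm_of_subset_maximalIdeal h hp hm

theorem RS_append {Q : Type u} [CommRing Q] (l l' : List Q) (J : Ideal Q) :
    RS J (l ++ l') ↔ RS J l ∧ RS (J ⊔ Ideal.ofList l) l' := by
  induction l generalizing J with
  | nil => simp [RS]
  | cons f l ih =>
    rw [List.cons_append, RS, RS, ih, and_assoc, Ideal.ofList_cons, sup_assoc]

theorem comap_sup_span {Q Q' : Type u} [CommRing Q] [CommRing Q'] (φ : Q →+* Q')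
    (hφ : Function.Surjective φ) (J : Ideal Q') (I : Ideal Q) :
    (J ⊔ I.map φ).comap φ = J.comap φ ⊔ I := by
  have h1 : J = (J.comap φ).map φ := (Ideal.map_comap_of_surjective φ hφ J).symm
  conv_lhs => rw [h1, ← Ideal.map_sup, Ideal.comap_map_of_surjective φ hφ]
  apply le_antisymm
  · exact sup_le le_rfl ((Ideal.comap_mono bot_le).trans le_sup_left)
  · exact le_sup_left

theorem RS_map {Q Q' : Type u} [CommRing Q] [CommRing Q'] (φ : Q →+* Q')
    (hφ : Function.Surjective φ) (l : List Q) : ∀ J : Ideal Q',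
    RS J (l.map φ) ↔ RS (J.comap φ) l := by
  induction l with
  | nil => intro J; simp [RS]
  | cons f l ih =>
    intro J
    rw [List.map_cons, RS, RS, ih]
    refine and_congr ?_ ?_
    · constructor
      · intro h s hs
        exact h _ (by rw [← map_mul]; exact hs)
      · intro h s hs
        obtain ⟨s, rfl⟩ := hφ s
        exact h s (by rw [Ideal.mem_comap, map_mul]; exact hs)
    · rw [← comap_sup_span φ hφ, Ideal.map_span, Set.image_singleton]

/-- `l` is a regular sequence in the maximal ideal -/
def RQ (Q : Type u) [CommRing Q] [IsLocalRing Q] (l : List Q) : Prop :=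
  RS ⊥ l ∧ ∀ x ∈ l, x ∈ maximalIdeal Q

theorem RQ.perm {Q : Type u} [CommRing Q] [IsLocalRing Q] [IsNoetherianRing Q] {l l' : List Q}
    (h : RQ Q l) (hp : l.Perm l') : RQ Q l' :=
  ⟨RS_perm h.1 h.2 hp, fun x hx => h.2 x (hp.mem_iff.2 hx)⟩

/-- the maximal ideal has `k` generators -/
def EmbLE (Q : Type u) [CommRing Q] [IsLocalRing Q] (k : ℕ) : Prop :=
  ∃ x : Fin k → Q, Ideal.span (Set.range x) = maximalIdeal Q

theorem peel {Q : Type u} [CommRing Q] [IsLocalRing Q] [IsNoetherianRing Q] {f : Q} {l : List Q}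
    (h : RQ Q (f :: l)) : ∃ (_ : IsLocalRing (Q ⧸ Ideal.span {f})),
      RQ (Q ⧸ Ideal.span {f}) (l.map (Ideal.Quotient.mk _)) ∧
      Hyp Q (Q ⧸ Ideal.span {f}) f ∧ (maximalIdeal Q).map (Ideal.Quotient.mk (Ideal.span {f})) =
        maximalIdeal (Q ⧸ Ideal.span {f}) ∧
      (f ∉ maximalIdeal Q ^ 2 → ∀ k, EmbLE Q (k + 1) → EmbLE (Q ⧸ Ideal.span {f}) k) := by
  have hf : f ∈ maximalIdeal Q := h.2 f (by simp)
  have hsurj : Function.Surjective (Ideal.Quotient.mk (Ideal.span {f})) :=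
    Ideal.Quotient.mk_surjective
  have hnt : Nontrivial (Q ⧸ Ideal.span {f}) := by
    apply Ideal.Quotient.nontrivial_iff.2
    intro ht
    have : Ideal.span {f} ≤ maximalIdeal Q := (Ideal.span_singleton_le_iff_mem _).2 hf
    rw [ht, top_le_iff] at this
    exact (maximalIdeal.isMaximal Q).ne_top this
  have hloc : IsLocalRing (Q ⧸ Ideal.span {f}) := IsLocalRing.of_surjective' _ hsurj
  have hlh : IsLocalHom (Ideal.Quotient.mk (Ideal.span {f})) := .of_surjective _ hsurj
  have hmap : (maximalIdeal Q).map (Ideal.Quotient.mk (Ideal.span {f})) =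
        maximalIdeal (Q ⧸ Ideal.span {f}) := by
    apply le_antisymm
    · exact Ideal.map_le_iff_le_comap.2 fun s hs => map_nonunit _ s hs
    · intro x hx
      obtain ⟨x, rfl⟩ := hsurj x
      refine Ideal.mem_map_of_mem _ ?_
      intro hu
      exact hx (hu.map _)
  refine ⟨hloc, ⟨?_, ?_⟩, ⟨hsurj, ?_, ?_⟩, hmap, ?_⟩
  · rw [RS_map _ hsurj]
    have h1 := h.1.2
    convert h1 using 1
    rw [bot_sup_eq]
    exact Ideal.mk_ker
  · intro x hx
    obtain ⟨y, hy, rfl⟩ := List.mem_map.1 hx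
    rw [← hmap]
    exact Ideal.mem_map_of_mem _ (h.2 y (by simp [hy]))
  · intro s
    change Ideal.Quotient.mk _ s = 0 ↔ _
    rw [Ideal.Quotient.eq_zero_iff_mem, Ideal.mem_span_singleton]
    rfl
  · intro s hs
    exact h.1.1 s hs
  · rintro hf2 k ⟨x, hx⟩
    have h1 := hf
    rw [← hx, Ideal.mem_span_range_iff_exists_fun] at h1
    obtain ⟨c, hc⟩ := h1
    have : ∃ i, IsUnit (c i) := by
      by_contra! hno
      apply hf2
      rw [← hc, sq]
      refine Ideal.sum_mem _ fun i _ => Ideal.mul_mem_mul ?_ ?_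
      · exact hno i
      · rw [← hx]; exact Ideal.subset_span ⟨i, rfl⟩
    obtain ⟨i, hi⟩ := this
    refine ⟨fun j => Ideal.Quotient.mk _ (x (i.succAbove j)), ?_⟩
    rw [← hmap, ← hx, Ideal.map_span]
    apply le_antisymm
    · refine Ideal.span_mono ?_
      rintro _ ⟨j, rfl⟩
      exact ⟨_, ⟨_, rfl⟩, rfl⟩
    · rw [Ideal.span_le]
      rintro _ ⟨_, ⟨j, rfl⟩, rfl⟩
      have hmem : ∀ j, Ideal.Quotient.mk (Ideal.span {f}) (x (i.succAbove j)) ∈ Ideal.span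
        (Set.range (fun j => Ideal.Quotient.mk (Ideal.span {f}) (x (i.succAbove j)))) :=
        fun j => Ideal.subset_span ⟨j, rfl⟩
      rcases Fin.eq_self_or_eq_succAbove i j with rfl | ⟨j, rfl⟩
      · rw [Fin.sum_univ_succAbove _ j] at hc
        have h2 : Ideal.Quotient.mk (Ideal.span {f}) f = 0 :=
          Ideal.Quotient.eq_zero_iff_mem.2 (Ideal.mem_span_singleton_self f)
        replace h2 := (congrArg (Ideal.Quotient.mk (Ideal.span {f})) hc).trans h2
        rw [map_add, map_sum, map_mul] at h2
        have h3 : Ideal.Quotient.mk (Ideal.span {f}) (c j) * Ideal.Quotient.mk (Ideal.span {f}) (x j)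
          ∈ Ideal.span
            (Set.range (fun i => Ideal.Quotient.mk (Ideal.span {f}) (x (j.succAbove i)))) := by
          rw [eq_neg_of_add_eq_zero_left h2]
          refine neg_mem (Ideal.sum_mem _ fun i _ => ?_)
          rw [map_mul]
          exact Ideal.mul_mem_left _ _ (hmem i)
        exact ((Ideal.unit_mul_mem_iff_mem _ (hi.map (Ideal.Quotient.mk (Ideal.span {f})))).1 h3)
      · exact hmem j

theorem exists_y {Q : Type u} [CommRing Q] [IsLocalRing Q] [IsNoetherianRing Q] {l : List Q} {f : Q}
    (h : RQ Q (l ++ [f])) : ∃ y ∈ maximalIdeal Q, y ∉ maximalIdeal Q ^ 2 ∧ RQ Q (l ++ [y]) := by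
  obtain ⟨h1, h2⟩ := h
  rw [RS_append, bot_sup_eq] at h1
  have hf : ∀ s, f * s ∈ Ideal.ofList l → s ∈ Ideal.ofList l := h1.2.1
  have hfm : f ∈ maximalIdeal Q := h2 f (by simp)
  have hle : Ideal.ofList l ≤ maximalIdeal Q := Ideal.span_le.2 fun x hx => h2 x (by
    simp only [List.mem_append]; exact Or.inl hx)
  have hreg : ∀ y, IsSMulRegular (Q ⧸ Ideal.ofList l) y ↔
      ∀ s, y * s ∈ Ideal.ofList l → s ∈ Ideal.ofList l := by
    intro y
    rw [isSMulRegular_iff_right_eq_zero_of_smul]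
    constructor
    · intro h s hs
      rw [← Ideal.Quotient.eq_zero_iff_mem] at hs ⊢
      exact h _ hs
    · intro h m hm
      obtain ⟨s, rfl⟩ := Ideal.Quotient.mk_surjective m
      exact Ideal.Quotient.eq_zero_iff_mem.2 (h s (Ideal.Quotient.eq_zero_iff_mem.1 hm))
  by_contra! hcon
  have hcon' : ∀ y ∈ maximalIdeal Q, y ∉ maximalIdeal Q ^ 2 →
      ¬ IsSMulRegular (Q ⧸ Ideal.ofList l) y := by
    intro y hy hy2 hr
    refine hcon y hy hy2 ⟨?_, ?_⟩
    · rw [RS_append, bot_sup_eq]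
      exact ⟨h1.1, (hreg y).1 hr, trivial⟩
    · intro x hx
      simp only [List.mem_append, List.mem_singleton] at hx
      rcases hx with hx | rfl
      · exact h2 x (by simp [hx])
      · exact hy
  have hfin := associatedPrimes.finite Q (Q ⧸ Ideal.ofList l)
  have hU := biUnion_associatedPrimes_eq_compl_regular Q (Q ⧸ Ideal.ofList l)
  classical
  have := (Ideal.subset_union_prime (R := Q) (s := insert (maximalIdeal Q ^ 2) hfin.toFinset)
    (f := id) (maximalIdeal Q ^ 2) (maximalIdeal Q ^ 2) (by
      intro i hi hi' _
      simp only [Finset.mem_insert, Set.Finite.mem_toFinset] at hi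
      exact (hi.resolve_left hi').isPrime) (I := maximalIdeal Q)).1 (by
      intro y hy
      by_cases hy2 : y ∈ maximalIdeal Q ^ 2
      · simp only [Set.mem_iUnion]
        exact ⟨_, by simp, hy2⟩
      · have : y ∈ ⋃ p ∈ associatedPrimes Q (Q ⧸ Ideal.ofList l), (p : Set Q) := by
          rw [hU]; exact hcon' y hy hy2
        simp only [Set.mem_iUnion] at this ⊢
        obtain ⟨p, hp, hyp⟩ := this
        exact ⟨p, by simp [hp], hyp⟩)
  obtain ⟨p, hp, hle'⟩ := this
  simp only [Finset.mem_insert, Set.Finite.mem_toFinset] at hp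
  rcases hp with rfl | hp
  · have hb : maximalIdeal Q = ⊥ := Submodule.eq_bot_of_le_smul_of_le_jacobson_bot (maximalIdeal Q)
      (maximalIdeal Q) (IsNoetherian.noetherian _) (by rw [smul_eq_mul, ← sq]; exact hle')
      (maximalIdeal_le_jacobson _)
    rw [hb] at hfm
    have h0 : f = 0 := hfm
    have : (1 : Q) ∈ Ideal.ofList l := hf 1 (by rw [h0, zero_mul]; exact zero_mem _)
    exact (maximalIdeal.isMaximal Q).ne_top ((Ideal.eq_top_iff_one _).2 (hle this))
  · have : f ∈ ⋃ p ∈ associatedPrimes Q (Q ⧸ Ideal.ofList l), (p : Set Q) := by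
      simp only [Set.mem_iUnion]
      exact ⟨p, hp, hle' hfm⟩
    rw [hU] at this
    exact this ((hreg f).2 hf)

/-- the socle modulo `I` is at most one-dimensional -/
def Soc1 (Q : Type u) [CommRing Q] [IsLocalRing Q] (I : Ideal Q) : Prop :=
  ∀ a b, (∀ m ∈ maximalIdeal Q, m * a ∈ I) → (∀ m ∈ maximalIdeal Q, m * b ∈ I) → a ∉ I →
    ∃ r, b - r * a ∈ I

theorem Soc1.exchange {Q : Type u} [CommRing Q] [IsLocalRing Q] {J : Ideal Q} {y f : Q}
    (hy : ∀ s, y * s ∈ J → s ∈ J) (hf : ∀ s, f * s ∈ J → s ∈ J) (hym : y ∈ maximalIdeal Q)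
    (h : Soc1 Q (J ⊔ Ideal.span {y})) : Soc1 Q (J ⊔ Ideal.span {f}) := by
  have aux : ∀ a, (∀ m ∈ maximalIdeal Q, m * a ∈ J ⊔ Ideal.span {f}) → ∃ a',
      y * a - f * a' ∈ J ∧ (∀ m ∈ maximalIdeal Q, m * a' ∈ J ⊔ Ideal.span {y}) := by
    intro a ha
    obtain ⟨a', ha'⟩ := mem_sup1.1 (ha y hym)
    refine ⟨a', ha', fun m hm => mem_sup1.2 ?_⟩
    obtain ⟨t, ht⟩ := mem_sup1.1 (ha m hm)
    refine ⟨t, hf _ ?_⟩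
    have := J.sub_mem (J.mul_mem_left y ht) (J.mul_mem_left m ha')
    convert this using 1
    ring
  intro a b ha hb hna
  obtain ⟨a', ha1, ha2⟩ := aux a ha
  obtain ⟨b', hb1, hb2⟩ := aux b hb
  have hna' : a' ∉ J ⊔ Ideal.span {y} := by
    intro hh
    obtain ⟨t, ht⟩ := mem_sup1.1 hh
    apply hna
    refine mem_sup1.2 ⟨t, hy _ ?_⟩
    have := J.add_mem ha1 (J.mul_mem_left f ht)
    convert this using 1
    ring
  obtain ⟨r, hr⟩ := h a' b' ha2 hb2 hna'
  obtain ⟨z, hz⟩ := mem_sup1.1 hr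
  refine ⟨r, mem_sup1.2 ⟨z, hy _ ?_⟩⟩
  have := J.add_mem (J.sub_mem hb1 (J.mul_mem_left r ha1)) (J.mul_mem_left f hz)
  convert this using 1
  ring

theorem Soc1.comap {Q Q' : Type u} [CommRing Q] [IsLocalRing Q] [CommRing Q'] [IsLocalRing Q']
    (φ : Q →+* Q') (hφ : Function.Surjective φ)
    (hmap : (maximalIdeal Q).map φ = maximalIdeal Q') {I : Ideal Q'} (h : Soc1 Q' I) :
    Soc1 Q (I.comap φ) := by
  have aux : ∀ a, (∀ m ∈ maximalIdeal Q, m * a ∈ I.comap φ) →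
      ∀ m ∈ maximalIdeal Q', m * φ a ∈ I := by
    intro a ha m hm
    rw [← hmap] at hm
    obtain ⟨n, hn, rfl⟩ := (Ideal.mem_map_iff_of_surjective φ hφ).1 hm
    rw [← map_mul]
    exact ha n hn
  intro a b ha hb hna
  obtain ⟨r, hr⟩ := h (φ a) (φ b) (aux a ha) (aux b hb) hna
  obtain ⟨r, rfl⟩ := hφ r
  exact ⟨r, by rw [Ideal.mem_comap, map_sub, map_mul]; exact hr⟩

end CIx

namespace CIx
set_option linter.unusedSectionVars false

theorem ind (n : ℕ) : ∀ (Q : Type u) [CommRing Q] [IsLocalRing Q] [IsNoetherianRing Q]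
    (fs : List Q), fs.length = n → RQ Q fs → 
    (∀ k, EmbLE Q k → n ≤ k) ∧ (EmbLE Q n → Grow Q 0 ∧ Soc1 Q (Ideal.ofList fs)) := by
  induction n with
  | zero =>
    intro Q _ _ _ fs hl hR
    refine ⟨fun k _ => Nat.zero_le k, ?_⟩
    rintro ⟨x, hx⟩
    have hm : maximalIdeal Q = ⊥ := by
      rw [← hx, Set.range_eq_empty, Ideal.span_empty]
    refine ⟨?_, ?_⟩
    · intro N _ _ _ hN
      refine ⟨1, fun i hi => ?_⟩
      obtain ⟨i, rfl⟩ : ∃ j, i = j + 1 := ⟨i - 1, by omega⟩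
      refine bet_zero_module i (Syz Q N) ⟨?_⟩
      have : ∀ z : Syz Q N, z = 0 := by
        rintro ⟨z, hz⟩
        apply Subtype.ext
        funext j
        have := ker_cover_le z hz j
        rw [hm] at this
        exact this
      intro a b
      rw [this a, this b]
    · intro a b ha hb hna
      have hfs : fs = [] := List.length_eq_zero_iff.1 hl
      subst hfs
      have ha0 : a ≠ 0 := fun h => hna (by rw [h]; exact zero_mem _)
      have hu : IsUnit a := by
        by_contra hu
        have : a ∈ maximalIdeal Q := hu
        rw [hm] at this
        exact ha0 this
      obtain ⟨u, rfl⟩ := hu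
      exact ⟨b * ↑u⁻¹, by simp⟩
  | succ n ih =>
    intro Q _ _ _ fs hl hR
    obtain ⟨gs, f, rfl⟩ : ∃ gs f, fs = gs ++ [f] := by
      have hne : fs ≠ [] := by rintro rfl; simp at hl
      exact ⟨fs.dropLast, fs.getLast hne, (List.dropLast_append_getLast hne).symm⟩
    have hgl : gs.length = n := by simpa using hl
    obtain ⟨y, hy, hy2, hRy⟩ := exists_y hR
    obtain ⟨hloc, hRQ', H, hmap, hemb⟩ := peel (hRy.perm (List.perm_append_singleton y gs))
    obtain ⟨ih1, ih2⟩ := ih (Q ⧸ Ideal.span {y}) (gs.map (Ideal.Quotient.mk _))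
      (by simpa using hgl) hRQ'
    refine ⟨?_, ?_⟩
    · intro k hk
      cases k with
      | zero =>
        obtain ⟨x, hx⟩ := hk
        have hm : maximalIdeal Q = ⊥ := by
          rw [← hx, Set.range_eq_empty, Ideal.span_empty]
        rw [hm] at hy
        exact absurd (by rw [(hy : y = 0)]; exact zero_mem _) hy2
      | succ k => exact Nat.succ_le_succ (ih1 k (hemb hy2 k hk))
    · intro hE
      obtain ⟨hG, hS⟩ := ih2 (hemb hy2 n hE)
      refine ⟨?_, ?_⟩
      · intro N _ _ _ hN
        have hT : Module.IsTorsionBySet Q N (Ideal.span {y} : Ideal Q) := by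
          rw [Module.isTorsionBySet_iff_subset_annihilator]
          intro r hr
          refine Module.mem_annihilator.2 fun x => hN r ?_ x
          exact (Ideal.span_singleton_le_iff_mem _).2 hy hr
        let _ : Module (Q ⧸ Ideal.span {y}) N := hT.module
        have : IsScalarTower Q (Q ⧸ Ideal.span {y}) N := hT.isScalarTower
        have : Module.Finite (Q ⧸ Ideal.span {y}) N := Module.Finite.of_restrictScalars_finite Q _ N
        obtain ⟨n0, hn0⟩ := hG N (by
          intro r hr x
          rw [← hmap] at hr
          obtain ⟨s, hs, rfl⟩ := (Ideal.mem_map_iff_of_surjective _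
            Ideal.Quotient.mk_surjective).1 hr
          exact hN s hs x)
        exact ⟨n0 + 1, bet_vanish H n0 N (hn0 n0 le_rfl)⟩
      · have h1 := hS.comap (Ideal.Quotient.mk (Ideal.span {y})) Ideal.Quotient.mk_surjective hmap
        rw [← Ideal.map_ofList, Ideal.comap_map_of_surjective _ Ideal.Quotient.mk_surjective] at h1
        have h2 : Ideal.comap (Ideal.Quotient.mk (Ideal.span {y})) ⊥ = Ideal.span {y} :=
          Ideal.mk_ker
        rw [h2] at h1
        rw [Ideal.ofList_append, Ideal.ofList_singleton]
        have ey := hRy.1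
        have ef := hR.1
        rw [RS_append, bot_sup_eq] at ey ef
        exact Soc1.exchange ey.2.1 ef.2.1 hy h1

/-- presentation of `R` -/
structure Pres (Q R : Type u) [CommRing Q] [CommRing R] (φ : Q →+* R) (fs : List Q) : Prop where
  surj : Function.Surjective φ
  ker : RingHom.ker φ = Ideal.ofList fs

theorem Pres.peel {Q R : Type u} [CommRing Q] [CommRing R] {φ : Q →+* R} {f : Q} {l : List Q}
    (h : Pres Q R φ (f :: l)) : ∃ φ' : Q ⧸ Ideal.span {f} →+* R,
      Pres (Q ⧸ Ideal.span {f}) R φ' (l.map (Ideal.Quotient.mk _)) := by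
  have hf : ∀ a ∈ Ideal.span {f}, φ a = 0 := by
    intro a ha
    rw [← RingHom.mem_ker, h.ker, Ideal.ofList_cons]
    exact Ideal.mem_sup_left ha
  refine ⟨Ideal.Quotient.lift _ φ hf, ?_, ?_⟩
  · intro r
    obtain ⟨q, rfl⟩ := h.surj r
    exact ⟨Ideal.Quotient.mk _ q, by simp⟩
  · rw [← Ideal.map_ofList]
    ext x
    obtain ⟨x, rfl⟩ := Ideal.Quotient.mk_surjective x
    rw [RingHom.mem_ker, Ideal.Quotient.lift_mk, ← RingHom.mem_ker, h.ker, ← Ideal.mem_comap,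
      Ideal.comap_map_of_surjective _ Ideal.Quotient.mk_surjective, Ideal.ofList_cons, sup_comm]
    have h2 : Ideal.comap (Ideal.Quotient.mk (Ideal.span {f})) ⊥ = Ideal.span {f} := Ideal.mk_ker
    rw [h2]

theorem Pres.perm {Q R : Type u} [CommRing Q] [CommRing R] {φ : Q →+* R} {l l' : List Q}
    (h : Pres Q R φ l) (hp : l.Perm l') : Pres Q R φ l' := by
  refine ⟨h.surj, h.ker.trans ?_⟩
  exact congrArg Ideal.span (Set.ext fun x => hp.mem_iff)

theorem reduce (R : Type u) [CommRing R] (n : ℕ) : ∀ (Q : Type u) [CommRing Q] [IsLocalRing Q]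
    [IsNoetherianRing Q] (φ : Q →+* R) (fs : List Q), fs.length = n → RQ Q fs → Pres Q R φ fs →
    EmbLE Q n → ∃ (n' : ℕ) (Q' : Type u) (_ : CommRing Q') (_ : IsLocalRing Q')
      (_ : IsNoetherianRing Q') (φ' : Q' →+* R) (fs' : List Q'), fs'.length = n' ∧ RQ Q' fs' ∧
      Pres Q' R φ' fs' ∧ EmbLE Q' n' ∧ ∀ f ∈ fs', f ∈ maximalIdeal Q' ^ 2 := by
  induction n with
  | zero =>
    intro Q _ _ _ φ fs hl hR hP hE
    have : fs = [] := List.length_eq_zero_iff.1 hl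
    subst this
    exact ⟨0, Q, _, ‹_›, ‹_›, φ, [], rfl, hR, hP, hE, by simp⟩
  | succ n ih =>
    intro Q _ _ _ φ fs hl hR hP hE
    by_cases hall : ∀ f ∈ fs, f ∈ maximalIdeal Q ^ 2
    · exact ⟨n + 1, Q, _, ‹_›, ‹_›, φ, fs, hl, hR, hP, hE, hall⟩
    · push Not at hall
      obtain ⟨f, hf, hf2⟩ := hall
      obtain ⟨l1, l2, rfl⟩ := List.append_of_mem hf
      have hp : (l1 ++ f :: l2).Perm (f :: (l1 ++ l2)) := List.perm_middle
      obtain ⟨hloc, hRQ', H, hmap, hemb⟩ := CIx.peel (hR.perm hp)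
      obtain ⟨φ', hφ'⟩ := (hP.perm hp).peel
      refine ih (Q ⧸ Ideal.span {f}) φ' _ ?_ hRQ' hφ' (hemb hf2 n hE)
      simp at hl ⊢
      omega

theorem chain (R : Type u) [CommRing R] (n : ℕ) : ∀ (g : ℕ) (Q : Type u) [CommRing Q]
    [IsLocalRing Q] [IsNoetherianRing Q] (φ : Q →+* R) (fs : List Q), fs.length = n + 1 →
    RQ Q fs → Pres Q R φ fs → Grow Q g → ∃ (S : Type u) (_ : CommRing S) (_ : IsLocalRing S)
      (_ : IsNoetherianRing S) (_ : Algebra S R) (s : S), Hyp S R s ∧ Grow S (g + n) := by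
  induction n with
  | zero =>
    intro g Q _ _ _ φ fs hl hR hP hG
    obtain ⟨f, rfl⟩ := List.length_eq_one_iff.1 hl
    let _ : Algebra Q R := φ.toAlgebra
    refine ⟨Q, _, ‹_›, ‹_›, φ.toAlgebra, f, Hyp.mk hP.surj ?_ ?_, hG⟩
    · intro s
      change s ∈ RingHom.ker φ ↔ _
      rw [hP.ker, Ideal.ofList_singleton, Ideal.mem_span_singleton]
      rfl
    · exact fun s hs => hR.1.1 s hs
  | succ n ih =>
    intro g Q _ _ _ φ fs hl hR hP hG
    obtain ⟨f, l, rfl⟩ := List.exists_cons_of_length_eq_add_one hl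
    obtain ⟨hloc, hRQ', H, hmap, hemb⟩ := CIx.peel hR
    obtain ⟨φ', hφ'⟩ := hP.peel
    obtain ⟨S, i1, i2, i3, i4, s, h1, h2⟩ :=
      ih (g + 1) (Q ⧸ Ideal.span {f}) φ' _ (by simpa using hl) hRQ' hφ' (hG.step H)
    exact ⟨S, i1, i2, i3, i4, s, h1, by rw [show g + (n + 1) = g + 1 + n by omega]; exact h2⟩

theorem ci_main (R : Type u) [CommRing R] [IsLocalRing R] (c : ℕ) (hc : EmbLE R c)
    (hc0 : maximalIdeal R ≠ ⊥) (n : ℕ) (Q : Type u) [CommRing Q] [IsLocalRing Q]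
    [IsNoetherianRing Q] (φ : Q →+* R) (fs : List Q) (hl : fs.length = n) (hR : RQ Q fs)
    (hP : Pres Q R φ fs) (hE : EmbLE Q n) : Soc1 R ⊥ ∧ ∃ (S : Type u) (_ : CommRing S)
      (_ : IsLocalRing S) (_ : IsNoetherianRing S) (_ : Algebra S R) (s : S),
      Hyp S R s ∧ Grow S (c - 1) := by
  obtain ⟨n, Q, _, _, _, φ, fs, hl, hR, hP, hE, hsq⟩ := reduce R n Q φ fs hl hR hP hE
  have hlh : IsLocalHom φ := .of_surjective _ hP.surj
  have hmax : ∀ q, q ∈ maximalIdeal Q ↔ φ q ∈ maximalIdeal R := by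
    intro q
    constructor
    · exact fun h => map_nonunit φ q h
    · exact fun h hu => h (hu.map φ)
  have hker : RingHom.ker φ ≤ maximalIdeal Q ^ 2 := by
    rw [hP.ker]
    exact Ideal.span_le.2 hsq
  have hEc : EmbLE Q c := by
    obtain ⟨x, hx⟩ := hc
    choose y hy using fun i => hP.surj (x i)
    refine ⟨y, le_antisymm ?_ ?_⟩
    · rw [Ideal.span_le]
      rintro _ ⟨i, rfl⟩
      rw [SetLike.mem_coe, hmax, hy, ← hx]
      exact Ideal.subset_span ⟨i, rfl⟩
    · refine Submodule.le_of_le_smul_of_le_jacobson_bot (I := maximalIdeal Q)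
        (IsNoetherian.noetherian _) (maximalIdeal_le_jacobson _) ?_
      intro q hq
      have h1 := (hmax q).1 hq
      rw [← hx, Ideal.mem_span_range_iff_exists_fun] at h1
      obtain ⟨a, ha⟩ := h1
      choose b hb using fun i => hP.surj (a i)
      have h2 : q - ∑ i, b i * y i ∈ RingHom.ker φ := by
        rw [RingHom.mem_ker, map_sub, map_sum, ← ha]
        simp [hb, hy]
      have h3 := hker h2
      rw [sq] at h3
      rw [show q = (∑ i, b i * y i) + (q - ∑ i, b i * y i) by ring]
      refine Submodule.add_mem_sup ?_ h3
      exact Ideal.mem_span_range_iff_exists_fun.2 ⟨b, rfl⟩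
  obtain ⟨h1, h2⟩ := ind n Q fs hl hR
  obtain ⟨hG, hS⟩ := h2 hE
  have hnc := h1 c hEc
  have hn : n ≠ 0 := by
    rintro rfl
    obtain ⟨x, hx⟩ := hE
    have hm : maximalIdeal Q = ⊥ := by
      rw [← hx, Set.range_eq_empty, Ideal.span_empty]
    apply hc0
    rw [eq_bot_iff]
    intro r hr
    obtain ⟨q, rfl⟩ := hP.surj r
    rw [← hmax, hm] at hr
    rw [(hr : q = 0), map_zero]
    exact zero_mem _
  obtain ⟨m, rfl⟩ := Nat.exists_eq_succ_of_ne_zero hn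
  refine ⟨?_, ?_⟩
  · intro a b ha hb hna
    obtain ⟨a, rfl⟩ := hP.surj a
    obtain ⟨b, rfl⟩ := hP.surj b
    have aux : ∀ a, (∀ m ∈ maximalIdeal R, m * φ a ∈ (⊥ : Ideal R)) →
        ∀ m ∈ maximalIdeal Q, m * a ∈ Ideal.ofList fs := by
      intro a ha m hm
      rw [← hP.ker, RingHom.mem_ker, map_mul]
      exact ha _ ((hmax m).1 hm)
    obtain ⟨r, hr⟩ := hS a b (aux a ha) (aux b hb) (by rw [← hP.ker]; exact hna)
    refine ⟨φ r, ?_⟩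
    rw [← map_mul, ← map_sub]
    rw [← hP.ker] at hr
    exact hr
  · obtain ⟨S, i1, i2, i3, i4, s, h3, h4⟩ := chain R m 0 Q φ fs hl hR hP hG
    exact ⟨S, i1, i2, i3, i4, s, h3, h4.mono (by omega)⟩

end CIx

namespace CIx
set_option linter.unusedSectionVars false

theorem EmbLE.succ {Q : Type u} [CommRing Q] [IsLocalRing Q] {k : ℕ} (h : EmbLE Q k) :
    EmbLE Q (k + 1) := by
  obtain ⟨x, hx⟩ := h
  refine ⟨Fin.cons 0 x, ?_⟩
  rw [Fin.range_cons, Ideal.span_insert, hx, Ideal.span_singleton_zero, bot_sup_eq]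

theorem EmbLE.mono {Q : Type u} [CommRing Q] [IsLocalRing Q] {k k' : ℕ} (h : EmbLE Q k)
    (hk : k ≤ k') : EmbLE Q k' := by
  induction hk with
  | refl => exact h
  | step _ ih => exact ih.succ

theorem embLE_finrank (Q : Type u) [CommRing Q] [IsLocalRing Q] [IsNoetherianRing Q] :
    EmbLE Q (Module.finrank (ResidueField Q) (CotangentSpace Q)) := by
  rw [← IsLocalRing.spanFinrank_maximalIdeal_eq_finrank_cotangentSpace]
  obtain ⟨s, hs, hs'⟩ := Submodule.FG.exists_span_finset_card_eq_spanFinrank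
    (IsNoetherian.noetherian (maximalIdeal Q))
  rw [← hs]
  refine ⟨fun i => (s.equivFin.symm i : Q), ?_⟩
  have : Set.range (fun i => (s.equivFin.symm i : Q)) = (s : Set Q) := by
    ext x
    constructor
    · rintro ⟨i, rfl⟩
      exact (s.equivFin.symm i).2
    · intro hx
      exact ⟨s.equivFin ⟨x, hx⟩, by simp⟩
  rw [this]
  exact hs'

theorem setup (R : Type u) [CommRing R] [IsLocalRing R] [IsArtinianRing R]
    (Q : Type u) [CommRing Q] [IsLocalRing Q] [IsNoetherianRing Q]
    (hdim : ringKrullDim Q = (Module.finrank (ResidueField Q) (CotangentSpace Q) : ℕ))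
    (fs : List Q) (hreg : RingTheory.Sequence.IsRegular Q fs)
    (e : AdicCompletion (maximalIdeal R) R ≃+* Q ⧸ Ideal.span {x : Q | x ∈ fs}) :
    RQ Q fs ∧ EmbLE Q fs.length ∧ ∃ φ : Q →+* R, Pres Q R φ fs := by
  let ε : R ≃+* Q ⧸ Ideal.span {x : Q | x ∈ fs} :=
    (AdicCompletion.ofAlgEquiv (maximalIdeal R)).toRingEquiv.trans e
  have hmem : ∀ x ∈ fs, x ∈ maximalIdeal Q := by
    intro x hx
    refine IsLocalRing.le_maximalIdeal ?_ (Ideal.subset_span (s := {x : Q | x ∈ fs}) hx)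
    intro ht
    apply hreg.2
    rw [Ideal.ofList, ht, Submodule.top_smul]
  refine ⟨⟨?_, hmem⟩, ?_, ε.symm.toRingHom.comp (Ideal.Quotient.mk _), ?_, ?_⟩
  · exact (RS_iff fs ⊥ Q LinearMap.id Function.surjective_id (by simp)).1 hreg.1
  · refine (embLE_finrank Q).mono ?_
    classical
    have h1 := ringKrullDim_le_ringKrullDim_quotient_add_card (fs.toFinset) (by
      intro x hx
      rw [IsLocalRing.ringJacobson_eq_maximalIdeal]
      exact hmem x (by simpa using hx))
    have h2 : ((fs.toFinset : Finset Q) : Set Q) = {x | x ∈ fs} := by ext; simp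
    have h3 : ringKrullDim R ≤ 0 := Order.krullDimLE_iff 0 (PrimeSpectrum R) |>.1 inferInstance
    rw [h2, ← ringKrullDim_eq_of_ringEquiv ε, hdim] at h1
    have h4 := h1.trans (add_le_add_left h3 _)
    rw [zero_add] at h4
    have h5 : Module.finrank (ResidueField Q) (CotangentSpace Q) ≤ fs.toFinset.card := by
      exact_mod_cast h4
    exact h5.trans (List.toFinset_card_le fs)
  · exact ε.symm.surjective.comp Ideal.Quotient.mk_surjective
  · ext x
    rw [RingHom.mem_ker, RingHom.comp_apply, ← Ideal.Quotient.eq_zero_iff_mem]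
    exact map_eq_zero_iff ε.symm ε.symm.injective

end CIx

namespace CIx
set_option linter.unusedSectionVars false

section
variable {R : Type u} [CommRing R]

theorem len_ker_range {M N : Type u} [AddCommGroup M] [Module R M] [AddCommGroup N] [Module R N]
    (ρ : M →ₗ[R] N) : Module.length R M =
      Module.length R (LinearMap.ker ρ) + Module.length R (LinearMap.range ρ) := by
  refine Module.length_eq_add_of_exact (LinearMap.ker ρ).subtype
    ρ.rangeRestrict (Submodule.subtype_injective _)
    (LinearMap.surjective_rangeRestrict _) ?_
  rw [LinearMap.exact_iff, LinearMap.ker_rangeRestrict, Submodule.range_subtype]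

theorem hom_len {A B C : Type u} [AddCommGroup A] [Module R A] [AddCommGroup B] [Module R B]
    [AddCommGroup C] [Module R C] (f : A →ₗ[R] B) (g : B →ₗ[R] C) (hfg : Function.Exact f g)
    (hg : Function.Surjective g) : Module.length R (B →ₗ[R] R) ≤ Module.length R (C →ₗ[R] R) +
      Module.length R (LinearMap.range (LinearMap.lcomp R R f)) := by
  have hex := LinearMap.exact_lcomp_of_exact_of_surjective R hfg hg
  rw [len_ker_range (LinearMap.lcomp R R f)]
  refine add_le_add ?_ le_rfl
  rw [hex.linearMap_ker_eq]
  exact Module.length_le_of_surjective _ (LinearMap.surjective_rangeRestrict _)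

variable [IsLocalRing R]

theorem hom_simple (hS : Soc1 R ⊥) (C : Type u) [AddCommGroup C] [Module R C]
    [IsSimpleModule R C] : Module.length R (C →ₗ[R] R) ≤ 1 := by
  rcases subsingleton_or_nontrivial (C →ₗ[R] R) with h | h
  · rw [Module.length_eq_zero]; exact zero_le
  · rw [Module.length_eq_one_iff.2]
    obtain ⟨hnt, hsp⟩ := isSimpleModule_iff_toSpanSingleton_surjective.1 ‹IsSimpleModule R C›
    obtain ⟨c, hc⟩ := exists_ne (0 : C)
    have hkill : ∀ m ∈ maximalIdeal R, m • c = 0 := by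
      intro m hm
      by_contra hne
      obtain ⟨r, hr⟩ := hsp _ hne c
      rw [LinearMap.toSpanSingleton_apply, smul_smul] at hr
      have h1 : (1 - r * m) • c = 0 := by rw [sub_smul, hr, one_smul, sub_self]
      have hu : IsUnit (1 - r * m) := by
        by_contra hu
        have h2 : (1 : R) ∈ maximalIdeal R := by
          have := add_mem (show (1 - r * m) ∈ maximalIdeal R from hu)
            (Ideal.mul_mem_left _ r hm)
          simpa using this
        exact h2 isUnit_one
      exact hc ((hu.smul_eq_zero).1 h1)
    have hs : ∀ φ : C →ₗ[R] R, ∀ m ∈ maximalIdeal R, m * φ c ∈ (⊥ : Ideal R) := by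
      intro φ m hm
      rw [← smul_eq_mul, ← map_smul, hkill m hm, map_zero]
      exact zero_mem _
    refine isSimpleModule_iff_toSpanSingleton_surjective.2 ⟨h, fun φ hφ ψ => ?_⟩
    have hφc : φ c ≠ 0 := by
      intro h0
      apply hφ
      ext d
      obtain ⟨r, rfl⟩ := hsp c hc d
      simp [h0]
    obtain ⟨r, hr⟩ := hS (φ c) (ψ c) (hs φ) (hs ψ) hφc
    refine ⟨r, ?_⟩
    ext d
    obtain ⟨t, rfl⟩ := hsp c hc d
    have hr' : ψ c = r * φ c := sub_eq_zero.1 hr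
    simp [hr']

theorem hom_le (hS : Soc1 R ⊥) (N : Type u) [AddCommGroup N] [Module R N]
    (h : IsFiniteLength R N) : Module.length R (N →ₗ[R] R) ≤ Module.length R N := by
  induction h with
  | of_subsingleton => rw [Module.length_eq_zero]; exact zero_le
  | @of_simple_quotient M _ _ N hs hN ih =>
    refine (hom_len N.subtype N.mkQ (by rw [LinearMap.exact_iff]; simp)
      N.mkQ_surjective).trans ?_
    rw [Module.length_eq_add_of_exact N.subtype N.mkQ N.injective_subtype N.mkQ_surjective
      (by rw [LinearMap.exact_iff]; simp), add_comm]
    refine add_le_add ?_ ?_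
    · exact (Module.length_le_of_injective (Submodule.subtype _)
        (Submodule.subtype_injective _)).trans ih
    · rw [Module.length_eq_one_iff.2 hs]
      exact hom_simple hS _

theorem self_inj [IsArtinianRing R] (hS : Soc1 R ⊥) : Module.Injective R R := by
  refine Module.Baer.injective fun I g => ?_
  have hfl : ∀ (N : Type u) [AddCommGroup N] [Module R N] [Module.Finite R N],
      IsFiniteLength R N := fun N _ _ _ =>
    isFiniteLength_iff_isNoetherian_isArtinian.2 ⟨inferInstance, inferInstance⟩
  let ρ := LinearMap.lcomp R R I.subtype
  have h1 := hom_len I.subtype (Submodule.mkQ I) (by rw [LinearMap.exact_iff]; simp)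
    (Submodule.mkQ_surjective I)
  have h2 := hom_le hS (R ⧸ I) (hfl _)
  have h3 := hom_le hS I (hfl _)
  have h4 := Module.length_eq_add_of_exact I.subtype (Submodule.mkQ I)
    (Submodule.injective_subtype I) (Submodule.mkQ_surjective I) (by rw [LinearMap.exact_iff]; simp)
  rw [(LinearMap.ringLmapEquivSelf R R R).length_eq, h4, add_comm] at h1
  have h5 := h1.trans (add_le_add_left h2 _)
  have hne : Module.length R (R ⧸ I) ≠ ⊤ := Module.length_ne_top
  have h6 : Module.length R I ≤ Module.length R (LinearMap.range ρ) := by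
    exact (ENat.add_le_add_iff_left hne).1 h5
  have htop : LinearMap.range ρ = ⊤ := by
    by_contra hn
    exact absurd (h3.trans h6) (not_le.2 (Submodule.length_lt hn))
  obtain ⟨g', hg'⟩ : g ∈ LinearMap.range ρ := by rw [htop]; trivial
  exact ⟨g', fun x hx => LinearMap.congr_fun hg' ⟨x, hx⟩⟩

theorem exists_socle [IsArtinianRing R] : ∃ s : R, s ≠ 0 ∧ ∀ m ∈ maximalIdeal R, m * s = 0 := by
  classical
  have hnil := (isArtinianRing_iff_isNilpotent_maximalIdeal R).mp ‹_›
  have hex : ∃ n, maximalIdeal R ^ n = ⊥ := hnil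
  obtain ⟨n, hn, hmin⟩ : ∃ n, maximalIdeal R ^ n = ⊥ ∧ ∀ m < n, maximalIdeal R ^ m ≠ ⊥ :=
    ⟨Nat.find hex, Nat.find_spec hex, fun m hm => Nat.find_min hex hm⟩
  cases n with
  | zero =>
    rw [pow_zero, Ideal.one_eq_top] at hn
    exact absurd hn top_ne_bot
  | succ n =>
    obtain ⟨s, hs, hs0⟩ := Submodule.exists_mem_ne_zero_of_ne_bot (hmin n (Nat.lt_succ_self n))
    refine ⟨s, hs0, fun m hm => ?_⟩
    have : m * s ∈ maximalIdeal R ^ (n + 1) := by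
      rw [pow_succ']
      exact Ideal.mul_mem_mul hm hs
    rw [hn] at this
    exact this

theorem self_emb [IsArtinianRing R] (hinj : Module.Injective R R) (N : Type u) [AddCommGroup N]
    [Module R N] [Module.Finite R N] :
    ∃ (n : ℕ) (j : N →ₗ[R] (Fin n → R)), Function.Injective j := by
  have hsep : ∀ x : N, (∀ φ : N →ₗ[R] R, φ x = 0) → x = 0 := by
    intro x hx
    by_contra hne
    obtain ⟨s, hs, hsm⟩ := exists_socle (R := R)
    let u := (LinearMap.toSpanSingleton R N x).rangeRestrict
    obtain ⟨ψ, hψ⟩ := desc u (LinearMap.surjective_rangeRestrict _)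
      (LinearMap.toSpanSingleton R R s) (by
        intro r hr
        have hr' : r • x = 0 := congrArg Subtype.val hr
        refine hsm r ?_
        intro hu
        exact hne (hu.smul_eq_zero.1 hr'))
    obtain ⟨φ, hφ⟩ := hinj.out (LinearMap.range (LinearMap.toSpanSingleton R N x)).subtype
      (Submodule.injective_subtype _) ψ
    have h1 := hφ (u 1)
    rw [hψ] at h1
    have h2 : (LinearMap.range (LinearMap.toSpanSingleton R N x)).subtype (u 1) = x := by
      simp [u]
    rw [h2, hx] at h1
    simp at h1
    exact hs h1.symm
  obtain ⟨n, φ, hφ⟩ := Module.Finite.exists_fin (R := R) (M := N →ₗ[R] R)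
  refine ⟨n, LinearMap.pi φ, ?_⟩
  rw [injective_iff_map_eq_zero]
  intro x hx
  refine hsep x fun ψ => ?_
  have hmem : ψ ∈ Submodule.span R (Set.range φ) := by rw [hφ]; trivial
  refine Submodule.span_induction (p := fun ψ _ => ψ x = 0) ?_ ?_ ?_ ?_ hmem
  · rintro _ ⟨i, rfl⟩
    exact congrFun hx i
  · rfl
  · intro a b _ _ ha hb
    rw [LinearMap.add_apply, ha, hb, add_zero]
  · intro r a _ ha
    rw [LinearMap.smul_apply, ha, smul_zero]

end
end CIx

namespace CIx
set_option linter.unusedSectionVars false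

section
variable (R : Type u) [CommRing R]

/-- iterated syzygies -/
noncomputable def tow (M : ModuleCat.{u} R) : ℕ → ModuleCat.{u} R
  | 0 => M
  | n + 1 => ModuleCat.of R (Syz R (tow M n))

theorem tow_bet (M : ModuleCat.{u} R) (n : ℕ) : ∀ i, bet R i (tow R M n) = bet R (i + n) M := by
  induction n with
  | zero => intro i; rfl
  | succ n ih => intro i; exact (ih (i + 1)).trans (by rw [Nat.add_right_comm, Nat.add_assoc])

theorem tow_mu (M : ModuleCat.{u} R) (n : ℕ) : mu R (tow R M n) = bet R n M := by
  have := tow_bet R M n 0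
  rwa [Nat.zero_add] at this

theorem tow_fin [IsNoetherianRing R] (M : ModuleCat.{u} R) [Module.Finite R M] (n : ℕ) :
    Module.Finite R (tow R M n) := by
  induction n with
  | zero => assumption
  | succ n ih => exact inferInstanceAs (Module.Finite R (LinearMap.ker (cover R (tow R M n))))

/-- terms -/
noncomputable abbrev rX (M : ModuleCat.{u} R) (n : ℕ) : ModuleCat.{u} R :=
  ModuleCat.of R (Fin (mu R (tow R M n)) → R)

/-- differential -/
noncomputable def rl (M : ModuleCat.{u} R) (n : ℕ) :
    (Fin (mu R (tow R M (n + 1))) → R) →ₗ[R] (Fin (mu R (tow R M n)) → R) :=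
  (LinearMap.ker (cover R (tow R M n))).subtype ∘ₗ cover R (Syz R (tow R M n))

theorem rl_exact [IsNoetherianRing R] (M : ModuleCat.{u} R) [Module.Finite R M] (n : ℕ)
    (y : Fin (mu R (tow R M n)) → R) : cover R (tow R M n) y = 0 ↔ ∃ x, rl R M n x = y := by
  have := tow_fin R M n
  constructor
  · intro h
    obtain ⟨x, hx⟩ := cover_surj (R := R) (M := Syz R (tow R M n)) ⟨y, h⟩
    exact ⟨x, congrArg Subtype.val hx⟩
  · rintro ⟨x, rfl⟩
    exact (cover R (Syz R (tow R M n)) x).2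

theorem rl_zero (M : ModuleCat.{u} R) (n : ℕ) (x : Fin (mu R (tow R M (n + 1))) → R) :
    rl R M n x = 0 ↔ cover R (tow R M (n + 1)) x = 0 := by
  constructor
  · intro h
    exact Subtype.ext h
  · intro h
    exact congrArg Subtype.val h

theorem rl_exact' [IsNoetherianRing R] (M : ModuleCat.{u} R) [Module.Finite R M] (n : ℕ)
    (y : Fin (mu R (tow R M (n + 1))) → R) : rl R M n y = 0 ↔ ∃ x, rl R M (n + 1) x = y :=
  (rl_zero R M n y).trans (rl_exact R M (n + 1) y)

/-- complex -/
noncomputable def rC (M : ModuleCat.{u} R) : ChainComplex (ModuleCat.{u} R) ℕ :=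
  ChainComplex.of (rX R M) (fun n => ModuleCat.ofHom (rl R M n)) (by
    intro n
    ext1
    refine LinearMap.ext fun x => ?_
    change (cover R (tow R M n) |>.ker.subtype) (cover R (Syz R (tow R M n))
      ((cover R (tow R M (n+1)) |>.ker.subtype) (cover R (Syz R (tow R M (n+1))) x))) = 0
    rw [show cover R (Syz R (tow R M n))
      ((cover R (tow R M (n+1)) |>.ker.subtype) (cover R (Syz R (tow R M (n+1))) x)) = 0 from
      (cover R (Syz R (tow R M (n+1))) x).2, map_zero])

theorem rC_d (M : ModuleCat.{u} R) (n : ℕ) :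
    (rC R M).d (n + 1) n = ModuleCat.ofHom (rl R M n) := by
  dsimp only [rC]
  exact ChainComplex.of_d (rX R M) (fun n => ModuleCat.ofHom (rl R M n)) n

/-- resolution -/
noncomputable def res [IsNoetherianRing R] (M : ModuleCat.{u} R) [Module.Finite R M] :
    ProjectiveResolution M where
  complex := rC R M
  projective n := inferInstanceAs (Projective (rX R M n))
  π := (ChainComplex.toSingle₀Equiv _ _).symm ⟨ModuleCat.ofHom (cover R M), by
    rw [rC_d]
    ext1
    refine LinearMap.ext fun x => ?_
    exact (rl_exact R M 0 _).2 ⟨x, rfl⟩⟩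
  quasiIso := ⟨fun n => by
    cases n with
    | zero =>
      rw [ChainComplex.quasiIsoAt₀_iff, ShortComplex.quasiIso_iff_of_zeros']
      · refine (ShortComplex.exact_and_epi_g_iff_of_iso (S₂ := ShortComplex.mk
          (ModuleCat.ofHom (rl R M 0)) (ModuleCat.ofHom (cover R (tow R M 0))) ?_) ?_).2 ⟨?_, ?_⟩
        · ext1
          refine LinearMap.ext fun x => ?_
          exact (rl_exact R M 0 _).2 ⟨x, rfl⟩
        · exact ShortComplex.isoMk (Iso.refl _) (Iso.refl _) (Iso.refl _)
            (by
              simp [rC_d]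
              exact (Category.id_comp _).trans (Category.comp_id _).symm) (by simp; rfl)
        · rw [ShortComplex.moduleCat_exact_iff]
          intro y hy
          exact (rl_exact R M 0 _).1 hy
        · rw [ModuleCat.epi_iff_surjective]
          exact cover_surj (R := R) (M := M)
      all_goals rfl
    | succ n =>
      rw [quasiIsoAt_iff_exactAt']
      · rw [HomologicalComplex.exactAt_iff' _ (n + 2) (n + 1) n (by simp) (by simp),
          ShortComplex.moduleCat_exact_iff]
        have h1 := rC_d R M n
        have h2 := rC_d R M (n + 1)
        intro y hy
        change (rC R M).d (n + 1) n y = 0 at hy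
        rw [h1] at hy
        obtain ⟨x, hx⟩ := (rl_exact' R M n _).1 hy
        refine ⟨x, ?_⟩
        change (rC R M).d (n + 1 + 1) (n + 1) x = y
        rw [h2]
        exact hx
      · apply ChainComplex.exactAt_succ_single_obj⟩

theorem rl_mem [IsNoetherianRing R] [IsLocalRing R] (M : ModuleCat.{u} R) [Module.Finite R M]
    (n : ℕ) (x : Fin (mu R (tow R M (n + 1))) → R) (j) : rl R M n x j ∈ maximalIdeal R := by
  have := tow_fin R M n
  exact ker_cover_le _ ((rl_exact R M n _).2 ⟨x, rfl⟩) j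

theorem rl_comp [IsNoetherianRing R] [IsLocalRing R] (M : ModuleCat.{u} R) [Module.Finite R M]
    (n : ℕ) (g : (Fin (mu R (tow R M n)) → R) →ₗ[R] ResidueField R)
    (x : Fin (mu R (tow R M (n + 1))) → R) : g (rl R M n x) = 0 := by
  have h : rl R M n x = ∑ j, (rl R M n x j) • (Pi.single j (1 : R) : Fin _ → R) :=
    pi_eq_sum_univ' _
  rw [h, map_sum]
  refine Finset.sum_eq_zero fun j _ => ?_
  rw [map_smul, Algebra.smul_def]
  rw [show algebraMap R (ResidueField R) (rl R M n x j) = 0 from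
    (residue_eq_zero_iff _).2 (rl_mem R M n x j), zero_mul]

theorem yon_d [IsNoetherianRing R] [IsLocalRing R] (M : ModuleCat.{u} R) [Module.Finite R M]
    (i j : ℕ) : ((rC R M).linearYonedaObj R (ModuleCat.of R (ResidueField R))).d i j = 0 := by
  by_cases h : i + 1 = j
  · subst h
    rw [ChainComplex.linearYonedaObj_d, rC_d]
    ext1
    refine LinearMap.ext fun g => ?_
    change ModuleCat.ofHom (rl R M i) ≫ g = 0
    ext1
    refine LinearMap.ext fun x => ?_
    exact rl_comp R M i g.hom x
  · exact HomologicalComplex.shape _ _ _ h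

theorem betti_bet [IsNoetherianRing R] [IsLocalRing R] (M : ModuleCat.{u} R) [Module.Finite R M]
    (i : ℕ) : BettiEq R M i (bet R i M) := by
  let K := (rC R M).linearYonedaObj R (ModuleCat.of R (ResidueField R))
  let e1 := (res R M).isoExt (R := R) i (ModuleCat.of R (ResidueField R))
  let hd := ShortComplex.HomologyData.ofZeros (K.sc i) (yon_d R M _ _) (yon_d R M _ _)
  let e2 : K.homology i ≅ K.X i := hd.left.homologyIso
  let e3 : K.X i ≃ₗ[R] ((Fin (mu R (tow R M i)) → R) →ₗ[R] ResidueField R) :=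
    { toFun := fun g => ModuleCat.Hom.hom g
      invFun := fun g => ModuleCat.ofHom g
      left_inv := fun _ => rfl
      right_inv := fun _ => rfl
      map_add' := fun _ _ => rfl
      map_smul' := fun _ _ => rfl }
  let e4 := ((Pi.basisFun R (Fin (mu R (tow R M i)))).constr R (M' := ResidueField R)).symm
  rw [← tow_mu]
  exact ⟨(e1 ≪≫ e2).toLinearEquiv ≪≫ₗ e3 ≪≫ₗ e4⟩

theorem betti_unique [IsLocalRing R] (M : ModuleCat.{u} R) (i b b' : ℕ) (h : BettiEq R M i b)
    (h' : BettiEq R M i b') : b = b' := by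
  obtain ⟨e⟩ := h
  obtain ⟨e'⟩ := h'
  let f := e.symm ≪≫ₗ e'
  let f' : (Fin b → ResidueField R) ≃ₗ[ResidueField R] (Fin b' → ResidueField R) :=
    f.extendScalarsOfSurjective (residue_surjective)
  have := f'.finrank_eq
  simpa using this

end
end CIx

namespace CIx
set_option linter.unusedSectionVars false

theorem cx_iff (R : Type u) [CommRing R] [IsNoetherianRing R] [IsLocalRing R]
    (M : ModuleCat.{u} R) [hM : Module.Finite R M] (e : ℕ) :
    complexity R M < ((e + 2 : ℕ) : ℕ∞) ↔ InE R e M := by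
  rw [complexity, sInf_lt_iff]
  constructor
  · rintro ⟨_, ⟨n, ⟨α, N, hn⟩, rfl⟩, hlt⟩
    have hlt : n < e + 2 := by
      have hlt' : (n : ℕ∞) < ((e + 2 : ℕ) : ℕ∞) := hlt
      exact_mod_cast hlt'
    refine ⟨hM, ⌈α⌉₊ + ∑ j ∈ Finset.range (N + 1), bet R j M, fun i => ?_⟩
    have h1 : 1 ≤ (i + 1) ^ e := Nat.one_le_pow _ _ (Nat.succ_pos _)
    rw [add_mul]
    by_cases hi : i < N + 1
    · have h2 : bet R i M ≤ ∑ j ∈ Finset.range (N + 1), bet R j M :=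
        Finset.single_le_sum (f := fun j => bet R j M) (fun _ _ => Nat.zero_le _)
          (Finset.mem_range.2 hi)
      calc bet R i M ≤ (∑ j ∈ Finset.range (N + 1), bet R j M) * (i + 1) ^ e :=
            h2.trans (Nat.le_mul_of_pos_right _ h1)
        _ ≤ _ := Nat.le_add_left _ _
    · push Not at hi
      refine le_trans ?_ (Nat.le_add_right _ _)
      obtain ⟨b, hb, hle⟩ := hn i (by omega)
      rw [betti_unique R M i b _ hb (betti_bet R M i)] at hle
      have hi1 : (1 : ℝ) ≤ i := by exact_mod_cast (by omega : 1 ≤ i)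
      have h3 : (i : ℝ) ^ ((n : ℤ) - 1) ≤ ((i : ℝ) + 1) ^ e := by
        calc (i : ℝ) ^ ((n : ℤ) - 1) ≤ (i : ℝ) ^ (e : ℤ) :=
              zpow_le_zpow_right₀ hi1 (by omega)
          _ = (i : ℝ) ^ e := zpow_natCast _ _
          _ ≤ _ := by gcongr; linarith
      have h4 : (0 : ℝ) ≤ (i : ℝ) ^ ((n : ℤ) - 1) := by positivity
      have h5 : (bet R i M : ℝ) ≤ (⌈α⌉₊ : ℝ) * ((i : ℝ) + 1) ^ e :=
        hle.trans (mul_le_mul (Nat.le_ceil α) h3 h4 (Nat.cast_nonneg _))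
      exact_mod_cast h5
  · rintro ⟨-, α, h⟩
    refine ⟨((e + 1 : ℕ) : ℕ∞), ⟨e + 1, ⟨α * 2 ^ e, 1, fun i hi => ⟨_, betti_bet R M i, ?_⟩⟩, rfl⟩,
      by exact_mod_cast Nat.lt_succ_self _⟩
    have h1 : bet R i M ≤ α * 2 ^ e * i ^ e := by
      refine (h i).trans ?_
      rw [mul_assoc, ← mul_pow]
      gcongr
      omega
    rw [show ((e + 1 : ℕ) : ℤ) - 1 = (e : ℤ) by push_cast; ring, zpow_natCast]
    exact_mod_cast h1

end CIx

/-- Let `R` be an Artinian local complete intersection of codimension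
`c = dim_k 𝔪/𝔪² ≥ 2`. Then the class `ℰ` of finitely generated modules of complexity
less than `c` is contravariantly infinite. -/
theorem stmt4 (R : Type u) [CommRing R] [IsNoetherianRing R] [IsLocalRing R]
    [IsArtinianRing R] (hci : IsCompleteIntersection R)
    (hc : 2 ≤ Module.finrank (ResidueField R) (CotangentSpace R)) :
    ContravariantlyInfinite R
      {M : ModuleCat.{u} R | Module.Finite R M ∧
        complexity R M < (Module.finrank (ResidueField R) (CotangentSpace R) : ℕ∞)} := by
  have hE := CIx.embLE_finrank R
  have hc0 : maximalIdeal R ≠ ⊥ := by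
    intro h
    have h2 := (IsLocalRing.finrank_cotangentSpace_eq_zero_iff (R := R)).2
      (IsLocalRing.isField_iff_maximalIdeal_eq.2 h)
    omega
  obtain ⟨e, he⟩ := Nat.exists_eq_add_of_le' hc
  rw [he] at hE ⊢
  obtain ⟨W⟩ := hci
  obtain ⟨Q, _, _, fs, hreg, hs, ⟨eqv⟩⟩ : ∃ (Q : Type u) (_ : CommRing Q) (_ : IsLocalRing Q)
      (fs : List Q), IsRegularLocal Q ∧ RingTheory.Sequence.IsRegular Q fs ∧
      Nonempty (AdicCompletion (maximalIdeal R) R ≃+* Q ⧸ Ideal.span {x : Q | x ∈ fs}) :=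
    ⟨W.Q, W.commRing, W.localRing, W.fs, W.regular, W.regSeq, ⟨W.equiv⟩⟩
  have := hreg.1
  obtain ⟨hRQ, hEQ, φ, hP⟩ := CIx.setup R Q hreg.2 fs hs eqv
  obtain ⟨hsoc, S, _, _, _, _, s, H, hG⟩ :=
    CIx.ci_main R (e + 2) hE hc0 fs.length Q φ fs rfl hRQ hP hEQ
  have hinj := CIx.self_inj hsoc
  rintro M hfin hM ⟨X, f, hX, hf⟩
  have hXf : Module.Finite R X := hX.1
  refine hM ⟨hfin, (CIx.cx_iff R M e).2 ?_⟩
  refine CIx.main_abs H (fun N _ _ _ _ _ => CIx.Grow.hG H hG N) hinj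
    (fun N _ _ _ => CIx.self_emb hinj N) (f := f) ⟨(CIx.cx_iff R X e).1 hX.2, ?_⟩
  intro V _ _ hV g
  have hVf : Module.Finite R V := hV.1
  obtain ⟨h, hh⟩ := hf (ModuleCat.of R V)
    ⟨hVf, (CIx.cx_iff R (ModuleCat.of R V) e).2 hV⟩ g
  exact ⟨h, fun w => LinearMap.congr_fun hh w⟩
end
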